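/- arXiv:1611.01938 — 6 statements merged into one kernel-verified Lean document; each statement's English description precedes it below -/
import Mathlib

section
/- Every totally real algebraic integer is an eigenvalue of the adjacency matrix of some connected finite simple graph. -/
/-!
Let `l` be a totally real algebraic integer, and suppose that it is an eigenvalue of no symmetric
integer matrix. Consider the *diagonal values* `cᵀ (l - A)⁻¹ c` and the *off-diagonal values*
`cᵀ (l - A)⁻¹ d` in `ℚ(l)`, for `A` symmetric integral and `c`, `d` integral. Block matrices give
algebraic closure properties: diagonal values are closed under addition (direct sums) and under
`a ↦ 1 / (l - k - a)` for integers `k` (bordering, `DiagValue.inv`). If `l - k` were itself a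
diagonal value, the bordered matrix would have eigenvalue `l` (`DiagValue.intEigenvalue`).

*Positivity* (`DiagValue.neg_of_real`). Since all embeddings of `ℚ(l)` are real, `ℚ(l) ⊗ ℝ` is
`ℝ ^ n`. Iterating `a ↦ 1 / (l - k - a)` shows that `1 / (l - a)` is a limit of diagonal values for
every real `a`; letting `a` approach a conjugate of `l` from the left or from the right, the cone
of diagonal values comes arbitrarily close to both half-lines of each coordinate axis. Hence every
element of `ℚ(l)` is a positive rational combination of diagonal values, and the additive monoid
of diagonal values is a group.

*Arithmetic* (`intEigenvalue_of_neg`). Now every off-diagonal value can be written as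
`cᵀ (l - A)⁻¹ d` with `dᵀ (l - A)⁻¹ d = 0`. Coupling two matrices by a rank one block `d eᵀ` with
such a `d` shows that off-diagonal values form a ring, and that `a ^ 2 * b` is a diagonal value for
`a` off-diagonal and `b` diagonal. The ring contains `l⁻¹`, hence `l`, because `l` is integral. So
`l = l ^ 2 * l⁻¹` is a diagonal value, a contradiction.

Thus `l` is an eigenvalue of a symmetric integer matrix. Blowing up each index to a suitable finite
set (`blowup`) gives a graph with eigenvalue `l`, and one of its connected components has the same
eigenvalue.
-/

open Polynomial

/-- A totally real algebraic integer: a real root of a monic integer polynomial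
all of whose complex roots are real. -/
def IsTotallyRealAlgebraicInteger (α : ℝ) : Prop :=
  ∃ p : Polynomial ℤ, p.Monic ∧ Polynomial.aeval α p = 0 ∧
    ∀ z : ℂ, Polynomial.aeval z p = 0 → z.im = 0

/-! ### Resolvents of symmetric integer matrices -/

section Resolvent

variable {K : Type*} [Field K]

/-- `u` solves `(l - A) u = c`. Working with solutions of this linear system makes it
unnecessary to invert `l - A`. -/
def ResolventSol (l : K) {ι : Type} [Fintype ι] (A : ι → ι → ℤ) (c : ι → ℤ) (u : ι → K) : Prop :=
  ∀ i, l * u i - ∑ j, (A i j : K) * u j = c i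

/-- `l` is an eigenvalue of some symmetric integer matrix, with an eigenvector over `K`. -/
def IntEigenvalue (l : K) : Prop :=
  ∃ (ι : Type) (_ : Fintype ι) (A : ι → ι → ℤ) (v : ι → K),
    (∀ i j, A i j = A j i) ∧ v ≠ 0 ∧ ∀ i, ∑ j, (A i j : K) * v j = l * v i

/-- `a = cᵀ (l - A)⁻¹ c` for some symmetric integer matrix `A` and integer vector `c`. -/
def DiagValue (l a : K) : Prop :=
  ∃ (ι : Type) (_ : Fintype ι) (A : ι → ι → ℤ) (c : ι → ℤ) (u : ι → K),
    (∀ i j, A i j = A j i) ∧ ResolventSol l A c u ∧ ∑ i, (c i : K) * u i = a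

/-- `a = cᵀ (l - A)⁻¹ d` for some symmetric integer matrix `A` and integer vectors `c`, `d`,
where `p = (l - A)⁻¹ d`. The solution `q = (l - A)⁻¹ c` is recorded too: it is needed when the
roles of `c` and `d` are exchanged. -/
def OffDiagValue (l a : K) : Prop :=
  ∃ (ι : Type) (_ : Fintype ι) (A : ι → ι → ℤ) (c d : ι → ℤ) (p q : ι → K),
    (∀ i j, A i j = A j i) ∧ ResolventSol l A d p ∧ ResolventSol l A c q ∧
      ∑ i, (c i : K) * p i = a

/-- The block diagonal matrix with blocks `A` and `B`. -/
def directSum {ι κ : Type} (A : ι → ι → ℤ) (B : κ → κ → ℤ) : ι ⊕ κ → ι ⊕ κ → ℤ :=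
  Sum.elim (fun i => Sum.elim (A i) 0) (fun k => Sum.elim 0 (B k))

lemma directSum_symm {ι κ : Type} {A : ι → ι → ℤ} {B : κ → κ → ℤ}
    (hA : ∀ i j, A i j = A j i) (hB : ∀ i j, B i j = B j i) (x y : ι ⊕ κ) :
    directSum A B x y = directSum A B y x := by
  rcases x with x | x <;> rcases y with y | y <;>
    first | exact hA _ _ | exact hB _ _ | rfl

lemma ResolventSol.directSum {l : K} {ι κ : Type} [Fintype ι] [Fintype κ]
    {A : ι → ι → ℤ} {B : κ → κ → ℤ} {c : ι → ℤ} {d : κ → ℤ} {u : ι → K} {v : κ → K}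
    (hu : ResolventSol l A c u) (hv : ResolventSol l B d v) :
    ResolventSol l (directSum A B) (Sum.elim c d) (Sum.elim u v) := by
  rintro (i | i)
  · simpa [_root_.directSum] using hu i
  · simpa [_root_.directSum] using hv i

lemma ResolventSol.zero {l : K} {ι : Type} [Fintype ι] (A : ι → ι → ℤ) :
    ResolventSol l A 0 0 := by intro i; simp

lemma ResolventSol.neg {l : K} {ι : Type} [Fintype ι] {A : ι → ι → ℤ} {c : ι → ℤ} {u : ι → K}
    (h : ResolventSol l A c u) : ResolventSol l A (-c) (-u) := by
  intro i
  have := h i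
  simp only [Pi.neg_apply, mul_neg, Finset.sum_neg_distrib, Int.cast_neg]
  linear_combination -this

/-- The resolvent of a symmetric matrix is symmetric: `dᵀ (l - A)⁻¹ c = cᵀ (l - A)⁻¹ d`. -/
lemma ResolventSol.symm_value {l : K} {ι : Type} [Fintype ι] {A : ι → ι → ℤ}
    (hA : ∀ i j, A i j = A j i) {c d : ι → ℤ} {p q : ι → K}
    (hp : ResolventSol l A d p) (hq : ResolventSol l A c q) :
    ∑ i, (d i : K) * q i = ∑ i, (c i : K) * p i := by
  simp only [← hp _, ← hq _, sub_mul, Finset.sum_sub_distrib, Finset.sum_mul]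
  congr 1
  · exact Finset.sum_congr rfl fun i _ => by ring
  · rw [Finset.sum_comm]
    exact Finset.sum_congr rfl fun i _ => Finset.sum_congr rfl fun j _ => by rw [hA]; ring

lemma DiagValue.zero (l : K) : DiagValue l 0 :=
  ⟨Empty, inferInstance, fun _ _ => 0, 0, 0, fun _ _ => rfl, ResolventSol.zero _, by simp⟩

lemma DiagValue.add {l a b : K} (ha : DiagValue l a) (hb : DiagValue l b) :
    DiagValue l (a + b) := by
  obtain ⟨ι, _, A, c, u, hA, hu, rfl⟩ := ha
  obtain ⟨κ, _, B, d, v, hB, hv, rfl⟩ := hb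
  exact ⟨ι ⊕ κ, inferInstance, _, _, _, directSum_symm hA hB, hu.directSum hv, by simp⟩

lemma DiagValue.nsmul {l a : K} (ha : DiagValue l a) (n : ℕ) : DiagValue l (n * a) := by
  induction n with
  | zero => simpa using DiagValue.zero l
  | succ n ih => simpa [add_mul] using ih.add ha

lemma DiagValue.offDiag {l a : K} (ha : DiagValue l a) : OffDiagValue l a := by
  obtain ⟨ι, _, A, c, u, hA, hu, rfl⟩ := ha
  exact ⟨ι, _, A, c, c, u, u, hA, hu, hu, rfl⟩

/-- The matrix `A` bordered by the integer `k` and the vector `c`. -/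
def border {ι : Type} (k : ℤ) (c : ι → ℤ) (A : ι → ι → ℤ) : Option ι → Option ι → ℤ
  | none, none => k
  | none, some j => c j
  | some i, none => c i
  | some i, some j => A i j

lemma border_symm {ι : Type} (k : ℤ) (c : ι → ℤ) {A : ι → ι → ℤ}
    (hA : ∀ i j, A i j = A j i) (x y : Option ι) : border k c A x y = border k c A y x := by
  rcases x with _ | x <;> rcases y with _ | y <;>
    first | exact hA _ _ | rfl

/-- If `l = k + cᵀ (l - A)⁻¹ c`, then `(1, (l - A)⁻¹ c)` is an eigenvector of the bordered
matrix. -/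
lemma DiagValue.intEigenvalue {l a : K} (ha : DiagValue l a) (k : ℤ) (h : l - k - a = 0) :
    IntEigenvalue l := by
  obtain ⟨ι, _, A, c, u, hA, hu, rfl⟩ := ha
  refine ⟨Option ι, inferInstance, border k c A, fun x => x.elim 1 u, border_symm k c hA, ?_, ?_⟩
  · intro h0
    simpa using congrFun h0 none
  · rintro (_ | i)
    · simp only [Fintype.sum_option, border, Option.elim]
      linear_combination -h
    · simp only [Fintype.sum_option, border, Option.elim]
      linear_combination -hu i

/-- The Schur complement formula for the corner entry of the resolvent of the bordered matrix. -/
lemma DiagValue.inv {l a : K} (ha : DiagValue l a) (k : ℤ) (h : l - k - a ≠ 0) :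
    DiagValue l (l - k - a)⁻¹ := by
  obtain ⟨ι, _, A, c, u, hA, hu, rfl⟩ := ha
  set x := (l - k - ∑ i, (c i : K) * u i)⁻¹ with hx
  have hx1 : (l - k - ∑ i, (c i : K) * u i) * x = 1 := mul_inv_cancel₀ h
  refine ⟨Option ι, inferInstance, border k c A, fun y => y.elim 1 0,
    fun y => x * y.elim 1 u, border_symm k c hA, ?_, ?_⟩
  · rintro (_ | i)
    · simp only [Fintype.sum_option, border, Option.elim, mul_left_comm _ x, ← Finset.mul_sum]
      push_cast
      linear_combination hx1
    · simp only [Fintype.sum_option, border, Option.elim, mul_left_comm _ x, ← Finset.mul_sum]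
      simp only [Pi.zero_apply, Int.cast_zero]
      linear_combination x * hu i
  · simp [Fintype.sum_option]

/-- The blocks `A` and `B` coupled by the rank one off-diagonal block `d eᵀ` and its transpose. -/
def couple {ι κ : Type} (A : ι → ι → ℤ) (B : κ → κ → ℤ) (d : ι → ℤ) (e : κ → ℤ) :
    ι ⊕ κ → ι ⊕ κ → ℤ :=
  Sum.elim (fun i => Sum.elim (A i) (fun k => d i * e k))
    (fun k => Sum.elim (fun i => d i * e k) (B k))

lemma couple_symm {ι κ : Type} {A : ι → ι → ℤ} {B : κ → κ → ℤ} (d : ι → ℤ) (e : κ → ℤ)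
    (hA : ∀ i j, A i j = A j i) (hB : ∀ i j, B i j = B j i) (x y : ι ⊕ κ) :
    couple A B d e x y = couple A B d e y x := by
  rcases x with x | x <;> rcases y with y | y <;>
    first | exact hA _ _ | exact hB _ _ | rfl

/-- When `dᵀ (l - A)⁻¹ d = 0`, the coupling by `d eᵀ` changes the resolvent only polynomially:
the usual denominator `1 - (dᵀ (l - A)⁻¹ d) (eᵀ (l - B)⁻¹ e)` is `1`. -/
lemma couple_sol_left {l : K} {ι κ : Type} [Fintype ι] [Fintype κ]
    {A : ι → ι → ℤ} {B : κ → κ → ℤ} {c d : ι → ℤ} {e : κ → ℤ} {p q : ι → K} {s : κ → K}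
    (hp : ResolventSol l A d p) (hq : ResolventSol l A c q) (hs : ResolventSol l B e s)
    (h0 : ∑ i, (d i : K) * p i = 0) :
    ResolventSol l (couple A B d e) (Sum.elim c 0)
      (Sum.elim (fun i => q i + (∑ i, (d i : K) * q i) * (∑ k, (e k : K) * s k) * p i)
        (fun k => (∑ i, (d i : K) * q i) * s k)) := by
  set α := ∑ i, (d i : K) * q i with hα
  set β := ∑ k, (e k : K) * s k with hβ
  rintro (i | k)
  · simp only [Fintype.sum_sum_type, couple, Sum.elim_inl, Sum.elim_inr, mul_add,
      Finset.sum_add_distrib, Int.cast_mul, mul_left_comm _ (α * β), mul_left_comm _ α,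
      mul_assoc (d i : K), ← Finset.mul_sum, ← hβ]
    linear_combination hq i + α * β * hp i
  · have : ∑ i, ((d i * e k : ℤ) : K) * (q i + α * β * p i) = e k * α := by
      have : ∀ i, ((d i * e k : ℤ) : K) * (q i + α * β * p i) =
          e k * (d i * q i) + e k * (α * β) * (d i * p i) := fun i => by push_cast; ring
      simp only [this, Finset.sum_add_distrib, ← Finset.mul_sum, h0, ← hα]
      ring
    simp only [Fintype.sum_sum_type, couple, Sum.elim_inl, Sum.elim_inr, this,
      mul_left_comm _ α, ← Finset.mul_sum, Pi.zero_apply, Int.cast_zero]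
    linear_combination α * hs k

/-- The counterpart of `couple_sol_left` for a right-hand side in the second block. -/
lemma couple_sol_right {l : K} {ι κ : Type} [Fintype ι] [Fintype κ]
    {A : ι → ι → ℤ} {B : κ → κ → ℤ} {d : ι → ℤ} {e f : κ → ℤ} {p : ι → K} {r : κ → K}
    (hp : ResolventSol l A d p) (hr : ResolventSol l B f r)
    (h0 : ∑ i, (d i : K) * p i = 0) :
    ResolventSol l (couple A B d e) (Sum.elim 0 f)
      (Sum.elim (fun i => (∑ k, (e k : K) * r k) * p i) r) := by
  set γ := ∑ k, (e k : K) * r k with hγ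
  rintro (i | k)
  · simp only [Fintype.sum_sum_type, couple, Sum.elim_inl, Sum.elim_inr,
      Int.cast_mul, mul_left_comm _ γ, mul_assoc (d i : K), ← Finset.mul_sum, ← hγ,
      Pi.zero_apply, Int.cast_zero]
    linear_combination γ * hp i
  · have : ∑ i, ((d i * e k : ℤ) : K) * (γ * p i) = 0 := by
      have : ∀ i, ((d i * e k : ℤ) : K) * (γ * p i) =
          e k * γ * (d i * p i) := fun i => by push_cast; ring
      simp only [this, ← Finset.mul_sum, h0]
      ring
    simp only [Fintype.sum_sum_type, couple, Sum.elim_inl, Sum.elim_inr, this]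
    linear_combination hr k

/-- If diagonal values are closed under negation, every off-diagonal value is
`cᵀ (l - A)⁻¹ d` with `dᵀ (l - A)⁻¹ d = 0`: add a block realising the opposite of
`dᵀ (l - A)⁻¹ d`, on which `c` is extended by zero. -/
lemma OffDiagValue.isotropic {l a : K} (hneg : ∀ b, DiagValue l b → DiagValue l (-b))
    (ha : OffDiagValue l a) :
    ∃ (ι : Type) (_ : Fintype ι) (A : ι → ι → ℤ) (c d : ι → ℤ) (p q : ι → K),
      (∀ i j, A i j = A j i) ∧ ResolventSol l A d p ∧ ResolventSol l A c q ∧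
      ∑ i, (c i : K) * p i = a ∧ ∑ i, (d i : K) * p i = 0 := by
  obtain ⟨ι, _, A, c, d, p, q, hA, hp, hq, rfl⟩ := ha
  obtain ⟨κ, _, B, e, s, hB, hs, hes⟩ := hneg _ ⟨ι, _, A, d, p, hA, hp, rfl⟩
  refine ⟨ι ⊕ κ, inferInstance, _, Sum.elim c 0, Sum.elim d e, _, _, directSum_symm hA hB,
    hp.directSum hs, hq.directSum (ResolventSol.zero B), by simp, by simp [hes]⟩

lemma OffDiagValue.add {l a b : K} (ha : OffDiagValue l a) (hb : OffDiagValue l b) :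
    OffDiagValue l (a + b) := by
  obtain ⟨ι, _, A, c, d, p, q, hA, hp, hq, rfl⟩ := ha
  obtain ⟨κ, _, B, e, f, r, s, hB, hr, hs, rfl⟩ := hb
  exact ⟨ι ⊕ κ, inferInstance, _, _, _, _, _, directSum_symm hA hB, hp.directSum hr,
    hq.directSum hs, by simp⟩

lemma OffDiagValue.neg {l a : K} (ha : OffDiagValue l a) : OffDiagValue l (-a) := by
  obtain ⟨ι, _, A, c, d, p, q, hA, hp, hq, rfl⟩ := ha
  exact ⟨ι, _, A, _, d, p, _, hA, hp, hq.neg, by simp⟩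

lemma OffDiagValue.mul {l a b : K} (hneg : ∀ b, DiagValue l b → DiagValue l (-b))
    (ha : OffDiagValue l a) (hb : OffDiagValue l b) : OffDiagValue l (a * b) := by
  obtain ⟨ι, _, A, c, d, p, q, hA, hp, hq, rfl, h0⟩ := ha.isotropic hneg
  obtain ⟨κ, _, B, e, f, r, s, hB, hr, hs, rfl⟩ := hb
  refine ⟨ι ⊕ κ, inferInstance, _, _, _, _, _, couple_symm d e hA hB,
    couple_sol_right hp hr h0, couple_sol_left hp hq hs h0, ?_⟩
  simp only [Fintype.sum_sum_type, Sum.elim_inl, Sum.elim_inr, Pi.zero_apply, Int.cast_zero,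
    zero_mul, Finset.sum_const_zero, add_zero, mul_left_comm _ (∑ k, (e k : K) * r k),
    ← Finset.mul_sum]
  ring

/-- In the coupled matrix, `cᵀ (l - A)⁻¹ c` becomes `cᵀ (l - A)⁻¹ c + a ^ 2 * b`, and the first
term can be subtracted. -/
lemma DiagValue.sq_mul {l a b : K} (hneg : ∀ b, DiagValue l b → DiagValue l (-b))
    (ha : OffDiagValue l a) (hb : DiagValue l b) : DiagValue l (a ^ 2 * b) := by
  obtain ⟨ι, _, A, c, d, p, q, hA, hp, hq, rfl, h0⟩ := ha.isotropic hneg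
  obtain ⟨κ, _, B, e, s, hB, hs, rfl⟩ := hb
  have h1 : DiagValue l (∑ i, (c i : K) * q i +
      (∑ i, (c i : K) * p i) ^ 2 * ∑ k, (e k : K) * s k) := by
    refine ⟨ι ⊕ κ, inferInstance, _, _, _, couple_symm d e hA hB,
      couple_sol_left hp hq hs h0, ?_⟩
    rw [ResolventSol.symm_value hA hp hq]
    simp only [Fintype.sum_sum_type, Sum.elim_inl, Sum.elim_inr, mul_add, Finset.sum_add_distrib,
      mul_left_comm _ (_ * _ : K), ← Finset.mul_sum, Pi.zero_apply, Int.cast_zero, zero_mul,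
      Finset.sum_const_zero]
    ring
  have := (hneg _ ⟨ι, _, A, c, q, hA, hq, rfl⟩).add h1
  simpa using this

/-- If diagonal values are closed under negation, off-diagonal values form a ring, a priori
without unit. -/
lemma exists_offDiagRing {l : K} (hneg : ∀ b, DiagValue l b → DiagValue l (-b)) :
    ∃ R : NonUnitalSubring K, ∀ x, x ∈ R ↔ OffDiagValue l x :=
  ⟨{ carrier := {x | OffDiagValue l x}
     zero_mem' := (DiagValue.zero l).offDiag
     add_mem' := OffDiagValue.add
     neg_mem' := OffDiagValue.neg
     mul_mem' := OffDiagValue.mul hneg }, fun _ => Iff.rfl⟩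

/-- An integral equation of `l` first writes `1`, and then `l`, as integer polynomials in `l⁻¹`;
the one for `1` has no constant term, so `R` need not be assumed unital. -/
lemma mem_of_inv_mem_of_isIntegral {l : K} (hl : IsIntegral ℤ l) (hl0 : l ≠ 0)
    (R : NonUnitalSubring K) (h : l⁻¹ ∈ R) : l ∈ R := by
  obtain ⟨P, hP, h0⟩ := hl
  have hpow : ∀ k : ℕ, l⁻¹ ^ (k + 1) ∈ R := by
    intro k
    induction k with
    | zero => simpa using h
    | succ k ih => rw [pow_succ]; exact R.mul_mem ih h
  have hsum : l ^ P.natDegree + ∑ i ∈ Finset.range P.natDegree, (P.coeff i : K) * l ^ i = 0 := by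
    have h1 : aeval l P = 0 := h0
    rw [hP.as_sum] at h1
    simpa using h1
  have hn : ∀ i ∈ Finset.range P.natDegree, ∃ k, P.natDegree = i + (k + 1) := by
    intro i hi
    rw [Finset.mem_range] at hi
    exact ⟨P.natDegree - i - 1, by omega⟩
  have hexp : (1 : K) = -∑ i ∈ Finset.range P.natDegree,
      P.coeff i • l⁻¹ ^ (P.natDegree - i) := by
    have h1 : l⁻¹ ^ P.natDegree * (l ^ P.natDegree +
        ∑ i ∈ Finset.range P.natDegree, (P.coeff i : K) * l ^ i) = 0 := by rw [hsum, mul_zero]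
    rw [mul_add, ← mul_pow, inv_mul_cancel₀ hl0, one_pow, Finset.mul_sum] at h1
    rw [eq_neg_iff_add_eq_zero, ← h1]
    congr 1
    refine Finset.sum_congr rfl fun i hi => ?_
    obtain ⟨k, hk⟩ := hn i hi
    rw [hk, zsmul_eq_mul, Nat.add_sub_cancel_left, pow_add l⁻¹ i]
    have : l⁻¹ ^ i * l ^ i = 1 := by rw [← mul_pow, inv_mul_cancel₀ hl0, one_pow]
    linear_combination (-(P.coeff i : K) * l⁻¹ ^ (k + 1)) * this
  have h1 : (1 : K) ∈ R := by
    rw [hexp]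
    refine neg_mem (sum_mem fun i hi => zsmul_mem ?_ _)
    obtain ⟨k, hk⟩ := hn i hi
    rw [hk, Nat.add_sub_cancel_left]
    exact hpow k
  have hexp2 : l = -∑ i ∈ Finset.range P.natDegree,
      P.coeff i • (l * l⁻¹ ^ (P.natDegree - i)) := by
    conv_lhs => rw [← mul_one l, hexp]
    rw [mul_neg, Finset.mul_sum]
    simp only [mul_smul_comm]
  rw [hexp2]
  refine neg_mem (sum_mem fun i hi => zsmul_mem ?_ _)
  obtain ⟨k, hk⟩ := hn i hi
  rw [hk, Nat.add_sub_cancel_left, pow_succ', mul_inv_cancel_left₀ hl0]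
  cases k with
  | zero => simpa using h1
  | succ k => exact hpow k

/-- The arithmetic half of the proof: `l` is an off-diagonal value because it is integral, so
`l = l ^ 2 * l⁻¹` is a diagonal value, and `DiagValue.intEigenvalue` applies with `k = 0`. -/
lemma intEigenvalue_of_neg {l : K} (hl : IsIntegral ℤ l)
    (hneg : ∀ b, DiagValue l b → DiagValue l (-b)) : IntEigenvalue l := by
  by_cases hl0 : l = 0
  · exact (DiagValue.zero l).intEigenvalue 0 (by simp [hl0])
  have hinv : DiagValue l l⁻¹ := by
    simpa using (DiagValue.zero l).inv 0 (by simpa using hl0)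
  obtain ⟨R, hR⟩ := exists_offDiagRing hneg
  have hmem : OffDiagValue l l :=
    (hR l).1 (mem_of_inv_mem_of_isIntegral hl hl0 R ((hR _).2 hinv.offDiag))
  have := DiagValue.sq_mul hneg hmem hinv
  rw [pow_two, mul_assoc, mul_inv_cancel₀ hl0, mul_one] at this
  exact this.intEigenvalue 0 (by simp)

end Resolvent

/-! ### Negatives of diagonal values -/

section Positivity

open Filter Topology

variable {K : Type*} [Field K]

lemma DiagValue.sum {l : K} {J : Type*} (s : Finset J) {a : J → K}
    (h : ∀ j ∈ s, DiagValue l (a j)) : DiagValue l (∑ j ∈ s, a j) := by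
  classical
  induction s using Finset.induction_on with
  | empty => simpa using DiagValue.zero l
  | insert i s hi ih =>
    rw [Finset.sum_insert hi]
    exact (h i (by simp)).add (ih fun j hj => h j (by simp [hj]))

/-- The positive multiples of the diagonal values of `l`, seen in `ℝ ^ I` through the real
embeddings `σ`. -/
def diagCone {I : Type*} (l : K) (σ : I → K →+* ℝ) : Set (I → ℝ) :=
  {y | ∃ r : ℝ, 0 < r ∧ ∃ w : K, DiagValue l w ∧ y = fun i => r * σ i w}

/-- `1 / (l - a)` is a limit of diagonal values for every real `a`. With `t = ⌈a⌉ - a ≥ 0`, the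
values `1 / (l - ⌈a⌉ - ⌊t n⌋ / (l - n))` work, since `⌊t n⌋ / (σ l - n)` tends to `-t` in every
embedding `σ`. -/
lemma pole_mem_closure {I : Type*} {l : K} (σ : I → K →+* ℝ)
    (hl : ¬ IntEigenvalue l) (a : ℝ) (ha : ∀ i, σ i l ≠ a) :
    (fun i => (σ i l - a)⁻¹) ∈ closure (diagCone l σ) := by
  have hne : ∀ (k : ℤ) (x : K), DiagValue l x → l - k - x ≠ 0 :=
    fun k x hx h => hl (hx.intEigenvalue k h)
  set t : ℝ := ⌈a⌉ - a with ht
  have ht0 : 0 ≤ t := sub_nonneg.2 (Int.le_ceil a)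
  let w : ℕ → K := fun n =>
    (l - ((⌈a⌉ : ℤ) : K) - ((⌊t * (n : ℝ)⌋₊ : ℕ) : K) * (l - ((n : ℤ) : K) - 0)⁻¹)⁻¹
  have hw : ∀ n, DiagValue l (w n) := fun n => by
    have h1 := (DiagValue.zero l).inv n (hne _ _ (DiagValue.zero l))
    have h2 := h1.nsmul ⌊t * (n : ℝ)⌋₊
    exact h2.inv _ (hne _ _ h2)
  refine mem_closure_of_tendsto (f := fun (n : ℕ) i => σ i (w n)) (b := atTop) ?_
    (Eventually.of_forall fun n => ⟨1, one_pos, w n, hw n, by simp⟩)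
  rw [tendsto_pi_nhds]
  intro i
  have h1 : Tendsto (fun n : ℕ => (⌊t * (n : ℝ)⌋₊ : ℝ) / n) atTop (𝓝 t) :=
    (tendsto_nat_floor_mul_div_atTop ht0).comp tendsto_natCast_atTop_atTop
  have h2 : Tendsto (fun n : ℕ => σ i l / (n : ℝ) - 1) atTop (𝓝 (0 - 1)) :=
    (tendsto_const_div_atTop_nhds_zero_nat _).sub_const 1
  have h3 := h1.div h2 (by norm_num)
  have h4 : Tendsto (fun n : ℕ => (⌊t * (n : ℝ)⌋₊ : ℝ) * (σ i l - n)⁻¹) atTop (𝓝 (-t)) := by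
    have : t / (0 - 1) = -t := by ring
    rw [this] at h3
    refine h3.congr' ?_
    filter_upwards [eventually_gt_atTop 0] with n hn
    have hn : (n : ℝ) ≠ 0 := by positivity
    simp only [Pi.div_apply]
    rw [div_sub_one hn, div_div_div_cancel_right₀ hn, div_eq_mul_inv]
  have h5 := (tendsto_const_nhds (x := σ i l - ⌈a⌉)).sub h4
  have h6 : σ i l - ⌈a⌉ - -t = σ i l - a := by rw [ht]; ring
  rw [h6] at h5
  simpa [w] using h5.inv₀ (sub_ne_zero.2 (ha i))

lemma smul_mem_closure {I : Type*} {l : K} (σ : I → K →+* ℝ) {r : ℝ} (hr : 0 < r) {y : I → ℝ}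
    (hy : y ∈ closure (diagCone l σ)) : r • y ∈ closure (diagCone l σ) := by
  refine map_mem_closure (continuous_const_smul r) hy ?_
  rintro _ ⟨s, hs, w, hw, rfl⟩
  exact ⟨r * s, mul_pos hr hs, w, hw, by funext i; simp [mul_assoc]⟩

/-- Rescaling `1 / (l - a)` as `a` tends to `σ j l` isolates the coordinate `j`. The pole can be
approached from either side, which is what makes both signs of `b` available. -/
lemma single_mem_closure {I : Type*} [Finite I] [DecidableEq I] {l : K} (σ : I → K →+* ℝ)
    (hl : ¬ IntEigenvalue l) (hσ : Function.Injective fun i => σ i l) (j : I) {b : ℝ}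
    (hb : b ≠ 0) : (Pi.single j b : I → ℝ) ∈ closure (diagCone l σ) := by
  have hlim : Tendsto (fun (ε : ℝ) i => ε * b ^ 2 * (σ i l - (σ j l - ε * b))⁻¹) (𝓝[>] 0)
      (𝓝 (Pi.single j b)) := by
    rw [tendsto_pi_nhds]
    intro i
    by_cases hij : i = j
    · subst hij
      rw [Pi.single_eq_same]
      refine tendsto_const_nhds.congr' ?_
      filter_upwards [self_mem_nhdsWithin] with ε hε
      have : ε ≠ 0 := ne_of_gt hε
      rw [sub_sub_cancel]
      field_simp
    · rw [Pi.single_eq_of_ne hij]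
      have hne : σ i l - (σ j l - 0 * b) ≠ 0 := by
        simpa [sub_eq_zero] using fun h => hij (hσ h)
      have hc : ContinuousAt (fun ε : ℝ => ε * b ^ 2 * (σ i l - (σ j l - ε * b))⁻¹) 0 :=
        ContinuousAt.mul (by fun_prop) (ContinuousAt.inv₀ (by fun_prop) hne)
      have := hc.tendsto
      simp only [zero_mul] at this
      exact this.mono_left nhdsWithin_le_nhds
  refine isClosed_closure.mem_of_tendsto hlim ?_
  have hev : ∀ᶠ ε in 𝓝[>] (0 : ℝ), ∀ i, σ i l ≠ σ j l - ε * b := by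
    rw [eventually_all]
    intro i
    by_cases hij : i = j
    · subst hij
      filter_upwards [self_mem_nhdsWithin] with ε hε h
      have : ε ≠ 0 := ne_of_gt hε
      exact mul_ne_zero this hb (by linarith)
    · have hne : σ i l ≠ σ j l - 0 * b := by
        simpa using fun h => hij (hσ h)
      have hc : ContinuousAt (fun ε : ℝ => σ j l - ε * b) 0 := by fun_prop
      exact (hc.tendsto.eventually_ne hne.symm).filter_mono nhdsWithin_le_nhds |>.mono
        fun _ h => h.symm
  filter_upwards [hev, self_mem_nhdsWithin] with ε hε hε0
  have hε0 : 0 < ε := hε0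
  exact smul_mem_closure σ (by positivity : 0 < ε * b ^ 2) (pole_mem_closure σ hl _ hε)

/-- The positivity half of the proof: if all embeddings of `K = ℚ(l)` are real and `l` is not an
eigenvalue of an integer symmetric matrix, diagonal values are closed under negation. Take
diagonal values `w j`, up to scaling close to the coordinate vectors `σ j (-a) e_j` of `ℝ ^ I`.
They form a `ℚ`-basis of `K`, and the coordinates of `-a` in it are positive rationals, so a
positive integer multiple `D * (-a)` is a sum of diagonal values. -/
lemma DiagValue.neg_of_real [CharZero K] {I : Type*} [Fintype I] {l : K} (σ : I → K →+* ℝ)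
    (hl : ¬ IntEigenvalue l) (hσ : Function.Injective fun i => σ i l)
    [FiniteDimensional ℚ K] (hcard : Fintype.card I = Module.finrank ℚ K) {a : K}
    (ha : DiagValue l a) : DiagValue l (-a) := by
  classical
  by_cases ha0 : a = 0
  · simpa [ha0] using DiagValue.zero l
  set b : I → ℝ := fun i => σ i (-a) with hb
  have hb0 : ∀ i, b i ≠ 0 := fun i => by simpa [hb] using ha0
  have hseq : ∀ j, ∃ y : ℕ → I → ℝ, (∀ n, y n ∈ diagCone l σ) ∧
      Tendsto y atTop (𝓝 (Pi.single j (b j))) := fun j =>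
    mem_closure_iff_seq_limit.1 (single_mem_closure σ hl hσ j (hb0 j))
  choose y hy hlim using hseq
  let M : ℕ → Matrix I I ℝ := fun n => Matrix.of fun i j => y j n i
  have hM : Tendsto M atTop (𝓝 (Matrix.diagonal b)) := by
    refine tendsto_pi_nhds.2 fun i => tendsto_pi_nhds.2 fun j => ?_
    have := tendsto_pi_nhds.1 (hlim j) i
    rwa [show Matrix.diagonal b i j = (Pi.single j (b j) : I → ℝ) i by
      by_cases h : i = j
      · subst h; simp
      · simp [h]]
  -- The rule of Cramer turns positivity of the solution of `M x = b` into an open condition on `M`;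
  -- at the limit `diagonal b` the solution is the all-ones vector.
  have hev : ∀ᶠ n in atTop, ∀ j, 0 < (M n).det * (M n).cramer b j := by
    rw [eventually_all]
    intro j
    have hcont : Continuous fun W : Matrix I I ℝ => W.det * W.cramer b j := by
      have h1 : Continuous fun W : Matrix I I ℝ => W.cramer b :=
        continuous_id.matrix_cramer continuous_const
      have h2 : Continuous fun W : Matrix I I ℝ => W.det := continuous_id.matrix_det
      exact h2.mul ((continuous_apply j).comp h1)
    refine (hcont.continuousAt.tendsto.comp hM).eventually_const_lt ?_
    have h1 : (Matrix.diagonal b).cramer b = (Matrix.diagonal b).det • (1 : I → ℝ) := by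
      have : b = (Matrix.diagonal b).mulVec 1 := by funext i; simp [Matrix.mulVec_diagonal]
      conv_lhs => rw [Matrix.cramer_eq_adjugate_mulVec]; arg 2; rw [this]
      rw [Matrix.mulVec_mulVec, Matrix.adjugate_mul, Matrix.smul_mulVec, Matrix.one_mulVec]
    rw [h1, Matrix.det_diagonal]
    have : ∏ i, b i ≠ 0 := Finset.prod_ne_zero_iff.2 fun i _ => hb0 i
    simp only [Pi.smul_apply, Pi.one_apply, smul_eq_mul, mul_one]
    exact mul_self_pos.2 this
  obtain ⟨n, hn⟩ := hev.exists
  choose r hr w hw hyw using fun j => hy j n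
  have hMe : ∀ i j, M n i j = r j * σ i (w j) := fun i j => by simp [M, hyw]
  -- Rational coordinates in `w` correspond to real coordinates, scaled by `r`, in the columns.
  have hsolve : ∀ q : I → ℚ, ∀ i, (M n).mulVec (fun j => (q j : ℝ) / r j) i =
      σ i (∑ j, q j • w j) := by
    intro q i
    simp only [Matrix.mulVec, dotProduct, hMe, map_sum]
    refine Finset.sum_congr rfl fun j _ => ?_
    have := (hr j).ne'
    rw [Rat.smul_def, map_mul, map_ratCast]
    field_simp
  have hI : Nonempty I := by
    rw [← Fintype.card_pos_iff, hcard]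
    exact Module.finrank_pos
  have hdet : (M n).det ≠ 0 := by
    obtain ⟨j⟩ := hI
    intro h
    have := hn j
    simp [h] at this
  have hli : LinearIndependent ℚ w := by
    rw [Fintype.linearIndependent_iff]
    intro q hq j
    have h0 : (M n).mulVec (fun j => (q j : ℝ) / r j) = 0 := by
      funext i
      rw [hsolve, hq, map_zero, Pi.zero_apply]
    have := congrFun (Matrix.eq_zero_of_mulVec_eq_zero hdet h0) j
    simpa [(hr j).ne'] using this
  have hspan := hli.span_eq_top_of_card_eq_finrank' hcard
  obtain ⟨q, hq⟩ := (Submodule.mem_span_range_iff_exists_fun ℚ).1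
    (hspan ▸ Submodule.mem_top : -a ∈ Submodule.span ℚ (Set.range w))
  have hqpos : ∀ j, 0 < q j := by
    intro j
    have h1 : (M n).mulVec (fun j => (q j : ℝ) / r j) = b := by
      funext i
      rw [hsolve, hq]
    have h2 : (M n).cramer b j = (M n).det * ((q j : ℝ) / r j) := by
      rw [Matrix.cramer_eq_adjugate_mulVec, ← h1, Matrix.mulVec_mulVec, Matrix.adjugate_mul,
        Matrix.smul_mulVec, Matrix.one_mulVec]
      simp
    have h3 := hn j
    rw [h2, ← mul_assoc] at h3
    have h4 := (mul_pos_iff_of_pos_left (mul_self_pos.2 hdet)).1 h3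
    have h5 : (0 : ℝ) < q j := by
      have := mul_pos h4 (hr j)
      rwa [div_mul_cancel₀ _ (hr j).ne'] at this
    exact_mod_cast h5
  set D : ℕ := ∏ j, (q j).den with hD
  have hD0 : 0 < D := Finset.prod_pos fun j _ => (q j).den_pos
  have hm : ∀ j, ∃ m : ℕ, (D : ℚ) * q j = m := by
    intro j
    obtain ⟨c, hc⟩ := Finset.dvd_prod_of_mem (fun j => (q j).den) (Finset.mem_univ j)
    refine ⟨c * (q j).num.toNat, ?_⟩
    have h1 : (((q j).num.toNat : ℤ) : ℚ) = (q j).num := by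
      rw [Int.toNat_of_nonneg (Rat.num_nonneg.2 (hqpos j).le)]
    have h2 : (q j).den * q j = (q j).num := Rat.den_mul_eq_num _
    rw [hD, hc]
    push_cast at h1 ⊢
    rw [h1, ← h2]
    ring
  choose m hm using hm
  have hDa : DiagValue l ((D : K) * -a) := by
    have : (D : K) * -a = ∑ j, (m j : K) * w j := by
      rw [← hq, Finset.mul_sum]
      refine Finset.sum_congr rfl fun j _ => ?_
      rw [Rat.smul_def, ← mul_assoc]
      congr 1
      have := congrArg (fun x : ℚ => (x : K)) (hm j)
      simpa using this
    rw [this]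
    exact DiagValue.sum _ fun j _ => (hw j).nsmul _
  -- `-a = D * (-a) + (D - 1) * a`
  have := hDa.add (ha.nsmul (D - 1))
  rw [Nat.cast_sub hD0] at this
  convert this using 1
  push_cast
  ring

end Positivity

/-! ### From integer matrices to connected graphs -/

section Graph

/-- A simple graph in which each index `i` becomes the block `Bool × Bool × ZMod N`. On the
functions `(i, s, e, x) ↦ ± v i`, with the sign given by `s`, its adjacency matrix acts as `A`.
The first `Bool` encodes the signs of the entries. The second one makes the graph bipartite, hence
loopless even where `A` has a nonzero diagonal entry. Each vertex `x : ZMod N` is joined to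
`|A i j|` vertices `y`, those with `x + y` in `{0, …, |A i j| - 1}`, a symmetric condition. -/
def blowup {ι : Type} (A : ι → ι → ℤ) (hA : ∀ i j, A i j = A j i) (N : ℕ) :
    SimpleGraph (ι × Bool × Bool × ZMod N) where
  Adj x y := x.2.2.1 ≠ y.2.2.1 ∧ (x.2.1 = y.2.1 ↔ 0 < A x.1 y.1) ∧
    (x.2.2.2 + y.2.2.2).val < (A x.1 y.1).natAbs
  symm := ⟨fun x y h => ⟨h.1.symm, by rw [eq_comm, hA]; exact h.2.1,
    by rw [add_comm, hA]; exact h.2.2⟩⟩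
  loopless := ⟨fun x h => h.1 rfl⟩

lemma card_val_add_lt {N : ℕ} [NeZero N] (a : ZMod N) {m : ℕ} (hm : m ≤ N) :
    (Finset.univ.filter fun b : ZMod N => (a + b).val < m).card = m := by
  have h1 : (Finset.univ.filter fun b : ZMod N => (a + b).val < m).card =
      (Finset.univ.filter fun b : ZMod N => b.val < m).card :=
    Finset.card_equiv (Equiv.addLeft a) (by simp)
  rw [h1]
  have h2 : (Finset.univ.filter fun b : ZMod N => b.val < m).card = (Finset.range m).card := by
    refine Finset.card_bij (fun b _ => b.val) (by simp)
      (fun a _ b _ h => ZMod.val_injective N h) fun k hk => ?_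
    have hk := Finset.mem_range.1 hk
    have : (k : ZMod N).val = k := ZMod.val_cast_of_lt (by omega)
    exact ⟨k, by simp [this, hk], this⟩
  rw [h2, Finset.card_range]

lemma exists_graph_of_intEigenvalue {l : ℝ} {ι : Type} [Fintype ι] {A : ι → ι → ℤ} {v : ι → ℝ}
    (hA : ∀ i j, A i j = A j i) (hv : v ≠ 0) (h : ∀ i, ∑ j, (A i j : ℝ) * v j = l * v i) :
    ∃ (V : Type) (_ : Fintype V) (G : SimpleGraph V) (_ : DecidableRel G.Adj) (w : V → ℝ),
      w ≠ 0 ∧ ∀ x, ∑ y, (if G.Adj x y then w y else 0) = l * w x := by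
  classical
  obtain ⟨N, hN0, hN⟩ : ∃ N : ℕ, N ≠ 0 ∧ ∀ i j, (A i j).natAbs ≤ N := by
    refine ⟨∑ i, ∑ j, (A i j).natAbs + 1, by omega, fun i j => ?_⟩
    have h1 := Finset.single_le_sum (f := fun j => (A i j).natAbs) (fun _ _ => Nat.zero_le _)
      (Finset.mem_univ j)
    have h2 := Finset.single_le_sum (f := fun i => ∑ j, (A i j).natAbs) (fun _ _ => Nat.zero_le _)
      (Finset.mem_univ i)
    omega
  have : NeZero N := ⟨hN0⟩
  refine ⟨ι × Bool × Bool × ZMod N, inferInstance, blowup A hA N, inferInstance,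
    fun x => (if x.2.1 then 1 else -1) * v x.1, ?_, ?_⟩
  · intro h0
    apply hv
    funext i
    simpa using congrFun h0 (i, true, true, 0)
  · rintro ⟨i, s, e, a⟩
    have key : ∀ j, ∑ y : Bool × Bool × ZMod N, (if (blowup A hA N).Adj (i, s, e, a) (j, y) then
        (if y.1 then (1 : ℝ) else -1) * v j else 0) =
        (if s then (1 : ℝ) else -1) * ((A i j : ℝ) * v j) := by
      intro j
      have hc : ∀ x : ℝ, ∑ b : ZMod N, (if (a + b).val < (A i j).natAbs then x else 0) =
          (A i j).natAbs * x := by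
        intro x
        rw [← Finset.sum_filter, Finset.sum_const, card_val_add_lt a (hN i j), nsmul_eq_mul]
      have hs : ((A i j).natAbs : ℝ) = if 0 < A i j then (A i j : ℝ) else -(A i j : ℝ) := by
        rw [Nat.cast_natAbs, Int.cast_abs]
        split_ifs with h
        · exact abs_of_pos (by exact_mod_cast h)
        · exact abs_of_nonpos (by exact_mod_cast not_lt.1 h)
      simp only [Fintype.sum_prod_type, Fintype.sum_bool, blowup]
      by_cases hp : 0 < A i j <;> cases s <;> cases e <;>
        simp [hp, hc, hs]
    rw [Fintype.sum_prod_type]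
    simp only [key]
    rw [← Finset.mul_sum, h]
    ring

/-- An eigenvector of a graph restricts to an eigenvector of any connected component on which it
does not vanish. -/
lemma exists_connected_graph {l : ℝ} {V : Type} [Fintype V] {G : SimpleGraph V}
    [DecidableRel G.Adj] {w : V → ℝ} (hw : w ≠ 0)
    (h : ∀ x, ∑ y, (if G.Adj x y then w y else 0) = l * w x) :
    ∃ (n : ℕ) (G : SimpleGraph (Fin n)) (_ : DecidableRel G.Adj),
      G.Connected ∧ ((G.adjMatrix ℝ).charpoly).IsRoot l := by
  classical
  obtain ⟨x₀, hx₀⟩ := Function.ne_iff.1 hw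
  set C := G.connectedComponentMk x₀ with hC
  have : Fintype C := Fintype.ofFinite C
  let φ : Fin (Fintype.card C) ≃ C := (Fintype.equivFin C).symm
  let H : SimpleGraph (Fin (Fintype.card C)) := C.toSimpleGraph.comap φ
  have e : H ≃g C.toSimpleGraph := SimpleGraph.Iso.comap φ _
  refine ⟨Fintype.card C, H, inferInstance, e.connected_iff.2 C.connected_toSimpleGraph, ?_⟩
  have hdet : ((Matrix.scalar (Fin (Fintype.card C))) l - H.adjMatrix ℝ).det = 0 := by
    rw [← Matrix.exists_mulVec_eq_zero_iff]
    refine ⟨fun i => w (φ i), ?_, ?_⟩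
    · intro h0
      have := congrFun h0 (φ.symm ⟨x₀, rfl⟩)
      simp at this
      exact hx₀ this
    · funext i
      have h1 : ∑ j, (if H.Adj i j then w (φ j) else 0) = l * w (φ i) := by
        rw [← h]
        have h2 : ∑ j, (if H.Adj i j then w (φ j) else 0) =
            ∑ y : C, if G.Adj (φ i) y then w y else 0 :=
          Fintype.sum_equiv φ _ _ fun j => by
            have hH : H.Adj i j ↔ G.Adj (φ i) (φ j) := Iff.rfl
            simp only [hH]
        rw [h2]
        rw [← Finset.sum_subset (Finset.subset_univ (Finset.univ.filter (· ∈ C.supp)))]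
        · exact (Finset.sum_subtype _ (by intro x; simp; rfl)
            (fun y => if G.Adj (φ i) y then w y else 0)).symm
        · intro y _ hy
          rw [if_neg]
          intro hadj
          apply hy
          simp only [Finset.mem_filter, Finset.mem_univ, true_and]
          exact (C.mem_supp_congr_adj hadj).1 (φ i).2
      simp only [Matrix.sub_mulVec, Pi.sub_apply, Matrix.scalar_apply, Matrix.mulVec_diagonal,
        Pi.zero_apply]
      rw [← h1]
      simp [Matrix.mulVec, dotProduct, SimpleGraph.adjMatrix_apply, ite_mul]
  rw [IsRoot, Matrix.eval_charpoly, hdet]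

end Graph

/-! ### Totally real algebraic integers -/

section NumberField

open IntermediateField

lemma splits_minpoly_of_totallyReal {α : ℝ} (hα : IsTotallyRealAlgebraicInteger α) :
    ((minpoly ℚ α).map (algebraMap ℚ ℝ)).Splits := by
  obtain ⟨p, -, hp0, hreal⟩ := hα
  refine Polynomial.Splits.of_splits_map (algebraMap ℝ ℂ) (IsAlgClosed.splits _) fun z hz => ?_
  have hz0 : aeval z (minpoly ℚ α) = 0 := by
    have := (mem_roots'.1 hz).2
    rwa [IsRoot, Polynomial.map_map, ← IsScalarTower.algebraMap_eq, eval_map_algebraMap] at this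
  have hdvd : minpoly ℚ α ∣ p.map (algebraMap ℤ ℚ) :=
    minpoly.dvd ℚ α (by rw [aeval_map_algebraMap, hp0])
  have hpz : aeval z p = 0 := by
    rw [← aeval_map_algebraMap ℚ]
    exact aeval_eq_zero_of_dvd_aeval_eq_zero hdvd hz0
  exact ⟨z.re, Complex.ext (by simp) (by simp [hreal z hpz])⟩

lemma intEigenvalue_gen {α : ℝ} (hα : IsTotallyRealAlgebraicInteger α) :
    IntEigenvalue (AdjoinSimple.gen ℚ α) := by
  by_contra hl
  have hsplit := splits_minpoly_of_totallyReal hα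
  obtain ⟨p, hp, hp0, -⟩ := hα
  have hZ : IsIntegral ℤ α := ⟨p, hp, hp0⟩
  have hQ : IsIntegral ℚ α := hZ.tower_top
  have hgen : IsIntegral ℤ (AdjoinSimple.gen ℚ α) := by
    refine (isIntegral_algebraMap_iff (algebraMap ℚ⟮α⟯ ℝ).injective).1 ?_
    rwa [AdjoinSimple.algebraMap_gen]
  have : FiniteDimensional ℚ ℚ⟮α⟯ := adjoin.finiteDimensional hQ
  let _ : Fintype (ℚ⟮α⟯ →ₐ[ℚ] ℝ) := fintypeOfAlgHomAdjoinIntegral ℚ hQ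
  have hcard : Fintype.card (ℚ⟮α⟯ →ₐ[ℚ] ℝ) = Module.finrank ℚ ℚ⟮α⟯ := by
    rw [← Nat.card_eq_fintype_card, adjoin.finrank hQ]
    exact card_algHom_adjoin_integral ℚ hQ (minpoly.irreducible hQ).separable hsplit
  refine hl (intEigenvalue_of_neg hgen fun b hb =>
    DiagValue.neg_of_real (fun σ : ℚ⟮α⟯ →ₐ[ℚ] ℝ => (σ : ℚ⟮α⟯ →+* ℝ)) hl ?_ hcard hb)
  intro σ τ h
  refine (adjoin.powerBasis hQ).algHom_ext ?_
  rw [adjoin.powerBasis_gen]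
  exact h

end NumberField

/-- Every totally real algebraic integer is an eigenvalue of the adjacency matrix
of some connected finite simple graph. -/
theorem totallyReal_is_eigenvalue_of_connected_graph (α : ℝ)
    (hα : IsTotallyRealAlgebraicInteger α) :
    ∃ (n : ℕ) (G : SimpleGraph (Fin n)) (_ : DecidableRel G.Adj),
      G.Connected ∧ ((G.adjMatrix ℝ).charpoly).IsRoot α := by
  obtain ⟨ι, _, A, v, hA, hv, h⟩ := intEigenvalue_gen hα
  have hvR : (fun i => (v i : ℝ)) ≠ 0 := fun h0 => hv <| by
    funext i
    exact Subtype.ext (congrFun h0 i)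
  have hR : ∀ i, ∑ j, (A i j : ℝ) * (v j : ℝ) = α * v i := by
    intro i
    have := congrArg (algebraMap (IntermediateField.adjoin ℚ {α}) ℝ) (h i)
    rw [map_sum, map_mul, IntermediateField.AdjoinSimple.algebraMap_gen] at this
    simp only [map_mul, map_intCast] at this
    exact this
  obtain ⟨V, _, G, _, w, hw, hG⟩ := exists_graph_of_intEigenvalue hA hvR hR
  exact exists_connected_graph hw hG
end

section
/- Every totally real algebraic integer is an eigenvalue of the adjacency matrix of some finite tree. -/
/-!
Write `α` for the given number, assume `α ≠ 0`, and put `μ = α ^ 2`.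

*Trees.* Take a rooted tree carrying a vector which is `1` at the root and satisfies the eigenvector
equation for `α` away from the root, and let `h` be the sum of its entries over the neighbours of
the root; it is an eigenvector when `h = α`. Joining the root of one such tree to the root of
another turns the values `a`, `b` into `a + 1 / (α - b)` (`TreeValue.step`). After dividing by `α`,
the attainable values contain the least additive monoid `F ⊆ ℚ(μ)` closed under
`f ↦ 1 / (μ (1 - f))` for `f ≠ 1` (`Reach`). It therefore suffices to prove `1 ∈ F`. Suppose not.

*Integrality.* If `-1/μ ∈ F`, then `F` is stable under division by `μ` (`Reach.div_mu`), so it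
contains all integral combinations of `μ⁻¹, μ⁻², …`. Dividing a monic integral equation of `μ`
by its leading term exhibits `1` as such a combination (`Reach.one_of_neg`). Moreover
`-1/μ ∈ F` as soon as `F` contains an integer `N ≥ 2`, because `1 / (μ (1 - N)) ∈ F`.

*Total reality.* To find a positive integer in `F`, embed `ℚ(μ)` into `ℂ ^ d` by its `d`
embeddings, and let `C` be the closure of the set of positive real multiples of images of elements
of `F` (`Reach.conjRays`). All conjugates of `μ` are positive reals. A limit of explicit
elements shows `1 / (μ - s) ∈ C` for all rational `s > 0` (`Reach.inv_linear_mem_closure`);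
letting `s` increase to one of the conjugates, which is possible because that conjugate is real
and positive, shows that `C` contains every standard basis vector (`Reach.single_mem_closure`).
Thus some elements of `F`, suitably scaled, have conjugate vectors so close to the standard basis
that they form a `ℚ`-basis of `ℚ(μ)` in which `1` has positive coordinates. These coordinates are
rational, and clearing denominators gives a positive integer in `F` (`Reach.one`).
-/

open Polynomial

/-! ### Values of rooted trees -/

open Classical in
/-- `h` is the sum over the neighbours of the root `r` of a vector `v` on a finite tree, where
`v r = 1` and `v` satisfies the eigenvector equation for `α` at every vertex other than `r`. The
equation also holds at `r` exactly when `h = α`. -/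
def TreeValue (α h : ℝ) : Prop :=
  ∃ (V : Type) (_ : Fintype V) (G : SimpleGraph V) (r : V) (v : V → ℝ),
    G.IsTree ∧ v r = 1 ∧ (∀ u, u ≠ r → (∑ w, if G.Adj u w then v w else 0) = α * v u) ∧
      (∑ w, if G.Adj r w then v w else 0) = h

theorem TreeValue.zero (α : ℝ) : TreeValue α 0 :=
  ⟨Unit, inferInstance, ⊥, (), fun _ => 1, SimpleGraph.IsTree.of_subsingleton, rfl,
    fun u hu => absurd rfl hu, by simp⟩

theorem isTree_sum_sup_edge {V W : Type} [Finite V] [Finite W] {G : SimpleGraph V}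
    {H : SimpleGraph W} (hG : G.IsTree) (hH : H.IsTree) (r : V) (s : W) :
    ((G ⊕g H) ⊔ SimpleGraph.edge (.inl r) (.inr s)).IsTree := by
  classical
  have := Fintype.ofFinite V
  have := Fintype.ofFinite W
  rw [SimpleGraph.isTree_iff_connected_and_card] at *
  refine ⟨hG.1.sum_sup_edge hH.1, ?_⟩
  have h1 : Nat.card (G ⊕g H).edgeSet = Nat.card G.edgeSet + Nat.card H.edgeSet := by
    rw [Nat.card_congr SimpleGraph.edgeSetSumEquiv, Nat.card_sum]
  have h2 := SimpleGraph.card_edgeFinset_sup_edge (G ⊕g H) (s := .inl r) (t := .inr s)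
    (by simp) (by simp)
  rw [← SimpleGraph.coe_edgeFinset, Nat.card_coe_set_eq, Set.ncard_coe_finset] at h1 ⊢
  rw [h2, h1, Nat.card_sum]
  omega

theorem TreeValue.step {α a b : ℝ} (ha : TreeValue α a) (hb : TreeValue α b) (hne : b ≠ α) :
    TreeValue α (a + 1 / (α - b)) := by
  classical
  obtain ⟨V, _, G, r, v, hG, hv, hvu, hvr⟩ := ha
  obtain ⟨W, _, H, s, w, hH, hw, hwu, hws⟩ := hb
  have hne' : α - b ≠ 0 := sub_ne_zero.2 hne.symm
  let K := (G ⊕g H) ⊔ SimpleGraph.edge (.inl r) (.inr s)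
  have hll : ∀ u x, K.Adj (.inl u) (.inl x) ↔ G.Adj u x := by
    simp [K, SimpleGraph.sup_adj, SimpleGraph.edge_adj]
  have hrr : ∀ u x, K.Adj (.inr u) (.inr x) ↔ H.Adj u x := by
    simp [K, SimpleGraph.sup_adj, SimpleGraph.edge_adj]
  have hlr : ∀ u x, K.Adj (.inl u) (.inr x) ↔ u = r ∧ x = s := by
    simp [K, SimpleGraph.sup_adj, SimpleGraph.edge_adj]
  have hrl : ∀ u x, K.Adj (.inr u) (.inl x) ↔ u = s ∧ x = r := by
    simp [K, SimpleGraph.sup_adj, SimpleGraph.edge_adj, and_comm]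
  have hdiv : ∀ u x : W, (if H.Adj u x then w x / (α - b) else 0) =
      (if H.Adj u x then w x else 0) / (α - b) := fun u x => by split_ifs <;> simp
  -- The eigenvector on the second tree is rescaled so that the equation holds at its root `s`.
  refine ⟨V ⊕ W, inferInstance, K, .inl r,
    Sum.elim v (fun x => w x / (α - b)), isTree_sum_sup_edge hG hH r s, hv, ?_, ?_⟩
  · rintro (u | u) hu
    · have hu' : u ≠ r := fun h => hu (by rw [h])
      simp [Fintype.sum_sum_type, hll, hlr, hu', hvu u hu']
    · by_cases hus : u = s
      · subst hus
        simp only [Fintype.sum_sum_type, hrl, hrr, Sum.elim_inl, Sum.elim_inr, hdiv,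
          ← Finset.sum_div, hws, hw]
        simp [hv]
        field_simp
        ring
      · simp only [Fintype.sum_sum_type, hrl, hrr, hus, Sum.elim_inl, Sum.elim_inr, hdiv,
          ← Finset.sum_div, hwu u hus]
        simp
        field_simp
  · simp only [Fintype.sum_sum_type, hll, hlr, Sum.elim_inl, Sum.elim_inr, hvr]
    simp [hw]

theorem TreeValue.exists_tree {α : ℝ} (h : TreeValue α α) :
    ∃ (n : ℕ) (T : SimpleGraph (Fin n)) (_ : DecidableRel T.Adj),
      T.IsTree ∧ ((T.adjMatrix ℝ).charpoly).IsRoot α := by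
  classical
  obtain ⟨V, _, G, r, v, hG, hv, hvu, hvr⟩ := h
  let e := Fintype.equivFin V
  let i : G ≃g G.map e.toEmbedding := SimpleGraph.Iso.map e G
  refine ⟨Fintype.card V, G.map e.toEmbedding, Classical.decRel _, i.isTree_iff.1 hG, ?_⟩
  rw [← Matrix.charpoly_toLin', ← Module.End.hasEigenvalue_iff_isRoot_charpoly]
  refine Module.End.hasEigenvalue_of_hasEigenvector (x := v ∘ e.symm)
    ⟨Module.End.mem_eigenspace_iff.2 ?_, fun h0 => ?_⟩
  · funext x
    obtain ⟨u, rfl⟩ := e.surjective x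
    have key : (∑ w, if G.Adj u w then v w else 0) = α * v u := by
      by_cases hu : u = r
      · rw [hu, hvr, hv, mul_one]
      · exact hvu u hu
    simp only [Matrix.toLin'_apply, Matrix.mulVec, dotProduct, SimpleGraph.adjMatrix_apply,
      Pi.smul_apply, smul_eq_mul, Function.comp, Equiv.symm_apply_apply]
    rw [← key, ← e.sum_comp]
    refine Finset.sum_congr rfl fun y _ => ?_
    have : (G.map e.toEmbedding).Adj (e u) (e y) ↔ G.Adj u y := i.map_adj_iff
    simp only [this, ite_mul, one_mul, zero_mul, Equiv.symm_apply_apply]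
  · have := congrFun h0 (e r)
    simp [hv] at this

/-! ### The monoid of reachable values -/

/-- The least subset of `K` that contains `0` and is closed under
`(a, b) ↦ a + 1 / (μ * (1 - b))` for `b ≠ 1`. For `μ = α ^ 2 ≠ 0`, its elements multiplied by
`α` are values of rooted trees (`Reach.treeValue`). -/
inductive Reach {K : Type*} [Field K] (μ : K) : K → Prop
  | zero : Reach μ 0
  | step {a b : K} : Reach μ a → Reach μ b → b ≠ 1 → Reach μ (a + 1 / (μ * (1 - b)))

namespace Reach
variable {K : Type*} [Field K] {μ : K}

theorem gen {b : K} (hb : Reach μ b) (h : b ≠ 1) : Reach μ (1 / (μ * (1 - b))) := by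
  simpa using Reach.step .zero hb h

theorem add {a b : K} (ha : Reach μ a) (hb : Reach μ b) : Reach μ (a + b) := by
  induction hb with
  | zero => simpa
  | step hc hd h ih _ => rw [← add_assoc]; exact .step ih hd h

theorem nat_mul {a : K} (ha : Reach μ a) (n : ℕ) : Reach μ (n * a) := by
  induction n with
  | zero => simpa using Reach.zero
  | succ n ih => push_cast; rw [add_mul, one_mul]; exact ih.add ha

theorem inv_mu (μ : K) : Reach μ (1 / μ) := by
  simpa using gen (μ := μ) .zero zero_ne_one

/-- Once `-1 / μ` is reachable, so is the quotient by `μ` of every reachable element. For a generator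
`x = 1 / (μ * (1 - b))` this is the identity
`1 / (μ * (1 - 1 / (μ * (1 - (b - 1 / μ))))) = 1 / μ + x / μ`. -/
theorem div_mu (hμ : μ ≠ 0) (h1 : ¬ Reach μ 1) (hneg : Reach μ (-1 / μ)) {f : K}
    (hf : Reach μ f) : Reach μ (f / μ) := by
  have hne : ∀ {x}, Reach μ x → x ≠ 1 := fun hx h => h1 (h ▸ hx)
  induction hf with
  | zero => simpa using Reach.zero
  | @step a b ha hb hb1 iha ihb =>
    rw [add_div]
    refine iha.add ?_
    have hb0 : 1 - b ≠ 0 := sub_ne_zero.2 hb1.symm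
    have hb' := hb.add hneg
    have h2 : 1 - (b + -1 / μ) ≠ 0 := sub_ne_zero.2 (hne hb').symm
    have h3 := gen hb' (hne hb')
    have h4 : 1 - 1 / (μ * (1 - (b + -1 / μ))) ≠ 0 := sub_ne_zero.2 (hne h3).symm
    have h5 := (gen h3 (hne h3)).add hneg
    convert h5 using 1
    have e1 : μ * (1 - (b + -1 / μ)) = μ * (1 - b) + 1 := by field_simp; ring
    rw [e1] at h4 ⊢
    have h2' : μ * (1 - b) + 1 ≠ 0 := e1 ▸ mul_ne_zero hμ h2
    have e2 : 1 - 1 / (μ * (1 - b) + 1) = μ * (1 - b) / (μ * (1 - b) + 1) := by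
      field_simp; ring
    rw [e2]
    field_simp
    ring

/-- By `div_mu` every `z / μ ^ j` with `z : ℤ` and `j ≥ 1` is reachable, and an integral equation
of `μ` divided by its leading term writes `1` as a sum of such elements. -/
theorem one_of_neg (hμ : μ ≠ 0) (hint : IsIntegral ℤ μ) (hneg : Reach μ (-1 / μ)) :
    Reach μ 1 := by
  by_contra h1
  have hp : ∀ j : ℕ, Reach μ (1 / μ ^ (j + 1)) ∧ Reach μ (-1 / μ ^ (j + 1)) := by
    intro j
    induction j with
    | zero => simpa using ⟨by simpa using inv_mu μ, hneg⟩
    | succ j ih =>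
      rw [pow_succ μ (j + 1), ← div_div, ← div_div]
      exact ⟨div_mu hμ h1 hneg ih.1, div_mu hμ h1 hneg ih.2⟩
  have hz : ∀ (j : ℕ) (z : ℤ), Reach μ (z / μ ^ (j + 1)) := by
    intro j z
    obtain ⟨n, rfl | rfl⟩ := z.eq_nat_or_neg
    · convert (hp j).1.nat_mul n using 1; push_cast; ring
    · convert (hp j).2.nat_mul n using 1; push_cast; ring
  obtain ⟨P, hP, h0⟩ := hint
  rw [← Polynomial.aeval_def, Polynomial.aeval_eq_sum_range, Finset.sum_range_succ,
    hP.coeff_natDegree, one_smul] at h0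
  have key : (1 : K) = ∑ i ∈ Finset.range P.natDegree,
      ((-P.coeff i : ℤ) : K) / μ ^ (P.natDegree - 1 - i + 1) := by
    have : μ ^ P.natDegree = - ∑ i ∈ Finset.range P.natDegree, P.coeff i • μ ^ i := by
      linear_combination h0
    rw [← div_self (pow_ne_zero P.natDegree hμ)]
    nth_rw 1 [this]
    rw [← Finset.sum_neg_distrib, Finset.sum_div]
    refine Finset.sum_congr rfl fun i hi => ?_
    have hi := Finset.mem_range.1 hi
    have e : μ ^ P.natDegree = μ ^ (P.natDegree - 1 - i + 1) * μ ^ i := by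
      rw [← pow_add]; congr 1; omega
    rw [e, zsmul_eq_mul]
    push_cast
    field_simp
  refine h1 (key ▸ ?_)
  have : ∀ s : Finset ℕ, Reach μ (∑ i ∈ s,
      ((-P.coeff i : ℤ) : K) / μ ^ (P.natDegree - 1 - i + 1)) := by
    intro s
    induction s using Finset.induction_on with
    | empty => simpa using Reach.zero
    | insert i s his ih => rw [Finset.sum_insert his]; exact (hz _ _).add ih
  exact this _

theorem neg_of_nat [CharZero K] {N : ℕ} (hN : 1 < N) (h : Reach μ (N : K)) :
    Reach μ (-1 / μ) := by
  have hN' : (N : K) - 1 ≠ 0 := sub_ne_zero.2 (by exact_mod_cast hN.ne')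
  convert (gen h (by exact_mod_cast hN.ne')).nat_mul (N - 1) using 1
  rw [Nat.cast_sub hN.le, Nat.cast_one, show (1 : K) - N = -(N - 1) by ring]
  field_simp

theorem one_of_nat [CharZero K] (hμ : μ ≠ 0) (hint : IsIntegral ℤ μ) {N : ℕ} (hN : 0 < N)
    (h : Reach μ (N : K)) : Reach μ 1 := by
  rcases Nat.lt_or_ge 1 N with h1 | h1
  · exact one_of_neg hμ hint (neg_of_nat h1 h)
  · obtain rfl : N = 1 := by omega
    simpa using h

end Reach

namespace Reach
variable {K : Type*} [Field K] {μ : K}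

/-! ### Density of the rays through conjugate vectors -/

/-- The positive real multiples of the conjugate vectors `(σ f)_σ` of reachable elements `f`, where
`σ` runs over the complex embeddings of `K`. -/
def conjRays (μ : K) : Set ((K →+* ℂ) → ℂ) :=
  {x | ∃ (t : ℝ) (f : K), 0 < t ∧ Reach μ f ∧ x = fun σ => (t : ℂ) * σ f}

theorem smul_mem_closure_conjRays {t : ℝ} (ht : 0 < t) {x : (K →+* ℂ) → ℂ}
    (hx : x ∈ closure (conjRays μ)) : (fun σ => (t : ℂ) * x σ) ∈ closure (conjRays μ) := by
  have hc : Continuous fun x : (K →+* ℂ) → ℂ => fun σ => (t : ℂ) * x σ := by fun_prop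
  refine map_mem_closure hc hx ?_
  rintro _ ⟨s, f, hs, hf, rfl⟩
  exact ⟨t * s, f, mul_pos ht hs, hf, by funext σ; push_cast; ring⟩

/-- For `m → ∞`, apply `g ↦ 1 / (μ * (1 - g))` to the reachable element
`g = m * a / μ + m * b * m / (μ - m)`. Then `m` times the result is
`1 / (μ / m - a - b * μ / (μ / m - 1))`, which tends to `1 / (b * μ - a)` in every embedding. -/
theorem inv_linear_mem_closure [CharZero K] (hμ : μ ≠ 0) (h1 : ¬ Reach μ 1) (a b : ℕ)
    (hab : ∀ σ : K →+* ℂ, (b : ℂ) * σ μ - a ≠ 0) :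
    (fun σ : K →+* ℂ => 1 / ((b : ℂ) * σ μ - a)) ∈ closure (conjRays μ) := by
  have hne : ∀ {x}, Reach μ x → x ≠ 1 := fun hx h => h1 (h ▸ hx)
  have hm : ∀ m : ℕ, μ ≠ m ∧ Reach μ (1 / (μ - m)) := by
    intro m
    have hr := (inv_mu μ).nat_mul m
    have hr1 := hne hr
    have e : μ * (1 - m * (1 / μ)) = μ - m := by field_simp
    refine ⟨fun h => hr1 (by rw [← h]; field_simp), e ▸ gen hr hr1⟩
  have hg : ∀ m : ℕ, Reach μ (m * a * (1 / μ) + m * b * m * (1 / (μ - m))) := fun m => by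
    simpa using ((inv_mu μ).nat_mul (m * a)).add ((hm m).2.nat_mul (m * b * m))
  let u : ℕ → (K →+* ℂ) → ℂ := fun n σ => (((n + 1 : ℕ) : ℝ) : ℂ) *
    σ (1 / (μ * (1 - ((n + 1 : ℕ) * a * (1 / μ) +
      (n + 1 : ℕ) * b * (n + 1 : ℕ) * (1 / (μ - (n + 1 : ℕ)))))))
  refine mem_closure_of_tendsto (f := u) (b := Filter.atTop) ?_
    (Filter.Eventually.of_forall fun n =>
      ⟨(n + 1 : ℕ), _, by positivity, gen (hg (n + 1)) (hne (hg (n + 1))), rfl⟩)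
  rw [tendsto_pi_nhds]
  intro σ
  have hlim : Filter.Tendsto (fun n : ℕ => σ μ / ((n + 1 : ℕ) : ℂ)) Filter.atTop (nhds 0) :=
    (tendsto_const_div_atTop_nhds_zero_nat (𝕜 := ℂ) (σ μ)).comp (Filter.tendsto_add_atTop_nat 1)
  have hlim2 : Filter.Tendsto (fun n : ℕ => 1 / (σ μ / ((n + 1 : ℕ) : ℂ) - a
      - b * σ μ / (σ μ / ((n + 1 : ℕ) : ℂ) - 1))) Filter.atTop
      (nhds (1 / (0 - a - b * σ μ / (0 - 1)))) := by
    refine tendsto_const_nhds.div ((hlim.sub_const _).sub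
      (tendsto_const_nhds.div (hlim.sub_const _) (by norm_num))) ?_
    convert hab σ using 1
    ring
  convert hlim2 using 2 with n
  · have h0 : σ μ ≠ 0 := (map_ne_zero σ).2 hμ
    have hn : ((n + 1 : ℕ) : ℂ) ≠ 0 := by exact_mod_cast n.succ_ne_zero
    have hz : σ μ - ((n + 1 : ℕ) : ℂ) ≠ 0 := by
      have := (map_ne_zero σ).2 (sub_ne_zero.2 (hm (n + 1)).1)
      simpa using this
    simp only [u, map_div₀, map_mul, map_sub, map_add, map_one, map_natCast, Complex.ofReal_natCast]
    generalize ((n + 1 : ℕ) : ℂ) = m at hn hz ⊢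
    generalize σ μ = z at h0 hz ⊢
    have e1 : z / m - 1 = (z - m) / m := by field_simp
    have e2 : z * (1 - (m * a * (1 / z) + m * b * m * (1 / (z - m)))) =
        m * (z / m - a - b * z / (z / m - 1)) := by
      rw [e1]; field_simp; ring
    rw [e2, mul_one_div, ← div_div, div_self hn]
  · ring

/-- As rational `q` increase to `x τ`, the vector `σ ↦ (x τ - q) / (x σ - q)` tends to the basis
vector at `τ`. The scalar factor `x τ - q` is positive, so these vectors lie in the
closure of the rays. -/
theorem single_mem_closure [CharZero K] [DecidableEq (K →+* ℂ)] (hμ : μ ≠ 0)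
    (h1 : ¬ Reach μ 1) (x : (K →+* ℂ) → ℝ) (hx : ∀ σ, σ μ = x σ) (hpos : ∀ σ, 0 < x σ)
    [Finite (K →+* ℂ)] (hinj : Function.Injective x) (τ : K →+* ℂ) :
    (Pi.single τ 1 : (K →+* ℂ) → ℂ) ∈ closure (conjRays μ) := by
  obtain ⟨q, -, hqlt, hq⟩ := Real.exists_seq_rat_strictMono_tendsto (x τ)
  have hev : ∀ᶠ n in Filter.atTop, ∀ σ, 0 < (q n : ℝ) ∧ (q n : ℝ) ≠ x σ := by
    rw [Filter.eventually_all]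
    intro σ
    refine (hq.eventually_const_lt (hpos τ)).and ?_
    by_cases h : σ = τ
    · exact Filter.Eventually.of_forall fun n => h ▸ (hqlt n).ne
    · exact hq.eventually_ne fun h' => h (hinj h'.symm)
  have hcl := isClosed_closure (s := conjRays μ)
  refine hcl.mem_of_tendsto (b := Filter.atTop)
    (f := fun n => fun σ : K →+* ℂ => ((x τ - q n : ℝ) : ℂ) * (1 / ((x σ - q n : ℝ) : ℂ))) ?_ ?_
  · rw [tendsto_pi_nhds]
    intro σ
    by_cases h : σ = τ
    · subst h
      refine Filter.Tendsto.congr (f₁ := fun _ => (1 : ℂ)) (fun n => ?_) (by simp)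
      have : ((x σ - q n : ℝ) : ℂ) ≠ 0 := by exact_mod_cast (sub_pos.2 (hqlt n)).ne'
      field_simp
    · have hd : x σ - x τ ≠ 0 := sub_ne_zero.2 fun h' => h (hinj h')
      have : Filter.Tendsto (fun n => (x τ - q n) * (1 / (x σ - q n))) Filter.atTop
          (nhds ((x τ - x τ) * (1 / (x σ - x τ)))) :=
        (tendsto_const_nhds.sub hq).mul (tendsto_const_nhds.div (tendsto_const_nhds.sub hq) hd)
      have := (Complex.continuous_ofReal.tendsto _).comp this
      convert this using 2
      · simp
      · simp [h]
  · filter_upwards [hev] with n hn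
    have hq0 : 0 < q n := by exact_mod_cast (hn τ).1
    have hnum : ((q n).num.toNat : ℚ) = (q n).num := by
      exact_mod_cast Int.toNat_of_nonneg (Rat.num_pos.2 hq0).le
    have hqr : ((q n).num.toNat : ℝ) = q n * (q n).den := by
      have : ((q n).num.toNat : ℚ) = q n * (q n).den := by rw [hnum, Rat.mul_den_eq_num]
      exact_mod_cast congrArg (Rat.cast : ℚ → ℝ) this
    have hden : (0 : ℝ) < (q n).den := by exact_mod_cast (q n).den_pos
    -- Write `q n = num / den` to apply `inv_linear_mem_closure` with `a = num`, `b = den`.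
    have e : ∀ σ, (((q n).den : ℕ) : ℂ) * σ μ - ((q n).num.toNat : ℂ) =
        (((q n).den * (x σ - q n) : ℝ) : ℂ) := by
      intro σ
      rw [hx, ← Complex.ofReal_natCast, ← Complex.ofReal_natCast, hqr]
      push_cast
      ring
    have hmem := inv_linear_mem_closure hμ h1 (q n).num.toNat (q n).den (fun σ => by
      rw [e]
      exact_mod_cast mul_ne_zero hden.ne' (sub_ne_zero.2 (hn σ).2.symm))
    have := smul_mem_closure_conjRays (mul_pos (sub_pos.2 (hqlt n)) hden) hmem
    convert this using 2 with σ
    rw [e]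
    have : (((q n).den : ℝ) : ℂ) ≠ 0 := by exact_mod_cast hden.ne'
    have h3 : ((x σ - q n : ℝ) : ℂ) ≠ 0 := by exact_mod_cast sub_ne_zero.2 (hn σ).2.symm
    rw [Complex.ofReal_mul, Complex.ofReal_mul]
    field_simp

/-- For `B` close to the identity, the solution `c` of `c * B = (1, …, 1)` is close to
`(1, …, 1)`, so its entries have positive real part. -/
theorem eventually_solution_pos (ι : Type*) [Fintype ι] [DecidableEq ι] :
    ∀ᶠ B : Matrix ι ι ℂ in nhds 1, B.det ≠ 0 ∧
      ∃ c : ι → ℂ, Matrix.vecMul c B = 1 ∧ ∀ j, 0 < (c j).re := by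
  have hdet : ∀ᶠ B : Matrix ι ι ℂ in nhds 1, B.det ≠ 0 :=
    (Continuous.matrix_det continuous_id).continuousAt.eventually_ne (by simp)
  have hre : ∀ᶠ B : Matrix ι ι ℂ in nhds 1,
      ∀ j, 0 < ((B.det)⁻¹ * Matrix.vecMul 1 B.adjugate j).re := by
    rw [Filter.eventually_all]
    intro j
    have h1 : ContinuousAt (fun B : Matrix ι ι ℂ => B.det) 1 :=
      (Continuous.matrix_det continuous_id).continuousAt
    have h2 : Continuous (fun B : Matrix ι ι ℂ => Matrix.vecMul 1 B.adjugate j) :=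
      (continuous_apply j).comp
        (Continuous.matrix_vecMul continuous_const (Continuous.matrix_adjugate continuous_id))
    have h3 : ContinuousAt (fun B : Matrix ι ι ℂ =>
        ((B.det)⁻¹ * Matrix.vecMul 1 B.adjugate j).re) 1 :=
      Complex.continuous_re.continuousAt.comp ((h1.inv₀ (by simp)).mul h2.continuousAt)
    refine h3.eventually (lt_mem_nhds ?_)
    simp
  filter_upwards [hdet, hre] with B h1 h2
  refine ⟨h1, fun j => (B.det)⁻¹ * Matrix.vecMul 1 B.adjugate j, ?_, h2⟩
  have : (fun j => (B.det)⁻¹ * Matrix.vecMul 1 B.adjugate j) =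
      (B.det)⁻¹ • Matrix.vecMul (1 : ι → ℂ) B.adjugate := rfl
  rw [this, Matrix.smul_vecMul, Matrix.vecMul_vecMul, Matrix.adjugate_mul, Matrix.vecMul_smul,
    Matrix.vecMul_one, smul_smul, inv_mul_cancel₀ h1, one_smul]

/-- A positive rational combination of reachable elements becomes reachable after clearing
denominators. -/
theorem exists_nat_of_pos_comb [CharZero K] {ι : Type*} (s : Finset ι) (f : ι → K) (r : ι → ℚ)
    (hf : ∀ i, Reach μ (f i)) (hr : ∀ i, 0 < r i) :
    ∃ N : ℕ, 0 < N ∧ Reach μ (N * ∑ i ∈ s, (r i : K) * f i) := by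
  classical
  induction s using Finset.induction_on with
  | empty => exact ⟨1, one_pos, by simpa using Reach.zero⟩
  | insert i s his ih =>
    obtain ⟨N, hN, h⟩ := ih
    have h1 := (hf i).nat_mul (N * (r i).num.toNat)
    have hnum : ((r i).num.toNat : ℚ) = r i * (r i).den := by
      rw [Rat.mul_den_eq_num]
      exact_mod_cast Int.toNat_of_nonneg (Rat.num_pos.2 (hr i)).le
    have hnum' : ((r i).num.toNat : K) = r i * (r i).den := by
      exact_mod_cast congrArg (Rat.cast : ℚ → K) hnum
    refine ⟨N * (r i).den, Nat.mul_pos hN (r i).den_pos, ?_⟩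
    convert h1.add (h.nat_mul (r i).den) using 1
    rw [Finset.sum_insert his]
    push_cast
    rw [hnum']
    ring

/-- The element `1` is reachable when all conjugates of `μ` are positive reals `x σ`, `μ` is integral,
and `μ` separates the embeddings of `K` (so that it generates `K`). -/
theorem one [NumberField K] (hμ : μ ≠ 0)
    (hint : IsIntegral ℤ μ) (x : (K →+* ℂ) → ℝ) (hx : ∀ σ, σ μ = x σ) (hpos : ∀ σ, 0 < x σ)
    (hinj : Function.Injective x) : Reach μ 1 := by
  classical
  by_contra h1
  -- The rows of the identity matrix are limits of vectors in `conjRays μ`.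
  have hcl : (1 : Matrix (K →+* ℂ) (K →+* ℂ) ℂ) ∈
      closure (Set.univ.pi fun _ => conjRays μ : Set ((K →+* ℂ) → (K →+* ℂ) → ℂ)) := by
    rw [closure_pi_set]
    intro τ _
    convert single_mem_closure hμ h1 x hx hpos hinj τ using 1
    funext σ
    simp [Matrix.one_apply, Pi.single_apply, eq_comm]
  obtain ⟨B, hB, hdet, c, hc, hcpos⟩ := ((mem_closure_iff_frequently.1 hcl).and_eventually
    (eventually_solution_pos (K →+* ℂ))).exists
  choose t f ht hf hBf using fun τ => hB τ (Set.mem_univ τ)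
  have ht' : ∀ τ, (t τ : ℂ) ≠ 0 := fun τ => by exact_mod_cast (ht τ).ne'
  -- Row `τ` of `B` is `t τ` times the conjugate vector of `f τ`, so rational combinations of the
  -- `f τ` correspond to combinations of the rows.
  have hrow : ∀ r : (K →+* ℂ) → ℚ,
      Matrix.vecMul (fun τ => (r τ : ℂ) / t τ) B = fun σ => σ (∑ τ, (r τ : K) * f τ) := by
    intro r
    funext σ
    simp only [Matrix.vecMul, dotProduct, map_sum, map_mul, map_ratCast]
    refine Finset.sum_congr rfl fun τ _ => ?_
    have := congrFun (hBf τ) σ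
    rw [this]
    field_simp [ht' τ]
  have hli : LinearIndependent ℚ f := by
    rw [Fintype.linearIndependent_iff]
    intro r hr τ
    simp only [Algebra.smul_def, eq_ratCast] at hr
    have h0 := hrow r
    rw [hr] at h0
    have := congrFun (Matrix.eq_zero_of_vecMul_eq_zero hdet (h0.trans (by funext; simp))) τ
    simpa [ht' τ] using this
  let b := basisOfLinearIndependentOfCardEqFinrank hli (NumberField.Embeddings.card K ℂ)
  have hsum : ∑ τ, ((b.repr 1 τ : ℚ) : K) * f τ = 1 := by
    have := b.sum_repr 1
    simpa [b, Algebra.smul_def] using this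
  -- The rational coordinates of `1` are `t τ * c τ`, as `B` is invertible; so they are positive.
  have hcr : (fun τ => ((b.repr 1 τ : ℚ) : ℂ) / t τ) = c := by
    have h0 := hrow fun τ => b.repr 1 τ
    rw [hsum] at h0
    have h2 : Matrix.vecMul ((fun τ => ((b.repr 1 τ : ℚ) : ℂ) / t τ) - c) B = 0 := by
      rw [Matrix.sub_vecMul, h0, hc]; funext; simp
    exact sub_eq_zero.1 (Matrix.eq_zero_of_vecMul_eq_zero hdet h2)
  have hrpos : ∀ τ, 0 < b.repr 1 τ := by
    intro τ
    have h0 := hcpos τ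
    rw [← hcr] at h0
    have e : ((b.repr 1 τ : ℚ) : ℂ) / t τ = (((b.repr 1 τ : ℚ) / t τ : ℝ) : ℂ) := by
      push_cast; rfl
    simp only [e, Complex.ofReal_re] at h0
    have := (div_pos_iff_of_pos_right (ht τ)).1 h0
    exact_mod_cast this
  obtain ⟨N, hN, h⟩ := exists_nat_of_pos_comb Finset.univ f (fun τ => b.repr 1 τ) hf hrpos
  rw [hsum, mul_one] at h
  exact h1 (one_of_nat hμ hint hN h)

end Reach

/-! ### Passage to the totally real number -/

theorem Reach.treeValue {α : ℝ} (hα : α ≠ 0) {K : Type*} [Field K] {μ : K} (φ : K →+* ℝ)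
    (hφ : φ μ = α ^ 2) {f : K} (hf : Reach μ f) : TreeValue α (α * φ f) := by
  induction hf with
  | zero => simpa using TreeValue.zero α
  | @step a b _ _ hb iha ihb =>
    have hb' : 1 - φ b ≠ 0 := by
      have := (map_ne_zero φ).2 (sub_ne_zero.2 hb.symm)
      simpa using this
    convert iha.step ihb (fun h => hb' ?_) using 1
    · have : α - α * φ b = α * (1 - φ b) := by ring
      rw [this]
      simp only [map_add, map_div₀, map_mul, map_sub, map_one, hφ]
      field_simp
    · have : α * (1 - φ b) = 0 := by linear_combination -h
      exact (mul_eq_zero.1 this).resolve_left hα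

theorem exists_ringHom_extending {K L : Type*} [Field K] [Field L] [Algebra K L]
    [Algebra.IsAlgebraic K L] (σ : K →+* ℂ) :
    ∃ φ : L →+* ℂ, ∀ k, φ (algebraMap K L k) = σ k := by
  let _ : Algebra K ℂ := σ.toAlgebra
  let φ : L →ₐ[K] ℂ := IsAlgClosed.lift
  exact ⟨φ, fun k => φ.commutes k⟩

/-- Every conjugate of `α ^ 2` is the square of a conjugate of `α`, obtained by extending the
embedding to a field containing `α`; total reality makes it the square of a nonzero real. -/
theorem exists_conj_eq_sq {α : ℝ} (hα : IsTotallyRealAlgebraicInteger α) (h0 : α ≠ 0)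
    (σ : IntermediateField.adjoin ℚ {α ^ 2} →+* ℂ) :
    ∃ x : ℝ, 0 < x ∧ σ (IntermediateField.AdjoinSimple.gen ℚ (α ^ 2)) = x := by
  obtain ⟨p, hp, hroot, hreal⟩ := hα
  have hint : IsIntegral ℚ α := (show IsIntegral ℤ α from ⟨p, hp, hroot⟩).tower_top
  let K := IntermediateField.adjoin ℚ {α ^ 2}
  let L := IntermediateField.adjoin K {α}
  have : Algebra.IsAlgebraic K L :=
    IntermediateField.isAlgebraic_adjoin_simple hint.tower_top
  obtain ⟨φ, hφ⟩ := exists_ringHom_extending (L := L) σ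
  let g : L := IntermediateField.AdjoinSimple.gen K α
  have hg : (g : ℝ) = α := IntermediateField.AdjoinSimple.coe_gen K α
  have hg0 : aeval g p = 0 := by
    apply (algebraMap L ℝ).injective
    rw [← aeval_algebraMap_apply, map_zero]
    exact hroot
  have hz : aeval (φ g) p = 0 := by
    have : aeval (φ.toIntAlgHom g) p = 0 := by rw [aeval_algHom_apply, hg0, map_zero]
    exact this
  have him := hreal _ hz
  have hz0 : φ g ≠ 0 := (map_ne_zero φ).2 fun h => h0 (by rw [← hg, h]; rfl)
  have hre : φ g = ((φ g).re : ℂ) := by apply Complex.ext <;> simp [him]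
  have hsq : σ (IntermediateField.AdjoinSimple.gen ℚ (α ^ 2)) = φ g ^ 2 := by
    have e : algebraMap K L (IntermediateField.AdjoinSimple.gen ℚ (α ^ 2)) = g ^ 2 := by
      apply Subtype.ext
      change _ = (g : ℝ) ^ 2
      rw [hg]
      exact IntermediateField.AdjoinSimple.coe_gen ℚ (α ^ 2)
    rw [← map_pow, ← e]
    exact (hφ _).symm
  refine ⟨(φ g).re ^ 2, ?_, ?_⟩
  · have : (φ g).re ≠ 0 := fun h => hz0 (by rw [hre, h]; rfl)
    positivity
  · rw [hsq]
    nth_rw 1 [hre]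
    push_cast
    rfl

/-- Every totally real algebraic integer is an eigenvalue of the adjacency matrix
of some finite tree (a connected acyclic finite simple graph). -/
theorem totallyReal_is_eigenvalue_of_tree (α : ℝ)
    (hα : IsTotallyRealAlgebraicInteger α) :
    ∃ (n : ℕ) (T : SimpleGraph (Fin n)) (_ : DecidableRel T.Adj),
      T.IsTree ∧ ((T.adjMatrix ℝ).charpoly).IsRoot α := by
  apply TreeValue.exists_tree
  by_cases h0 : α = 0
  · simpa [h0] using TreeValue.zero 0
  choose x hpos hx using exists_conj_eq_sq hα h0
  obtain ⟨p, hp, hroot, -⟩ := hα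
  have hint : IsIntegral ℤ (α ^ 2) := (show IsIntegral ℤ α from ⟨p, hp, hroot⟩).pow 2
  let K := IntermediateField.adjoin ℚ {α ^ 2}
  let μ : K := IntermediateField.AdjoinSimple.gen ℚ (α ^ 2)
  have hμ : algebraMap K ℝ μ = α ^ 2 := IntermediateField.AdjoinSimple.algebraMap_gen ℚ (α ^ 2)
  have : FiniteDimensional ℚ K := IntermediateField.adjoin.finiteDimensional hint.tower_top
  have : NumberField K := ⟨⟩
  have hμ0 : μ ≠ 0 := fun h => pow_ne_zero 2 h0 (by rw [← hμ, h, map_zero])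
  have hμint : IsIntegral ℤ μ :=
    (isIntegral_algebraMap_iff (algebraMap K ℝ).injective).1 (hμ ▸ hint)
  have hinj : Function.Injective x := by
    intro σ τ h
    have : σ.toRatAlgHom = τ.toRatAlgHom := by
      apply IntermediateField.algHom_ext_of_eq_adjoin _ rfl
      rintro _ rfl
      exact (hx σ).trans ((congrArg _ h).trans (hx τ).symm)
    ext y
    exact DFunLike.congr_fun this y
  simpa using (Reach.one hμ0 hμint x hx hpos hinj).treeValue h0 (algebraMap K ℝ) hμ
end

section
/- Let G be a connected finite simple graph and let α be an eigenvalue of the adjacency matrix of G. Then there exists a connected finite simple graph H such that both 0 and α are eigenvalues of the adjacency matrix of H. (Lemma 2.3.) -/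
/-!
Let `H` be the cone, with apex `none`, over the disjoint union of two copies of `G` and two isolated
vertices. The apex is adjacent to every other vertex, so `H` is connected. A vector vanishing at the
apex whose entries sum to zero is an eigenvector of `H` as soon as it is one of the base. If
`A x = α x` for `G`, then `(x, -x)` on the two copies is such a vector, with eigenvalue `α`;
the vector `(1, -1)` on the two isolated vertices is such a vector, with eigenvalue `0`.
-/

/-- The cone over two copies of `G` (indexed by `Bool`) together with two isolated vertices.
The apex is `none`. -/
def coneGraph {V : Type*} (G : SimpleGraph V) : SimpleGraph (Option (V × Bool ⊕ Bool)) where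
  Adj
    | none, none => False
    | none, some _ => True
    | some _, none => True
    | some (.inl a), some (.inl b) => G.Adj a.1 b.1 ∧ a.2 = b.2
    | some (.inl _), some (.inr _) => False
    | some (.inr _), some _ => False
  symm := ⟨by
    rintro (_ | ⟨a⟩ | a) (_ | ⟨b⟩ | b) h <;> first | trivial | exact h.elim | exact ⟨h.1.symm, h.2.symm⟩⟩
  loopless := ⟨by
    rintro (_ | ⟨a⟩ | a) h
    · exact h
    · exact G.loopless.irrefl _ h.1
    · exact h⟩

section Adj

variable {V : Type*} (G : SimpleGraph V)

@[simp] theorem coneGraph_adj_none_some (v : V × Bool ⊕ Bool) :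
    (coneGraph G).Adj none (some v) := trivial

@[simp] theorem coneGraph_adj_inl_inl (a b : V × Bool) :
    (coneGraph G).Adj (some (.inl a)) (some (.inl b)) ↔ G.Adj a.1 b.1 ∧ a.2 = b.2 := Iff.rfl

@[simp] theorem coneGraph_not_adj_inl_inr (a : V × Bool) (b : Bool) :
    ¬ (coneGraph G).Adj (some (.inl a)) (some (.inr b)) := id

@[simp] theorem coneGraph_not_adj_inr_some (a : Bool) (b : V × Bool ⊕ Bool) :
    ¬ (coneGraph G).Adj (some (.inr a)) (some b) := by
  rcases b with b | b <;> exact id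

end Adj

theorem coneGraph_connected {V : Type*} (G : SimpleGraph V) : (coneGraph G).Connected := by
  have h : ∀ v, (coneGraph G).Reachable none v := by
    rintro (_ | v)
    · exact SimpleGraph.Reachable.refl _
    · exact SimpleGraph.Adj.reachable (coneGraph_adj_none_some G v)
  exact ⟨fun u v => (h u).symm.trans (h v)⟩

theorem isRoot_charpoly_iff_exists_mulVec {V : Type*} [Fintype V] [DecidableEq V]
    (A : Matrix V V ℝ) (α : ℝ) :
    A.charpoly.IsRoot α ↔ ∃ v, v ≠ 0 ∧ A.mulVec v = α • v := by
  rw [Polynomial.IsRoot.def, Matrix.eval_charpoly, ← Matrix.exists_mulVec_eq_zero_iff]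
  refine exists_congr fun v => and_congr_right fun _ => ?_
  rw [Matrix.sub_mulVec, sub_eq_zero, Matrix.scalar_apply, ← Matrix.smul_one_eq_diagonal,
    Matrix.smul_mulVec, Matrix.one_mulVec, eq_comm]

open Classical in
theorem coneGraph_isRoot_zero {V : Type*} [Fintype V] (G : SimpleGraph V) :
    ((coneGraph G).adjMatrix ℝ).charpoly.IsRoot 0 := by
  rw [isRoot_charpoly_iff_exists_mulVec]
  refine ⟨fun | some (.inr true) => 1 | some (.inr false) => -1 | _ => 0, ?_, ?_⟩
  · intro h
    simpa using congrFun h (some (.inr true))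
  · ext (_ | ⟨a⟩ | a) <;>
      simp [Matrix.mulVec, dotProduct, SimpleGraph.adjMatrix_apply, Fintype.sum_option]

open Classical in
theorem coneGraph_isRoot {V : Type*} [Fintype V] (G : SimpleGraph V) (α : ℝ)
    (hα : (G.adjMatrix ℝ).charpoly.IsRoot α) :
    ((coneGraph G).adjMatrix ℝ).charpoly.IsRoot α := by
  rw [isRoot_charpoly_iff_exists_mulVec] at hα ⊢
  obtain ⟨x, hx, h⟩ := hα
  refine ⟨fun | some (.inl (v, true)) => x v | some (.inl (v, false)) => -x v | _ => 0, ?_, ?_⟩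
  · intro h0
    exact hx (funext fun v => congrFun h0 (some (.inl (v, true))))
  · ext (_ | ⟨a, _ | _⟩ | a)
    case some.inl.false | some.inl.true =>
      have := congrFun h a
      simp [Matrix.mulVec, dotProduct, SimpleGraph.adjMatrix_apply] at this
      simp [Matrix.mulVec, dotProduct, SimpleGraph.adjMatrix_apply, Fintype.sum_option,
        Fintype.sum_prod_type, ← this, ← Finset.sum_neg_distrib, neg_ite]
    all_goals
      simp [Matrix.mulVec, dotProduct, SimpleGraph.adjMatrix_apply, Fintype.sum_option,
        Fintype.sum_prod_type]

/-- Given a connected finite simple graph `G` with eigenvalue `α`, there is a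
connected finite simple graph `H` having both `0` and `α` as eigenvalues. -/
theorem exists_connected_graph_with_zero_and_alpha {n : ℕ}
    (G : SimpleGraph (Fin n)) [DecidableRel G.Adj]
    (hG : G.Connected) (α : ℝ)
    (hα : ((G.adjMatrix ℝ).charpoly).IsRoot α) :
    ∃ (m : ℕ) (H : SimpleGraph (Fin m)) (_ : DecidableRel H.Adj),
      H.Connected ∧ ((H.adjMatrix ℝ).charpoly).IsRoot 0 ∧
      ((H.adjMatrix ℝ).charpoly).IsRoot α := by
  classical
  -- Relabel the vertices of the cone by `Fin m`; this leaves the characteristic polynomial unchanged.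
  let e := Fintype.equivFin (Option (Fin n × Bool ⊕ Bool))
  have key : (((coneGraph G).comap e.symm).adjMatrix ℝ).charpoly =
      ((coneGraph G).adjMatrix ℝ).charpoly := by
    rw [← Matrix.charpoly_reindex e]
    congr 1
  refine ⟨_, (coneGraph G).comap e.symm, Classical.decRel _,
    (SimpleGraph.Iso.comap e.symm (coneGraph G)).connected_iff.2 (coneGraph_connected G), ?_, ?_⟩
  · convert coneGraph_isRoot_zero G using 1
    convert key
  · convert coneGraph_isRoot G α (by convert hα) using 1
    convert key
end

section
/- Let α₁, …, α_p be totally real algebraic integers. Then there exists a connected finite simple graph H such that each αᵢ (i = 1, …, p) is an eigenvalue of the adjacency matrix of H, i.e., {α₁, …, α_p} ⊆ Spec(H). (Theorem 2.4.) -/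
/-!
A rooted graph carrying a vector that satisfies the eigenvalue equation for `lam` away from the root
(where it has weight `1`) sends out the *message* `s`, the sum of the weights of the neighbours of
the root; see `IsMessage`. Messages contain `0`, are closed under addition (glue roots) and under
`s ↦ 1 / (lam - s)` for `s ≠ lam` (hang the graph from a new root). If `lam` is itself a message, the
equation also holds at the root and `lam` is an eigenvalue of a graph.

Assume `lam ≠ 0` is a totally real algebraic integer that is not a message. Put `t = lam ^ 2`, a
totally positive algebraic integer, and let `F` be the set of `x ∈ ℚ(t)` for which `lam * x` is a
message. This is an additive monoid closed under `x ↦ 1 / (t * (1 - x))` that does not contain `1`.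

* `F` is a group (`neg_mem_of_closed`). For `x ∈ F` the elements `m / (t * (1 - m * x))` tend to
  `-1 / (t * x)` in every real embedding. Hence the closed real cone generated by `F` contains `-1`
  and then `1 / (t - q)` for rational `q ≥ 0`. Letting `q` approach the conjugates of `t`, which are
  positive, one obtains all the basis vectors of the product of the real embeddings. Now
  `[ℚ(t) : ℚ] + 1` elements of `F` approximating multiples of the basis vectors and of `-1` are
  linearly dependent over `ℤ`, and the only possible relations have coefficients of one strict sign;
  such a relation exhibits the negative of any element taking part in it as an element of `F`.
* A group `F` with this closure property contains `1`, since `t` is an algebraic integer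
  (`false_of_one_notMem`): this is the continued fraction expansion of quotients of monic integer
  polynomials.

Finitely many eigenvalues are put into one graph by disjoint union, and connectedness is achieved by
the cone over two copies of it, on which antisymmetric eigenvectors survive.
-/


open Polynomial

/-! ### Messages of rooted graphs -/

open Classical in
/-- The number `x` if `P` holds and `0` otherwise. The classical decidability instance is hidden in
the definition, so that rewriting `P` never produces mismatched instances. -/
noncomputable def ind (P : Prop) (x : ℝ) : ℝ := if P then x else 0

@[simp] lemma ind_true (x : ℝ) : ind True x = x := by simp [ind]
@[simp] lemma ind_false (x : ℝ) : ind False x = 0 := by simp [ind]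
@[simp] lemma ind_zero (P : Prop) : ind P 0 = 0 := by simp [ind]
lemma ind_mul (P : Prop) (c x : ℝ) : ind P (c * x) = c * ind P x := by
  simp [ind, mul_ite]
lemma ind_neg (P : Prop) (x : ℝ) : ind P (-x) = - ind P x := by
  by_cases h : P <;> simp [h]

/-- `s` is a *message* at `lam`: there is a finite rooted graph, with root of weight `1`, on which the
eigenvalue equation for `lam` holds at every vertex except possibly the root, and the weights of
the neighbours of the root add up to `s`. The root is not a vertex of `G`: the graph `G` with
weights `v` is what remains after deleting it, and `N` is the set of its neighbours. -/
def IsMessage (lam s : ℝ) : Prop :=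
  ∃ (V : Type) (_ : Fintype V) (G : SimpleGraph V) (N : V → Prop) (v : V → ℝ),
    (∀ u, (∑ w, ind (G.Adj u w) (v w)) + ind (N u) 1 = lam * v u) ∧
    ∑ u, ind (N u) (v u) = s

lemma IsMessage.zero (lam : ℝ) : IsMessage lam 0 :=
  ⟨Empty, inferInstance, ⊥, fun _ => False, fun _ => 0, by simp, by simp⟩

/-- Two rooted graphs are glued along their roots. -/
lemma IsMessage.add {lam s s' : ℝ} (h : IsMessage lam s) (h' : IsMessage lam s') :
    IsMessage lam (s + s') := by
  obtain ⟨V, _, G, N, v, hv, hs⟩ := h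
  obtain ⟨V', _, G', N', v', hv', hs'⟩ := h'
  refine ⟨V ⊕ V', inferInstance, G.sum G', Sum.elim N N', Sum.elim v v', ?_, ?_⟩
  · rintro (u | u)
    · simpa using hv u
    · simpa using hv' u
  · simp [← hs, ← hs']

/-- The graph obtained from `G` by adding one vertex, `none`, adjacent to the vertices in `N`. -/
def rooted {V : Type} (G : SimpleGraph V) (N : V → Prop) : SimpleGraph (Option V) where
  Adj a b := match a, b with
    | none, none => False
    | none, some u => N u
    | some u, none => N u
    | some u, some w => G.Adj u w
  symm := ⟨by rintro (_ | u) (_ | w) h <;> first | exact h | exact SimpleGraph.Adj.symm h⟩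
  loopless := ⟨by rintro (_ | u) h; exacts [h, G.loopless.irrefl u h]⟩

/-- A new root is attached to the old one by an edge. Rescaling all weights by `c` turns the equation
at the old root into `c * s + 1 = lam * c`. -/
lemma IsMessage.inv {lam s : ℝ} (h : IsMessage lam s) (hne : s ≠ lam) :
    IsMessage lam (lam - s)⁻¹ := by
  obtain ⟨V, _, G, N, v, hv, hs⟩ := h
  have h0 : lam - s ≠ 0 := fun h => hne (by linarith)
  refine ⟨Option V, inferInstance, rooted G N, fun a => a = none,
    fun a => a.elim (lam - s)⁻¹ (fun u => (lam - s)⁻¹ * v u), ?_, ?_⟩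
  · rintro (_ | u)
    · simp only [rooted, Fintype.sum_option, Option.elim, ind_mul, ← Finset.mul_sum, hs, ind_true,
        ind_false]
      field_simp
      ring
    · have h1 : ind (N u) (lam - s)⁻¹ = (lam - s)⁻¹ * ind (N u) 1 := by rw [← ind_mul, mul_one]
      simp only [rooted, Fintype.sum_option, Option.elim, reduceCtorEq, ind_false, add_zero,
        ind_mul, ← Finset.mul_sum, h1]
      linear_combination (lam - s)⁻¹ * hv u
  · simp [Fintype.sum_option]

/-! ### Eigenvalues of graphs and cones -/

/-- All elements of `S` are eigenvalues of one finite graph, not necessarily connected, in terms of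
eigenvectors. -/
def HasEigenvalues (S : Set ℝ) : Prop :=
  ∃ (V : Type) (_ : Fintype V) (G : SimpleGraph V), ∀ lam ∈ S, ∃ v : V → ℝ, v ≠ 0 ∧
    ∀ u, ∑ w, ind (G.Adj u w) (v w) = lam * v u

/-- If `s = lam`, the eigenvalue equation holds at the root as well. -/
lemma IsMessage.hasEigenvalues {lam : ℝ} (h : IsMessage lam lam) : HasEigenvalues {lam} := by
  obtain ⟨V, _, G, N, v, hv, hs⟩ := h
  refine ⟨Option V, inferInstance, rooted G N, ?_⟩
  rintro _ rfl
  refine ⟨fun a => a.elim 1 v, fun h => by simpa using congrFun h none, ?_⟩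
  rintro (_ | u)
  · simpa [rooted, Fintype.sum_option] using hs
  · have := hv u
    simp only [rooted, Fintype.sum_option, Option.elim]
    linarith

lemma HasEigenvalues.union {S T : Set ℝ} (hS : HasEigenvalues S) (hT : HasEigenvalues T) :
    HasEigenvalues (S ∪ T) := by
  obtain ⟨V, _, G, hG⟩ := hS
  obtain ⟨V', _, G', hG'⟩ := hT
  refine ⟨V ⊕ V', inferInstance, G.sum G', ?_⟩
  rintro lam (h | h)
  · obtain ⟨v, hv0, hv⟩ := hG lam h
    refine ⟨Sum.elim v 0, fun h0 => hv0 ?_, ?_⟩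
    · funext u
      exact congrFun h0 (Sum.inl u)
    · rintro (u | u)
      · simpa using hv u
      · simp
  · obtain ⟨v, hv0, hv⟩ := hG' lam h
    refine ⟨Sum.elim 0 v, fun h0 => hv0 ?_, ?_⟩
    · funext u
      exact congrFun h0 (Sum.inr u)
    · rintro (u | u)
      · simp
      · simpa using hv u

lemma hasEigenvalues_of_finite {S : Set ℝ} (hS : S.Finite)
    (h : ∀ lam ∈ S, HasEigenvalues {lam}) : HasEigenvalues S := by
  induction S, hS using Set.Finite.induction_on with
  | empty => exact ⟨Empty, inferInstance, ⊥, by simp⟩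
  | insert _ _ ih =>
    rw [Set.insert_eq]
    exact (h _ (by simp)).union (ih fun l hl => h l (by simp [hl]))

/-- The cone over two disjoint copies of `G` is connected, and an eigenvector `v` of `G` gives the
eigenvector `v`, `-v` on the two copies and `0` at the apex. -/
lemma HasEigenvalues.exists_connected {S : Set ℝ} (h : HasEigenvalues S) :
    ∃ (m : ℕ) (H : SimpleGraph (Fin m)) (_ : DecidableRel H.Adj),
      H.Connected ∧ ∀ lam ∈ S, ((H.adjMatrix ℝ).charpoly).IsRoot lam := by
  classical
  obtain ⟨V, _, G, hG⟩ := h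
  let W := Option (V ⊕ V)
  let H : SimpleGraph W := rooted (G.sum G) (fun _ => True)
  have hconn : H.Connected := by
    have hr : ∀ a, H.Reachable none a := by
      rintro (_ | a)
      · exact SimpleGraph.Reachable.refl _
      · exact SimpleGraph.Adj.reachable (show H.Adj none (some a) from trivial)
    exact { preconnected := fun a b => (hr a).symm.trans (hr b), nonempty := ⟨none⟩ }
  let e : W ≃ Fin (Fintype.card W) := Fintype.equivFin W
  let iso : H ≃g H.map e.toEmbedding := SimpleGraph.Iso.map e H
  refine ⟨_, H.map e.toEmbedding, Classical.decRel _, iso.connected_iff.1 hconn,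
    fun lam hlam => ?_⟩
  obtain ⟨v, hv0, hv⟩ := hG lam hlam
  let x : W → ℝ := fun a => a.elim 0 (Sum.elim v (-v))
  have hx : ∀ a, (∑ b, ind (H.Adj a b) (x b)) = lam * x a := by
    rintro (_ | u | u)
    · simp [W, H, rooted, Fintype.sum_option, x]
    · simpa [W, H, rooted, Fintype.sum_option, x] using hv u
    · simpa [W, H, rooted, Fintype.sum_option, x, ind_neg] using hv u
  rw [IsRoot, Matrix.eval_charpoly, ← Matrix.exists_mulVec_eq_zero_iff]
  refine ⟨x ∘ e.symm, fun h0 => hv0 ?_, ?_⟩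
  · funext u
    simpa [x] using congrFun h0 (e (some (Sum.inl u)))
  · funext a
    obtain ⟨a, rfl⟩ := e.surjective a
    have h1 := hx a
    rw [Matrix.sub_mulVec, Pi.sub_apply, Pi.zero_apply, sub_eq_zero, Matrix.scalar_apply,
      Matrix.mulVec_diagonal, Function.comp_apply, e.symm_apply_apply, ← h1]
    rw [Matrix.mulVec, dotProduct, ← e.sum_comp]
    refine Finset.sum_congr rfl fun b _ => ?_
    have h2 : (H.map e.toEmbedding).Adj (e a) (e b) ↔ H.Adj a b := iso.map_adj_iff
    rw [SimpleGraph.adjMatrix_apply, Function.comp_apply, e.symm_apply_apply]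
    by_cases hab : H.Adj a b
    · rw [if_pos (h2.2 hab)]
      simp [hab]
    · rw [if_neg (mt h2.1 hab)]
      simp [hab]

/-! ### Groups from positivity -/

/-- The coefficients `h i` and `h₀` of a linear relation have a common strict sign as soon as every
`h j` is close to `h₀` relative to the total size of the relation. -/
lemma same_sign {ι : Type*} [Fintype ι] (h : ι → ℝ) (h₀ : ℝ) (hne : h₀ ≠ 0 ∨ ∃ i, h i ≠ 0)
    (hε : ∀ j, |h j - h₀| ≤ 1 / (2 * Fintype.card ι + 2) * (∑ i, |h i| + |h₀|)) :
    (0 < h₀ ∧ ∀ j, 0 < h j) ∨ (h₀ < 0 ∧ ∀ j, h j < 0) := by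
  set d : ℝ := (Fintype.card ι : ℝ) with hd
  set s := ∑ i, |h i| + |h₀| with hs
  set ε : ℝ := 1 / (2 * d + 2) with hεdef
  have hd0 : 0 ≤ d := by positivity
  have hε0 : 0 < ε := by positivity
  have hεd : ε * (d + 1) = 1 / 2 := by rw [hεdef]; field_simp
  have hS0 : 0 ≤ ∑ i, |h i| := Finset.sum_nonneg fun i _ => abs_nonneg _
  have hspos : 0 < s := by
    rcases hne with h0 | ⟨i, hi⟩
    · have := abs_pos.2 h0
      linarith
    · have h1 : |h i| ≤ ∑ i, |h i| :=
        Finset.single_le_sum (fun i _ => abs_nonneg (h i)) (Finset.mem_univ i)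
      have := abs_pos.2 hi
      have := abs_nonneg h₀
      linarith
  have hsum : ∑ i, |h i| ≤ d * (|h₀| + ε * s) := by
    have : ∀ i ∈ Finset.univ, |h i| ≤ |h₀| + ε * s := fun i _ => by
      have h1 := abs_sub_abs_le_abs_sub (h i) h₀
      have h2 := hε i
      linarith
    refine (Finset.sum_le_card_nsmul _ _ _ this).trans_eq ?_
    rw [nsmul_eq_mul, Finset.card_univ]
  have key : ε * s < |h₀| := by
    by_contra! hcon
    nlinarith
  rcases lt_or_ge 0 h₀ with h0 | h0
  · left
    refine ⟨h0, fun j => ?_⟩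
    have := abs_le.1 (hε j)
    rw [abs_of_pos h0] at key
    linarith
  · right
    rw [abs_of_nonpos h0] at key
    have h3 : 0 < ε * s := by positivity
    refine ⟨by linarith, fun j => ?_⟩
    have := abs_le.1 (hε j)
    linarith

section

open Filter Topology

/-- Let `t` have pairwise distinct positive images under at least `[K : ℚ]` real embeddings. A
submonoid closed under `x ↦ 1 / (t * (1 - x))` is then a group. The real cone generated by its image
under the embeddings is dense; this yields a nontrivial integral relation with coefficients of one
sign in which `x` occurs. With the convention `0⁻¹ = 0`, the closure hypothesis is harmless at
`x = 1`. -/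
lemma neg_mem_of_closed {K : Type*} [Field K] [CharZero K] [Module.Finite ℚ K]
    {ι : Type*} [Fintype ι] (σ : ι → K →+* ℝ)
    (hcard : Module.finrank ℚ K ≤ Fintype.card ι) (t : K) (hpos : ∀ i, 0 < σ i t)
    (hinj : Function.Injective fun i => σ i t) (F : AddSubmonoid K)
    (hF : ∀ x ∈ F, (t * (1 - x))⁻¹ ∈ F) (x : K) (hx : x ∈ F) : -x ∈ F := by
  classical
  rcases isEmpty_or_nonempty ι with hι | ⟨⟨i₀⟩⟩
  · have := Module.finrank_pos (R := ℚ) (M := K)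
    simp at hcard
    omega
  have ht0 : t ≠ 0 := by
    rintro rfl
    simpa using hpos i₀
  -- For `t = m` the claim is `0 ∈ F`.
  have hpole : ∀ m : ℕ, (t - m)⁻¹ ∈ F := by
    intro m
    have h2 : t⁻¹ ∈ F := by simpa using hF 0 F.zero_mem
    have h3 := hF _ (F.nsmul_mem h2 m)
    convert h3 using 2
    rw [nsmul_eq_mul]
    field_simp
  -- The real cone over `F`, inside the product of the real embeddings.
  let Y : Set (ι → ℝ) := {w | ∃ s : ℝ, 0 < s ∧ ∃ y ∈ F, w = fun i => s * σ i y}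
  have hsmul : ∀ c : ℝ, 0 < c → ∀ w ∈ closure Y, (fun i => c * w i) ∈ closure Y := by
    intro c hc w hw
    refine map_mem_closure (f := fun w : ι → ℝ => fun i => c * w i) (by fun_prop) hw ?_
    rintro _ ⟨s, hs, y, hy, rfl⟩
    exact ⟨c * s, by positivity, y, hy, by funext i; ring⟩
  have hlim1 : ∀ a : ℝ, Tendsto (fun m : ℕ => (m : ℝ) / (a - m)) atTop (𝓝 (-1)) := by
    intro a
    have h2 : Tendsto (fun m : ℕ => (a / (m : ℝ) - 1)⁻¹) atTop (𝓝 ((0 - 1)⁻¹)) :=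
      ((tendsto_const_div_atTop_nhds_zero_nat a).sub_const 1).inv₀ (by norm_num)
    norm_num at h2
    refine h2.congr' ?_
    filter_upwards [eventually_gt_atTop 0] with m hm
    have hm' : (m : ℝ) ≠ 0 := by positivity
    rw [div_sub_one hm', inv_div]
  have hinv0 : Tendsto (fun m : ℕ => 1 / (m : ℝ)) atTop (𝓝 0) :=
    tendsto_const_div_atTop_nhds_zero_nat 1
  have hlin : ∀ a k : ℕ, (∀ i, (k : ℝ) * σ i t - a ≠ 0) →
      (fun i => ((k : ℝ) * σ i t - a)⁻¹) ∈ closure Y := by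
    intro a k hak
    -- `m / (t - m)` tends to `-1`, so `y m / m` tends to `a / t - k`; applying `hF` to `y m` and
    -- multiplying by `m` gives `-1 / (t * (a / t - k)) = 1 / (k * t - a)` in the limit.
    let y : ℕ → K := fun m => m • (a • t⁻¹ + (k * m) • (t - m)⁻¹)
    have hy : ∀ m, (t * (1 - y m))⁻¹ ∈ F := by
      intro m
      have h2 : t⁻¹ ∈ F := by simpa using hpole 0
      exact hF _ (F.nsmul_mem (F.add_mem (F.nsmul_mem h2 _) (F.nsmul_mem (hpole m) _)) _)
    refine mem_closure_of_tendsto (b := atTop)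
      (f := fun m : ℕ => fun i => (m : ℝ) * σ i ((t * (1 - y m))⁻¹)) ?_ ?_
    · rw [tendsto_pi_nhds]
      intro i
      have hti := (hpos i).ne'
      have h2 : Tendsto (fun m : ℕ => (σ i t * (1 / (m : ℝ) - a / σ i t
          - k * ((m : ℝ) / (σ i t - m))))⁻¹) atTop
          (𝓝 ((σ i t * (0 - a / σ i t - k * (-1)))⁻¹)) := by
        refine Tendsto.inv₀ (((hinv0.sub_const _).sub ((hlim1 _).const_mul _)).const_mul _) ?_
        convert hak i using 1
        field_simp
        ring
      have h3 : σ i t * (0 - a / σ i t - k * (-1)) = k * σ i t - a := by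
        field_simp
        ring
      rw [h3] at h2
      refine h2.congr' ?_
      filter_upwards [eventually_gt_atTop 0] with m hm
      have hm' : (m : ℝ) ≠ 0 := by positivity
      simp only [y, map_inv₀, map_mul, map_sub, map_one, map_add, map_natCast,
        nsmul_eq_mul, Nat.cast_mul, map_mul]
      rw [← inv_inv (m : ℝ), ← mul_inv, inv_inv]
      congr 1
      field_simp
      ring
    · filter_upwards [eventually_gt_atTop 0] with m hm
      exact ⟨m, by positivity, _, hy m, rfl⟩
  have hbasis : ∀ i, (fun j => if j = i then (1 : ℝ) else 0) ∈ closure Y := by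
    intro i
    -- As `q` increases to `σ i t`, the vector `(σ i t - q) / (t - q)` tends to the `i`-th basis vector.
    -- Positivity of `σ i t` lets `q = a / k` run through positive rationals.
    obtain ⟨u, -, hlt, hu⟩ := Real.exists_seq_rat_strictMono_tendsto (σ i t)
    rw [← closure_closure]
    refine mem_closure_of_tendsto (b := atTop)
      (f := fun n : ℕ => fun j => (σ i t - u n) * (σ j t - u n)⁻¹) ?_ ?_
    · rw [tendsto_pi_nhds]
      intro j
      split_ifs with hji
      · subst hji
        refine tendsto_const_nhds.congr fun n => ?_
        rw [mul_inv_cancel₀ (sub_ne_zero.2 (hlt n).ne')]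
      · have hne : σ j t - σ i t ≠ 0 := sub_ne_zero.2 fun h => hji (hinj h)
        have := (hu.const_sub (σ i t)).mul ((hu.const_sub (σ j t)).inv₀ hne)
        simpa using this
    · have hev : ∀ᶠ n in atTop, ∀ j, σ j t - u n ≠ 0 := by
        rw [eventually_all]
        intro j
        by_cases hji : j = i
        · subst hji
          exact Eventually.of_forall fun n => sub_ne_zero.2 (hlt n).ne'
        · have hne : σ j t - σ i t ≠ 0 := sub_ne_zero.2 fun h => hji (hinj h)
          exact (hu.const_sub (σ j t)).eventually_ne hne
      filter_upwards [hev, hu.eventually_const_lt (hpos i)] with n hn hn0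
      have hq0 : (0 : ℚ) < u n := by exact_mod_cast hn0
      have hden : (0 : ℝ) < (u n).den := by exact_mod_cast (u n).den_pos
      have hnum : ((u n : ℚ) : ℝ) * (u n).den = ((u n).num.toNat : ℝ) := by
        have h2 : (((u n).num.toNat : ℤ)) = (u n).num :=
          Int.toNat_of_nonneg (Rat.num_nonneg.2 hq0.le)
        have h3 : (u n) * (u n).den = (u n).num := Rat.mul_den_eq_num _
        have h4 : ((u n).num.toNat : ℝ) = ((u n).num : ℝ) := by exact_mod_cast congrArg (Int.cast (R := ℝ)) h2
        rw [h4]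
        exact_mod_cast h3
      have heq : ∀ j, ((u n).den : ℝ) * σ j t - (u n).num.toNat = (u n).den * (σ j t - u n) := by
        intro j
        rw [← hnum]
        ring
      have h5 := hlin (u n).num.toNat (u n).den (fun j => by
        rw [heq]
        exact mul_ne_zero hden.ne' (hn j))
      have h6 := hsmul ((σ i t - u n) * (u n).den)
        (mul_pos (sub_pos.2 (hlt n)) hden) _ h5
      convert h6 using 2 with j
      rw [heq]
      have := hn j
      field_simp
  -- Elements of the cone close to the basis vectors, and one close to `(-1, …, -1)` that involves `x`.
  set ε : ℝ := 1 / (2 * Fintype.card ι + 2) with hε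
  have hεpos : 0 < ε := by positivity
  have hw : ∀ i, ∃ s : ℝ, 0 < s ∧ ∃ y ∈ F, ∀ j, |s * σ j y - if j = i then 1 else 0| < ε := by
    intro i
    obtain ⟨_, ⟨s, hs, y, hy, rfl⟩, hd⟩ := Metric.mem_closure_iff.1 (hbasis i) ε hεpos
    refine ⟨s, hs, y, hy, fun j => ?_⟩
    have := (dist_pi_lt_iff hεpos).1 hd j
    rwa [dist_comm, Real.dist_eq] at this
  choose s hs w hwF hwε using hw
  obtain ⟨m, hm0, hm⟩ : ∃ m : ℕ, 0 < m ∧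
      ∀ j, |1 / (m : ℝ) * σ j ((m * m) • (t - m)⁻¹ + x) + 1| < ε := by
    have hev : ∀ j, ∀ᶠ m : ℕ in atTop,
        |1 / (m : ℝ) * σ j ((m * m) • (t - m)⁻¹ + x) + 1| < ε := by
      intro j
      have h2 : Tendsto (fun m : ℕ => |(m : ℝ) / (σ j t - m) + 1 / (m : ℝ) * σ j x + 1|) atTop
          (𝓝 |-1 + 0 * σ j x + 1|) :=
        (((hlim1 _).add (hinv0.mul_const _)).add_const _).abs
      have h3 : |-1 + 0 * σ j x + 1| < ε := by simpa using hεpos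
      filter_upwards [h2.eventually_lt_const h3, eventually_gt_atTop 0] with m hm hm0
      have hm' : (m : ℝ) ≠ 0 := by positivity
      have h4 : 1 / (m : ℝ) * σ j ((m * m) • (t - m)⁻¹ + x)
          = (m : ℝ) / (σ j t - m) + 1 / (m : ℝ) * σ j x := by
        simp only [map_add, nsmul_eq_mul, map_mul, map_inv₀, map_sub, map_natCast, Nat.cast_mul]
        field_simp
      rwa [h4]
    obtain ⟨m, h2, h3⟩ := ((eventually_all.2 hev).and (eventually_gt_atTop 0)).exists
    exact ⟨m, h3, h2⟩
  set w₀ := (m * m) • (t - m)⁻¹ + x with hw₀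
  -- These are more vectors than the dimension of `K`, hence satisfy an integral relation.
  let W : Option ι → K := fun o => o.elim w₀ w
  have hdep : ¬ LinearIndependent ℤ W := by
    rw [LinearIndependent.iff_fractionRing ℤ ℚ]
    intro h
    have := h.fintype_card_le_finrank
    rw [Fintype.card_option] at this
    omega
  obtain ⟨g, hg, hgne⟩ := Fintype.not_linearIndependent_iff.1 hdep
  rw [Fintype.sum_option] at hg
  simp only [W, Option.elim] at hg
  have hm' : (0 : ℝ) < m := by exact_mod_cast hm0
  have hsign := same_sign (fun i => (g (some i) : ℝ) / s i) ((g none : ℝ) * m) (by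
    obtain ⟨_ | i, hi⟩ := hgne
    · left
      have : (g none : ℝ) ≠ 0 := by exact_mod_cast hi
      positivity
    · right
      refine ⟨i, div_ne_zero (by exact_mod_cast hi) (hs i).ne'⟩) (by
    intro j
    have h2 := congrArg (σ j) hg
    simp only [map_add, map_sum, map_zero, zsmul_eq_mul, map_mul, map_intCast] at h2
    have h3 : (g (some j) : ℝ) / s j - g none * m =
        -(∑ i, (g (some i) : ℝ) / s i * (s i * σ j (w i) - if j = i then 1 else 0)
          + g none * m * (1 / (m : ℝ) * σ j w₀ + 1)) := by
      have h4 : ∀ i, (g (some i) : ℝ) / s i * (s i * σ j (w i) - if j = i then 1 else 0)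
          = g (some i) * σ j (w i) - if j = i then (g (some i) : ℝ) / s i else 0 := by
        intro i
        have := (hs i).ne'
        split_ifs
        · field_simp
        · rw [sub_zero, sub_zero]
          field_simp
      simp only [h4, Finset.sum_sub_distrib, Finset.sum_ite_eq, Finset.mem_univ, if_true]
      have h5 : (g none : ℝ) * m * (1 / (m : ℝ) * σ j w₀ + 1) = g none * σ j w₀ + g none * m := by
        field_simp
      rw [h5]
      linarith
    rw [h3, abs_neg, ← hε, mul_add ε, Finset.mul_sum]
    refine (abs_add_le _ _).trans (add_le_add ((Finset.abs_sum_le_sum_abs _ _).trans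
      (Finset.sum_le_sum fun i _ => ?_)) ?_)
    · rw [abs_mul, mul_comm]
      exact mul_le_mul_of_nonneg_right (hwε i j).le (abs_nonneg _)
    · rw [abs_mul, mul_comm]
      exact mul_le_mul_of_nonneg_right (hm j).le (abs_nonneg _))
  have hfin : ∀ n : Option ι → ℕ, 0 < n none →
      n none • w₀ + ∑ i, n (some i) • w i = 0 → -x ∈ F := by
    intro n hn hrel
    obtain ⟨k, hk⟩ := Nat.exists_eq_succ_of_ne_zero hn.ne'
    have h2 : -x = k • x + (n none • (m * m) • (t - m)⁻¹ + ∑ i, n (some i) • w i) := by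
      have h3 : n none • w₀ = n none • (m * m) • (t - m)⁻¹ + (k • x + x) := by
        rw [hw₀, smul_add, ← succ_nsmul, hk]
      rw [h3] at hrel
      linear_combination -hrel
    rw [h2]
    exact F.add_mem (F.nsmul_mem hx _) (F.add_mem (F.nsmul_mem (F.nsmul_mem (hpole m) _) _)
      (F.sum_mem fun i _ => F.nsmul_mem (hwF i) _))
  rcases hsign with ⟨h0, hj⟩ | ⟨h0, hj⟩
  · have hg0 : 0 < g none := by
      have := pos_of_mul_pos_left h0 hm'.le
      exact_mod_cast this
    have hgj : ∀ j, 0 < g (some j) := fun j => by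
      have := (div_pos_iff_of_pos_right (hs j)).1 (hj j)
      exact_mod_cast this
    refine hfin (fun o => (g o).toNat) (by simpa using hg0) ?_
    rw [← hg]
    simp only [← natCast_zsmul, Int.toNat_of_nonneg hg0.le,
      Int.toNat_of_nonneg (hgj _).le]
  · have hg0 : g none < 0 := by
      have := neg_of_mul_neg_left h0 hm'.le
      exact_mod_cast this
    have hgj : ∀ j, g (some j) < 0 := fun j => by
      have := hj j
      rw [div_lt_iff₀ (hs j), zero_mul] at this
      exact_mod_cast this
    refine hfin (fun o => (-g o).toNat) (by simpa using hg0) ?_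
    rw [← neg_zero, ← hg]
    simp only [← natCast_zsmul, Int.toNat_of_nonneg (neg_nonneg.2 hg0.le),
      Int.toNat_of_nonneg (neg_nonneg.2 (hgj _).le), neg_smul, Finset.sum_neg_distrib]
    ring

end

/-! ### Continued fractions -/

/-- In an additive group `F` closed under `x ↦ 1 / (t * (1 - x))`, with `t` an algebraic integer, the
element `1` must occur. The group `A = t * F` contains `1` and is closed under `r ↦ 1 / (t - r)`, and
`1 ∈ F` means `t ∈ A`. The Euclidean algorithm for monic integer polynomials then shows that `A`
contains `f(t) / g(t)` whenever `g` is monic and `deg f < deg g < d`, where `d` is the degree of `t`.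
Dividing a monic polynomial of degree `d` that vanishes at `t` by `X ^ (d - 1)` puts `t` in `A`. -/
theorem false_of_one_notMem {K : Type*} [Field K] (F : AddSubgroup K) (t : K) (ht0 : t ≠ 0)
    (ht : IsIntegral ℤ t) (hF : ∀ x ∈ F, (t * (1 - x))⁻¹ ∈ F) (h1 : (1 : K) ∉ F) : False := by
  classical
  let A : AddSubgroup K := F.comap (AddMonoidHom.mulLeft t⁻¹)
  have memA : ∀ r, r ∈ A ↔ t⁻¹ * r ∈ F := fun r => Iff.rfl
  have htA : t ∉ A := by rw [memA, inv_mul_cancel₀ ht0]; exact h1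
  have ne : ∀ r ∈ A, t - r ≠ 0 := fun r hr h => htA (by rwa [sub_eq_zero.1 h])
  have step : ∀ r ∈ A, t / (t - r) ∈ A := by
    intro r hr
    have h2 := hF _ hr
    rw [memA]
    have := ne r hr
    convert h2 using 1
    have h3 : t * (1 - t⁻¹ * r) = t - r := by field_simp
    change _ = (t * (1 - t⁻¹ * r))⁻¹
    rw [h3]
    field_simp
  have oneA : (1 : K) ∈ A := by simpa [ht0] using step 0 A.zero_mem
  have inv : ∀ r ∈ A, (t - r)⁻¹ ∈ A := by
    intro r hr
    have hr1 := A.sub_mem hr oneA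
    have hz := step _ hr1
    have e1 := ne r hr
    have e2 := ne _ hr1
    -- With `z = t / (t - (r - 1))` one has `t / (t - z) - 1 = 1 / (t - r)`.
    have hz' := A.sub_mem (step _ hz) oneA
    have e3 := ne _ hz
    convert hz' using 1
    have h3 : t - t / (t - (r - 1)) = t * (t - r) / (t - (r - 1)) := by
      field_simp; ring
    rw [h3]
    field_simp
    ring
  have intA : ∀ n : ℤ, (n : K) ∈ A := fun n => by simpa using A.zsmul_mem oneA n
  have hex : ∃ d, ∃ p : ℤ[X], p.Monic ∧ aeval t p = 0 ∧ p.natDegree = d := by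
    obtain ⟨p, hp, h⟩ := ht
    exact ⟨_, p, hp, h, rfl⟩
  obtain ⟨p, hp, hpt, hpd⟩ := Nat.find_spec hex
  set d := Nat.find hex with hd
  have hmin : ∀ g : ℤ[X], g.Monic → g.natDegree < d → aeval t g ≠ 0 := fun g hg hgd h0 =>
    Nat.find_min hex hgd ⟨g, hg, h0, rfl⟩
  have hdiv : ∀ g f : ℤ[X], g.Monic → f.Monic → g.natDegree = f.natDegree + 1 →
      ∃ n : ℤ, g = f * (X + C n) + g %ₘ f := by
    intro g f hg hf hgf
    have hm : (g /ₘ f).Monic := by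
      rw [Monic, leadingCoeff_divByMonic_of_monic hf]
      · exact hg
      · rw [degree_eq_natDegree hf.ne_zero, degree_eq_natDegree hg.ne_zero]
        exact_mod_cast (by omega : f.natDegree ≤ g.natDegree)
    have hn : (g /ₘ f).natDegree = 1 := by rw [natDegree_divByMonic _ hf]; omega
    refine ⟨(g /ₘ f).coeff 0, ?_⟩
    rw [← hm.eq_X_add_C hn, add_comm, modByMonic_add_div]
  have main : ∀ k, k < d → ∀ g : ℤ[X], g.Monic → g.natDegree = k → ∀ f : ℤ[X],
      f.degree < k → aeval t f / aeval t g ∈ A := by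
    intro k
    induction k with
    | zero =>
      intro _ g _ _ f hf
      have : f = 0 := by simpa using hf
      simp [this]
    | succ k ih =>
      intro hk g hg hgk
      have monic : ∀ f : ℤ[X], f.Monic → f.natDegree = k → aeval t f / aeval t g ∈ A := by
        intro f hf hfk
        -- From `g = f * (X + n) + r` one gets `f / g = 1 / (t + n + r / f)` at `t`.
        obtain ⟨n, hn⟩ := hdiv g f hg hf (by omega)
        have h0 := ih (by omega) f hf hfk (g %ₘ f) (by
          have := degree_modByMonic_lt g hf
          rwa [degree_eq_natDegree hf.ne_zero, hfk] at this)
        have h1 := inv _ (A.neg_mem (A.add_mem (intA n) h0))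
        have hf0 := hmin f hf (by omega)
        convert h1 using 1
        have h2 : aeval t g = aeval t f * (t + n) + aeval t (g %ₘ f) := by
          conv_lhs => rw [hn]
          simp
        rw [h2]
        have h3 : t - -(n + aeval t (g %ₘ f) / aeval t f) =
          (aeval t f * (t + n) + aeval t (g %ₘ f)) / aeval t f := by field_simp; ring
        rw [h3, inv_div]
      intro f hf
      have hXk := monic (X ^ k) (monic_X_pow k) (natDegree_X_pow k)
      -- `f` is an integral combination of the monic polynomials `X ^ k` and `X ^ k + f₀`.
      set f₀ := f - C (f.coeff k) * X ^ k with hf₀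
      have hdeg : f₀.degree < k := by
        rw [degree_lt_iff_coeff_zero] at hf ⊢
        intro m hm
        rcases hm.eq_or_lt with rfl | hlt
        · simp [hf₀]
        · have h5 : m ≠ k := by omega
          simp [hf₀, hf m (by exact_mod_cast hlt), coeff_X_pow, h5]
      have h0 := monic (X ^ k + f₀) (monic_X_pow_add hdeg) (by
        rw [natDegree_add_eq_left_of_degree_lt (by rwa [degree_X_pow]), natDegree_X_pow])
      have h3 := A.add_mem (A.zsmul_mem hXk (f.coeff k - 1)) h0
      convert h3 using 1
      have h4 : f = C (f.coeff k - 1) * X ^ k + (X ^ k + f₀) := by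
        rw [hf₀, C_sub]
        simp only [map_one]
        ring
      conv_lhs => rw [h4]
      simp only [map_add, map_mul, map_sub, zsmul_eq_mul, map_one, map_pow, aeval_X,
        Int.cast_sub, Int.cast_one, eq_intCast, map_intCast]
      ring
  have hd0 : d ≠ 0 := by
    intro h0
    rw [h0] at hpd
    rw [hp.natDegree_eq_zero.1 hpd] at hpt
    simp at hpt
  obtain ⟨k, hk⟩ := Nat.exists_eq_succ_of_ne_zero hd0
  obtain ⟨n, hn⟩ := hdiv p (X ^ k) hp (monic_X_pow k) (by rw [natDegree_X_pow, hpd, hk])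
  have hr := main k (by omega) (X ^ k) (monic_X_pow k) (natDegree_X_pow k) (p %ₘ X ^ k) (by
    simpa using degree_modByMonic_lt p (monic_X_pow (R := ℤ) k))
  apply htA
  convert A.neg_mem (A.add_mem (intA n) hr) using 1
  have hx : aeval t (X ^ k : ℤ[X]) ≠ 0 :=
    hmin _ (monic_X_pow k) (by rw [natDegree_X_pow]; omega)
  rw [hn] at hpt
  simp only [map_add, map_mul, aeval_X, eq_intCast, map_intCast] at hpt
  have h6 : t = -n - aeval t (p %ₘ X ^ k) / aeval t (X ^ k : ℤ[X]) := by
    field_simp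
    linear_combination hpt
  rw [neg_add, ← sub_eq_add_neg]
  exact h6

/-! ### Totally real algebraic integers -/

section

open IntermediateField

/-- The conjugates of `lam ^ 2` are squares of conjugates of `lam`, because complex embeddings extend
from `ℚ(lam ^ 2)` to `ℚ(lam)`. -/
lemma exists_pos_eq_embedding_gen {lam : ℝ} (hlam : IsTotallyRealAlgebraicInteger lam) (h0 : lam ≠ 0)
    (φ : ℚ⟮lam ^ 2⟯ →+* ℂ) :
    ∃ r : ℝ, 0 < r ∧ φ (AdjoinSimple.gen ℚ (lam ^ 2)) = r := by
  obtain ⟨p, hp, hpl, hreal⟩ := hlam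
  have hint : IsIntegral ℚ lam := by
    have : IsIntegral ℤ lam := ⟨p, hp, hpl⟩
    exact this.tower_top
  have hle : ℚ⟮lam ^ 2⟯ ≤ ℚ⟮lam⟯ := by
    rw [adjoin_simple_le_iff]
    exact pow_mem (mem_adjoin_simple_self ℚ lam) 2
  obtain ⟨ψ, hψ⟩ := exists_algHom_adjoin_of_splits (S := {lam}) (K := ℂ)
    (fun s hs => by
      rw [Set.mem_singleton_iff] at hs
      subst hs
      exact ⟨hint, IsAlgClosed.splits _⟩) φ.toRatAlgHom hle
  set z := ψ (AdjoinSimple.gen ℚ lam) with hz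
  have hzp : aeval z p = 0 := by
    have h1 : aeval (AdjoinSimple.gen ℚ lam) p = 0 := by
      apply (algebraMap ℚ⟮lam⟯ ℝ).injective
      rw [map_zero, ← aeval_algebraMap_apply, AdjoinSimple.algebraMap_gen, hpl]
    have h2 := aeval_algHom_apply (ψ.restrictScalars ℤ) (AdjoinSimple.gen ℚ lam) p
    rw [h1, map_zero] at h2
    exact h2
  have hz0 : z ≠ 0 := by
    rw [hz, _root_.map_ne_zero]
    intro h
    exact h0 (by simpa using congrArg (algebraMap ℚ⟮lam⟯ ℝ) h)
  have hzre : z = (z.re : ℂ) := Complex.ext rfl (by simp [hreal z hzp])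
  have hgen : φ (AdjoinSimple.gen ℚ (lam ^ 2)) = z ^ 2 := by
    have h1 := DFunLike.congr_fun hψ (AdjoinSimple.gen ℚ (lam ^ 2))
    rw [hz, ← map_pow]
    refine h1.symm.trans ?_
    rw [AlgHom.comp_apply]
    congr 1
  refine ⟨z.re ^ 2, ?_, ?_⟩
  · have : z.re ≠ 0 := fun h => hz0 (by rw [hzre, h]; simp)
    positivity
  · rw [hgen, hzre]
    simp

lemma ringHom_ext_gen {a : ℝ} {R : Type*} [Field R] [Algebra ℚ R] {φ ψ : ℚ⟮a⟯ →+* R}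
    (h : φ (AdjoinSimple.gen ℚ a) = ψ (AdjoinSimple.gen ℚ a)) : φ = ψ := by
  have : φ.toRatAlgHom = ψ.toRatAlgHom := by
    apply algHom_ext_of_eq_adjoin ℚ (S := ℚ⟮a⟯) (s := {a}) rfl
    intro x hx
    rw [Set.mem_singleton_iff] at hx
    subst hx
    exact h
  ext x
  exact DFunLike.congr_fun this x

/-- Every totally real algebraic integer is a message at itself. -/
lemma isMessage_self {lam : ℝ} (hlam : IsTotallyRealAlgebraicInteger lam) :
    IsMessage lam lam := by
  by_cases h0 : lam = 0
  · rw [h0]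
    exact .zero 0
  by_contra hcon
  have hint : IsIntegral ℤ (lam ^ 2) := by
    obtain ⟨p, hp, hpl, -⟩ := hlam
    exact IsIntegral.pow ⟨p, hp, hpl⟩ 2
  let K := ℚ⟮lam ^ 2⟯
  let t : K := AdjoinSimple.gen ℚ (lam ^ 2)
  have htval : (t : ℝ) = lam ^ 2 := AdjoinSimple.coe_gen ℚ (lam ^ 2)
  have : FiniteDimensional ℚ K := adjoin.finiteDimensional hint.tower_top
  have : NumberField K := ⟨⟩
  -- Messages at `lam` that lie in `lam * ℚ(lam ^ 2)`, divided by `lam`.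
  let F : AddSubmonoid K :=
    { carrier := {x | IsMessage lam (lam * x)}
      zero_mem' := by simpa using IsMessage.zero lam
      add_mem' := fun {a b} ha hb => by
        change IsMessage lam (lam * ((a + b : K) : ℝ))
        push_cast
        rw [mul_add]
        exact IsMessage.add ha hb }
  have hFone : (1 : K) ∉ F := fun h => hcon (by simpa [F] using h)
  have hF : ∀ x ∈ F, (t * (1 - x))⁻¹ ∈ F := by
    intro x hx
    have hne : lam * (x : ℝ) ≠ lam := fun h => hcon (by
      have : IsMessage lam (lam * x) := hx
      rwa [h] at this)
    have h2 := IsMessage.inv hx hne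
    change IsMessage lam (lam * (((t * (1 - x))⁻¹ : K) : ℝ))
    convert h2 using 1
    push_cast
    rw [htval]
    have h3 : (1 - (x : ℝ)) ≠ 0 := fun h => hne (by linear_combination -lam * h)
    have h4 : lam - lam * x = lam * (1 - x) := by ring
    rw [h4]
    field_simp
  have hreal : ∀ φ : K →+* ℂ, NumberField.ComplexEmbedding.IsReal φ := by
    intro φ
    rw [NumberField.ComplexEmbedding.isReal_iff]
    obtain ⟨r, -, hr⟩ := exists_pos_eq_embedding_gen hlam h0 φ
    apply ringHom_ext_gen
    rw [NumberField.ComplexEmbedding.conjugate_coe_eq, hr, Complex.conj_ofReal]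
  have hcoe : ∀ φ : K →+* ℂ, ((hreal φ).embedding t : ℂ) = φ t := fun φ =>
    (hreal φ).coe_embedding_apply t
  have hneg := neg_mem_of_closed (fun φ : K →+* ℂ => (hreal φ).embedding)
    (NumberField.Embeddings.card K ℂ).ge t (fun φ => by
      obtain ⟨r, hr0, hr⟩ := exists_pos_eq_embedding_gen hlam h0 φ
      have h2 := (hcoe φ).trans hr
      rw [Complex.ofReal_inj.1 h2]
      exact hr0) (fun φ ψ h => ringHom_ext_gen (by
      have h2 := congrArg (Complex.ofReal) h
      simp only [hcoe] at h2
      exact h2)) F hF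
  refine false_of_one_notMem { F with neg_mem' := fun {x} hx => hneg x hx } t ?_ ?_ hF hFone
  · intro h
    rw [h] at htval
    exact h0 (by simpa using htval.symm)
  · rw [← isIntegral_algebraMap_iff (algebraMap K ℝ).injective]
    exact hint

end

/-- Given totally real algebraic integers `α₁, …, α_p`, there is a connected finite
simple graph `H` whose spectrum contains all of them. -/
theorem exists_connected_graph_containing_totallyReal_spectrum
    (p : ℕ) (α : Fin p → ℝ) (hα : ∀ i, IsTotallyRealAlgebraicInteger (α i)) :
    ∃ (m : ℕ) (H : SimpleGraph (Fin m)) (_ : DecidableRel H.Adj),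
      H.Connected ∧ ∀ i, ((H.adjMatrix ℝ).charpoly).IsRoot (α i) := by
  obtain ⟨m, H, inst, hconn, hroot⟩ := (hasEigenvalues_of_finite (Set.finite_range α) (by
    rintro _ ⟨i, rfl⟩
    exact (isMessage_self (hα i)).hasEigenvalues)).exists_connected
  exact ⟨m, H, inst, hconn, fun i => hroot _ ⟨i, rfl⟩⟩
end

section
/- Let G, H₁, …, H_p, H₁′, …, H_p′ be pairwise disjoint finite simple graphs such that Hᵢ and Hᵢ′ are isomorphic for each i = 1, …, p. Let x₁, …, x_p be (not necessarily distinct) vertices of G, let vᵢ be a vertex of Hᵢ, and let vᵢ′ be the vertex of Hᵢ′ corresponding to vᵢ under the isomorphism. Let G ∘ [H₁, …, H_p] be the graph obtained from the disjoint union of G, H₁, …, H_p, H₁′, …, H_p′ by adding, for each i, the two new edges xᵢvᵢ and xᵢvᵢ′. Then every eigenvalue of the adjacency matrix of the disjoint union H₁ ∪ ⋯ ∪ H_p is an eigenvalue of the adjacency matrix of G ∘ [H₁, …, H_p]; in fact the characteristic polynomial of the adjacency matrix of H₁ ∪ ⋯ ∪ H_p divides that of G ∘ [H₁, …, H_p].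 (Lemma 3.2.) -/
/-!
Order the vertices of `G ∘ [H₁, …, H_p]` as those of `G`, of `⋃ Hᵢ` and of `⋃ Hᵢ'`, and identify
the last two parts by the isomorphisms. With `A`, `M` the adjacency matrices of `G`, `⋃ Hᵢ`, and
`B` the incidence pattern of the new edges, the adjacency matrix is
`[A B B; Bᵀ M 0; Bᵀ 0 M]` (`attachGraph_adjMatrix_reindex`). Subtracting the second block row from
the third, and then adding the third block column to the second, is a similarity; it produces
`[A 2B B; Bᵀ M 0; 0 0 M]`, which is block triangular with `M` as a diagonal block
(`charpoly_dvd_charpoly_fromBlocks`, `charpoly_dvd_charpoly_twin`). In terms of eigenvectors: an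
eigenvector `f` of `M` yields the eigenvector `(0, f, -f)`.
-/

open Polynomial

/-- The disjoint union `H₁ ∪ ⋯ ∪ H_p` of a family of finite simple graphs, as a
graph on the sigma type of the vertex sets. -/
def disjUnionGraph {p : ℕ} {V : Fin p → Type*} (H : ∀ i, SimpleGraph (V i)) :
    SimpleGraph (Σ i, V i) :=
  SimpleGraph.fromRel fun a b => ∃ h : a.1 = b.1, (H b.1).Adj (h ▸ a.2) b.2

/-- The graph `G ∘ [H₁, …, H_p]`: starting from the disjoint union of `G`, the `Hᵢ`
and the (isomorphic) copies `Hᵢ'`, for each `i` the vertex `xᵢ` of `G` is joined by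
new edges to the vertex `vᵢ` of `Hᵢ` and to the corresponding vertex `vᵢ'` of `Hᵢ'`. -/
def attachGraph {VG : Type*} {p : ℕ} {V V' : Fin p → Type*}
    (G : SimpleGraph VG) (H : ∀ i, SimpleGraph (V i)) (H' : ∀ i, SimpleGraph (V' i))
    (x : Fin p → VG) (v : ∀ i, V i) (v' : ∀ i, V' i) :
    SimpleGraph (VG ⊕ ((Σ i, V i) ⊕ (Σ i, V' i))) :=
  SimpleGraph.fromRel fun a b =>
    match a, b with
    | Sum.inl a, Sum.inl b => G.Adj a b
    | Sum.inr (Sum.inl ⟨i, u⟩), Sum.inr (Sum.inl ⟨j, w⟩) => ∃ h : i = j, (H j).Adj (h ▸ u) w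
    | Sum.inr (Sum.inr ⟨i, u⟩), Sum.inr (Sum.inr ⟨j, w⟩) => ∃ h : i = j, (H' j).Adj (h ▸ u) w
    | Sum.inl a, Sum.inr (Sum.inl ⟨i, u⟩) => a = x i ∧ u = v i
    | Sum.inl a, Sum.inr (Sum.inr ⟨i, u⟩) => a = x i ∧ u = v' i
    | _, _ => False

/-- If `Z + M J = J X` and `J Y = 0`, then conjugation by `[1 0; -J 1]` turns `[X Y; Z M]` into a
block upper triangular matrix whose last diagonal block is `M`. -/
lemma charpoly_dvd_charpoly_fromBlocks {R m n : Type*} [CommRing R]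
    [Fintype m] [DecidableEq m] [Fintype n] [DecidableEq n]
    (X : Matrix m m R) (Y : Matrix m n R) (Z : Matrix n m R) (M : Matrix n n R)
    (J : Matrix n m R) (hZ : Z + M * J = J * X) (hY : J * Y = 0) :
    M.charpoly ∣ (Matrix.fromBlocks X Y Z M).charpoly := by
  have hQP : Matrix.fromBlocks (1 : Matrix m m R) 0 J (1 : Matrix n n R) *
      Matrix.fromBlocks 1 0 (-J) 1 = 1 := by
    simp [Matrix.fromBlocks_multiply]
  have hconj : (Matrix.fromBlocks 1 0 (-J) 1 * Matrix.fromBlocks X Y Z M) *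
      Matrix.fromBlocks 1 0 J 1 = Matrix.fromBlocks (X + Y * J) Y 0 M := by
    have h : -(J * X) + Z + M * J = 0 := by rw [add_assoc, hZ, neg_add_cancel]
    simp [Matrix.fromBlocks_multiply, hY, h]
  have hchar : (Matrix.fromBlocks X Y Z M).charpoly =
      (Matrix.fromBlocks (X + Y * J) Y 0 M).charpoly := by
    rw [← hconj, Matrix.charpoly_mul_comm, ← mul_assoc, hQP, one_mul]
  rw [hchar, Matrix.charpoly_fromBlocks_zero₂₁]
  exact dvd_mul_left _ _

/-- The case of the block matrix `[A B B; C M 0; C 0 M]`, whose last two blocks are twins. -/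
lemma charpoly_dvd_charpoly_twin {R m n : Type*} [CommRing R]
    [Fintype m] [DecidableEq m] [Fintype n] [DecidableEq n]
    (A : Matrix m m R) (B : Matrix m n R) (C : Matrix n m R) (M : Matrix n n R) :
    M.charpoly ∣ (Matrix.fromBlocks (Matrix.fromBlocks A B C M)
      (Matrix.fromRows B 0) (Matrix.fromCols C 0) M).charpoly := by
  -- `J = [0 1]` selects the second of the three block rows, the twin of the third.
  refine charpoly_dvd_charpoly_fromBlocks _ _ _ _ (Matrix.fromCols 0 1) ?_ ?_
  · rw [Matrix.mul_fromCols, Matrix.fromCols_mul_fromBlocks]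
    ext i (j | j) <;> simp
  · simp [Matrix.fromCols_mul_fromRows]

/-- The vertices of `G ∘ [H₁, …, H_p]`, with each `Hᵢ'` identified with `Hᵢ`. -/
def attachVertexEquiv (VG : Type*) {p : ℕ} {V V' : Fin p → Type*} (e : ∀ i, V i ≃ V' i) :
    VG ⊕ ((Σ i, V i) ⊕ (Σ i, V' i)) ≃ (VG ⊕ (Σ i, V i)) ⊕ (Σ i, V i) :=
  (Equiv.sumCongr (Equiv.refl VG) (Equiv.sumCongr (Equiv.refl _)
    (Equiv.sigmaCongrRight e).symm)).trans (Equiv.sumAssoc _ _ _).symm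

section Adjacency

variable {VG : Type*} {p : ℕ} {V V' : Fin p → Type*}
  {G : SimpleGraph VG} {H : ∀ i, SimpleGraph (V i)} {H' : ∀ i, SimpleGraph (V' i)}
  {x : Fin p → VG} {v : ∀ i, V i} {v' : ∀ i, V' i}

lemma attachGraph_adj_left_left (a b : Σ i, V i) :
    (attachGraph G H H' x v v').Adj (.inr (.inl a)) (.inr (.inl b)) ↔
      (disjUnionGraph H).Adj a b := by
  obtain ⟨i, a⟩ := a
  obtain ⟨j, b⟩ := b
  simp [attachGraph, disjUnionGraph]

lemma attachGraph_adj_right_right (φ : ∀ i, H i ≃g H' i) (i j : Fin p) (a : V i) (b : V j) :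
    (attachGraph G H H' x v v').Adj (.inr (.inr ⟨i, φ i a⟩)) (.inr (.inr ⟨j, φ j b⟩)) ↔
      (disjUnionGraph H).Adj ⟨i, a⟩ ⟨j, b⟩ := by
  by_cases h : i = j
  · subst h
    have hφ (a b : V i) : (H' i).Adj (φ i a) (φ i b) ↔ (H i).Adj a b := (φ i).map_adj_iff
    simp [attachGraph, disjUnionGraph, hφ]
  · simp [attachGraph, disjUnionGraph, h, show ¬ j = i from fun h_eq => h h_eq.symm]

lemma not_attachGraph_adj_left_right (a : Σ i, V i) (b : Σ i, V' i) :
    ¬ (attachGraph G H H' x v v').Adj (.inr (.inl a)) (.inr (.inr b)) := by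
  simp [attachGraph]

lemma not_attachGraph_adj_right_left (a : Σ i, V' i) (b : Σ i, V i) :
    ¬ (attachGraph G H H' x v v').Adj (.inr (.inr a)) (.inr (.inl b)) :=
  fun h => not_attachGraph_adj_left_right b a h.symm

lemma attachGraph_adj_base_right (φ : ∀ i, H i ≃g H' i) (g : VG) (i : Fin p) (a : V i) :
    (attachGraph G H H' x v (fun i => φ i (v i))).Adj (.inl g) (.inr (.inr ⟨i, φ i a⟩)) ↔
      (attachGraph G H H' x v (fun i => φ i (v i))).Adj (.inl g) (.inr (.inl ⟨i, a⟩)) := by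
  simp [attachGraph]

lemma attachGraph_adj_right_base (φ : ∀ i, H i ≃g H' i) (g : VG) (i : Fin p) (a : V i) :
    (attachGraph G H H' x v (fun i => φ i (v i))).Adj (.inr (.inr ⟨i, φ i a⟩)) (.inl g) ↔
      (attachGraph G H H' x v (fun i => φ i (v i))).Adj (.inr (.inl ⟨i, a⟩)) (.inl g) := by
  rw [SimpleGraph.adj_comm, attachGraph_adj_base_right, SimpleGraph.adj_comm]

/-- Along `attachVertexEquiv`, the adjacency matrix of `G ∘ [H₁, …, H_p]` has the block form
`[A B B; C M 0; C 0 M]`, where `M` is the adjacency matrix of `⋃ Hᵢ`. -/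
lemma attachGraph_adjMatrix_reindex (φ : ∀ i, H i ≃g H' i)
    [DecidableRel (disjUnionGraph H).Adj]
    [DecidableRel (attachGraph G H H' x v (fun i => φ i (v i))).Adj] :
    ∃ A B C, Matrix.reindex (attachVertexEquiv VG fun i => (φ i).toEquiv)
        (attachVertexEquiv VG fun i => (φ i).toEquiv)
        ((attachGraph G H H' x v (fun i => φ i (v i))).adjMatrix ℝ) =
      Matrix.fromBlocks (Matrix.fromBlocks A B C ((disjUnionGraph H).adjMatrix ℝ))
        (Matrix.fromRows B 0) (Matrix.fromCols C 0) ((disjUnionGraph H).adjMatrix ℝ) := by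
  refine ⟨
    .of fun a b => (attachGraph G H H' x v fun i => φ i (v i)).adjMatrix ℝ (.inl a) (.inl b),
    .of fun a b => (attachGraph G H H' x v fun i => φ i (v i)).adjMatrix ℝ (.inl a) (.inr (.inl b)),
    .of fun a b => (attachGraph G H H' x v fun i => φ i (v i)).adjMatrix ℝ (.inr (.inl a)) (.inl b),
    ?_⟩
  ext ((a | ⟨i, a⟩) | ⟨i, a⟩) ((b | ⟨j, b⟩) | ⟨j, b⟩) <;>
    simp [attachVertexEquiv, SimpleGraph.adjMatrix_apply, attachGraph_adj_left_left,
      attachGraph_adj_right_right, not_attachGraph_adj_left_right,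
      not_attachGraph_adj_right_left, attachGraph_adj_base_right, attachGraph_adj_right_base]

end Adjacency

/-- Lemma 3.2: the characteristic polynomial of the adjacency matrix of
`H₁ ∪ ⋯ ∪ H_p` divides that of `G ∘ [H₁, …, H_p]`; in particular every eigenvalue of
the former is an eigenvalue of the latter. -/
theorem charpoly_disjUnion_dvd_charpoly_attach
    {VG : Type*} [Fintype VG] [DecidableEq VG] {p : ℕ} {V V' : Fin p → Type*}
    [∀ i, Fintype (V i)] [∀ i, DecidableEq (V i)]
    [∀ i, Fintype (V' i)] [∀ i, DecidableEq (V' i)]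
    (G : SimpleGraph VG) (H : ∀ i, SimpleGraph (V i)) (H' : ∀ i, SimpleGraph (V' i))
    (φ : ∀ i, H i ≃g H' i) (x : Fin p → VG) (v : ∀ i, V i)
    [DecidableRel (disjUnionGraph H).Adj]
    [DecidableRel (attachGraph G H H' x v (fun i => φ i (v i))).Adj] :
    ((disjUnionGraph H).adjMatrix ℝ).charpoly ∣
        ((attachGraph G H H' x v (fun i => φ i (v i))).adjMatrix ℝ).charpoly ∧
      ∀ α : ℝ, (((disjUnionGraph H).adjMatrix ℝ).charpoly).IsRoot α →
        (((attachGraph G H H' x v (fun i => φ i (v i))).adjMatrix ℝ).charpoly).IsRoot α := by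
  have hdvd : ((disjUnionGraph H).adjMatrix ℝ).charpoly ∣
      ((attachGraph G H H' x v (fun i => φ i (v i))).adjMatrix ℝ).charpoly := by
    obtain ⟨A, B, C, h⟩ := attachGraph_adjMatrix_reindex (G := G) (x := x) (v := v) φ
    rw [← Matrix.charpoly_reindex (attachVertexEquiv VG fun i => (φ i).toEquiv), h]
    exact charpoly_dvd_charpoly_twin A B C _
  exact ⟨hdvd, fun α hα => hα.dvd hdvd⟩
end

section
/- Let α₁, …, α_p be totally real algebraic integers. Then there exists a finite tree T such that each αᵢ (i = 1, …, p) is an eigenvalue of the adjacency matrix of T, i.e., {α₁, …, α_p} ⊆ Spec(T). (Theorem 3.3.) -/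
/-!
Rooted trees and continued fractions. Fix `l : ℝ`. If `v` is a function on the vertices of a rooted
tree with value `1` at the root and satisfying the eigenvalue equation for `l` at all other
vertices, let `x` be the sum of `v` over the neighbours of the root; `v` is an eigenvector exactly
when `x = l`. Say that `x` is attained (`Att l x`). The one-vertex tree attains `0`, gluing roots
adds attained values, and attaching a new root above the old one turns `x ≠ l` into `1 / (l - x)`.
So a nonzero `α` is an eigenvalue of a tree as soon as it is obtained from `0` by addition
and by `x ↦ 1 / (α - x)`. Multiplying by `α` and setting `μ = α²`, it is enough to obtain `μ` from
`0` by addition and by `u ↦ μ / (μ - u)`.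

This is done simultaneously for all conjugates of `μ`, which are distinct and positive because `α`
is totally real: `Gen μ` is the set of vectors in `ℝⁿ` obtained by these operations, where
`μ = (μ₁, …, μₙ)` is now the vector of conjugates. It suffices to find `u` in `Gen μ` with
`uᵢ = μᵢ` for some `i`: the coordinates of `u` are conjugate, so then `u = μ` (`exists_gen`).
Assume there is no such `u`.

* `Gen μ` is dense (`dense_gen`). Its closure contains `-s • μ` for `s ≥ 0`, as a limit of
  multiples of `μ / (μ - j)`, `j → ∞`; hence also `s • (μ / (μ - ν))` for all real `ν > 0` that are
  not conjugates of `μ`. Letting `ν` tend to `μᵢ` from either side gives all multiples of the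
  `i`-th basis vector.
* `Gen μ` is a group (`Gen.neg`). Density provides elements of `Gen μ` of which `-u` is a
  combination with positive coefficients, the coefficients are rational by Cramer's rule, and
  clearing denominators puts `-N • u` in `Gen μ` for some `N > 0`.
* `Gen μ` is stable under division by `μ` (`Gen.div_mu`), by the identity
  `1 / (μ - u) = 1 - g (-g (u + 1))` with `g u = μ / (μ - u)`. Hence it contains all `μ⁻ᵏ`.
* `μ` is integral, so it is an integral combination of the `μ⁻ᵏ`, and `μ` itself lies in `Gen μ`,
  a contradiction (`Gen.core`).

Finally several eigenvalues are realized in one tree by joining a new root to two copies of the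
tree of each `αᵢ`: the eigenvector on one copy minus the eigenvector on the other vanishes at the
new root.
-/

open Polynomial

open Filter Topology

/-- The vectors obtained from `0` by addition and by the coordinatewise operation
`u ↦ μ / (μ - u)`, the latter being applied only where no denominator vanishes. -/
inductive Gen {n : ℕ} (μ : Fin n → ℝ) : (Fin n → ℝ) → Prop
  | zero : Gen μ 0
  | add {u v} : Gen μ u → Gen μ v → Gen μ (u + v)
  | inv {u} : Gen μ u → (∀ i, u i ≠ μ i) → Gen μ (μ / (μ - u))

/-! ### Density of the generated set -/

section Density
variable {n : ℕ} {μ : Fin n → ℝ}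

theorem Gen.nsmul {u : Fin n → ℝ} (h : Gen μ u) (k : ℕ) : Gen μ (k • u) := by
  induction k with
  | zero => simpa using Gen.zero
  | succ k ih => rw [succ_nsmul]; exact ih.add h

theorem Gen.one (hpos : ∀ i, 0 < μ i) : Gen μ 1 := by
  have h := Gen.inv (μ := μ) Gen.zero (fun i => (hpos i).ne)
  have e : μ / (μ - 0) = 1 := by
    ext i; simp [(hpos i).ne']
  rwa [e] at h

theorem Gen.natCast (hpos : ∀ i, 0 < μ i) (k : ℕ) : Gen μ (fun _ => (k : ℝ)) := by
  have := (Gen.one hpos).nsmul k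
  convert this using 1
  ext i; simp

/-- The closure of `Gen μ` in `ℝⁿ`. -/
def Cl (μ : Fin n → ℝ) : Set (Fin n → ℝ) := closure {u | Gen μ u}

theorem Cl.isClosed : IsClosed (Cl μ) := isClosed_closure

theorem Cl.of {u : Fin n → ℝ} (h : Gen μ u) : u ∈ Cl μ := subset_closure h

theorem Cl.add {u v : Fin n → ℝ} (hu : u ∈ Cl μ) (hv : v ∈ Cl μ) : u + v ∈ Cl μ :=
  map_mem_closure₂ continuous_add hu hv fun _ ha _ hb => Gen.add ha hb

theorem Cl.nsmul {u : Fin n → ℝ} (hu : u ∈ Cl μ) (k : ℕ) : k • u ∈ Cl μ :=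
  map_mem_closure (continuous_const_smul k) hu fun _ ha => Gen.nsmul ha k

theorem Cl.inv (hne : ∀ u, Gen μ u → ∀ i, u i ≠ μ i) {u : Fin n → ℝ} (hu : u ∈ Cl μ)
    (h : ∀ i, u i ≠ μ i) : μ / (μ - u) ∈ Cl μ := by
  have hc : ContinuousAt (fun w : Fin n → ℝ => μ / (μ - w)) u := by
    rw [continuousAt_pi]
    intro i
    have : μ i - u i ≠ 0 := sub_ne_zero.2 (h i).symm
    simp only [Pi.div_apply, Pi.sub_apply]
    exact ContinuousAt.div continuousAt_const
      (continuousAt_const.sub (continuous_apply i).continuousAt) this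
  exact hc.continuousWithinAt.mem_closure hu fun w hw => Gen.inv hw (hne w hw)

/-- If `j • a j` converges to `w`, then so does `⌊s j⌋ • a j` to `s • w`: closure under natural
multiples becomes closure under nonnegative real multiples of the limit. -/
theorem Cl.smul_of_tendsto {a : ℕ → Fin n → ℝ} {w : Fin n → ℝ}
    (ha : ∀ᶠ j in atTop, a j ∈ Cl μ)
    (hw : Tendsto (fun j : ℕ => (j : ℝ) • a j) atTop (𝓝 w)) {s : ℝ} (hs : 0 ≤ s) :
    s • w ∈ Cl μ := by
  have h1 : Tendsto (fun j : ℕ => (⌊s * (j : ℝ)⌋₊ : ℝ) / (j : ℝ)) atTop (𝓝 s) :=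
    (tendsto_nat_floor_mul_div_atTop hs).comp tendsto_natCast_atTop_atTop
  refine Cl.isClosed.mem_of_tendsto (h1.smul hw) ?_
  filter_upwards [ha, eventually_gt_atTop 0] with j hj hj0
  have := Cl.nsmul hj ⌊s * (j : ℝ)⌋₊
  convert this using 1
  have : (j : ℝ) ≠ 0 := by positivity
  rw [smul_smul, div_mul_cancel₀ _ this, Nat.cast_smul_eq_nsmul]

/-- `-μ` is the limit of `j • (μ / (μ - j))` as `j → ∞`. -/
theorem Cl.neg_mu (hpos : ∀ i, 0 < μ i) (hne : ∀ u, Gen μ u → ∀ i, u i ≠ μ i)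
    {s : ℝ} (hs : 0 ≤ s) : s • (-μ) ∈ Cl μ := by
  refine Cl.smul_of_tendsto (a := fun j => μ / (μ - fun _ => (j : ℝ)))
    (Eventually.of_forall fun j => Cl.of ?_) ?_ hs
  · exact Gen.inv (Gen.natCast hpos j) (hne _ (Gen.natCast hpos j))
  · rw [tendsto_pi_nhds]
    intro i
    have h2 : Tendsto (fun j : ℕ => μ i * (μ i / (μ i - j)) - μ i) atTop (𝓝 (μ i * 0 - μ i)) := by
      refine Tendsto.sub_const (Tendsto.const_mul _ ?_) _
      refine Tendsto.const_div_atBot ?_ _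
      exact tendsto_atBot_add_const_left _ _ (tendsto_neg_atTop_atBot.comp tendsto_natCast_atTop_atTop)
    have e : μ i * 0 - μ i = (-μ) i := by simp
    rw [e] at h2
    refine h2.congr fun j => ?_
    have := sub_ne_zero.2 (hne _ (Gen.natCast hpos j) i).symm
    simp only [Pi.smul_apply, Pi.div_apply, Pi.sub_apply, smul_eq_mul]
    field_simp
    ring

/-- The vector `u = -(j / ν - 1) • μ + j` is in the closure, and `μ - u = (j / ν) • (μ - ν)`, so that
`j • (μ / (μ - u)) = ν • (μ / (μ - ν))` for all large `j`. -/
theorem Cl.smul_pole (hpos : ∀ i, 0 < μ i) (hne : ∀ u, Gen μ u → ∀ i, u i ≠ μ i)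
    {ν : ℝ} (hν : 0 < ν) (hνμ : ∀ i, ν ≠ μ i) {s : ℝ} (hs : 0 ≤ s) :
    s • (μ / (μ - fun _ => ν)) ∈ Cl μ := by
  have key : (s / ν) • (ν • (μ / (μ - fun _ => ν))) ∈ Cl μ := by
    refine Cl.smul_of_tendsto (a := fun j => (ν / (j : ℝ)) • (μ / (μ - fun _ => ν)))
      ?_ ?_ (by positivity)
    · filter_upwards [eventually_ge_atTop (max 1 ⌈ν⌉₊)] with j hj
      have hj1 : (1 : ℝ) ≤ j := by exact_mod_cast (le_max_left _ _).trans hj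
      have hj2 : ν ≤ j := (Nat.le_ceil ν).trans (by exact_mod_cast (le_max_right _ _).trans hj)
      have h0 : 0 ≤ (j : ℝ) / ν - 1 := by
        rw [sub_nonneg, le_div_iff₀ hν]; simpa using hj2
      have h1 := Cl.add (Cl.neg_mu hpos hne h0) (Cl.of (Gen.natCast hpos j))
      have h2 : ∀ i, μ i - ν ≠ 0 := fun i => sub_ne_zero.2 (hνμ i).symm
      have h3 : (j : ℝ) ≠ 0 := by positivity
      have e : ∀ i, μ i - ((((j : ℝ) / ν - 1) • (-μ) + fun _ => (j : ℝ)) : Fin n → ℝ) i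
          = (j : ℝ) / ν * (μ i - ν) := by
        intro i
        simp only [Pi.add_apply, Pi.smul_apply, Pi.neg_apply, smul_eq_mul]
        field_simp
        ring
      have h4 := Cl.inv hne h1 (fun i h => by
        have h5 := e i
        rw [h, sub_self] at h5
        have : (j : ℝ) / ν ≠ 0 := by positivity
        exact (mul_ne_zero this (h2 i)) h5.symm)
      convert h4 using 1
      ext i
      have h2i := h2 i
      simp only [Pi.smul_apply, Pi.div_apply, smul_eq_mul]
      rw [Pi.sub_apply μ (_ + _), e i, Pi.sub_apply]
      field_simp
    · refine tendsto_const_nhds.congr' ?_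
      filter_upwards [eventually_gt_atTop 0] with j hj
      have h3 : (j : ℝ) ≠ 0 := by positivity
      rw [smul_smul, mul_div_cancel₀ _ h3]
  rwa [smul_smul, div_mul_cancel₀ _ hν.ne'] at key

/-- Near `ν = μ i` the vector `(μ i - ν) • (μ / (μ - ν))` is close to `μ i` times the `i`-th basis
vector; either sign of `μ i - ν` is allowed, which gives multiples of both signs. -/
theorem Cl.single (hinj : Function.Injective μ) (hpos : ∀ i, 0 < μ i)
    (hne : ∀ u, Gen μ u → ∀ i, u i ≠ μ i) (i : Fin n) (c : ℝ) :
    Pi.single i c ∈ Cl μ := by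
  -- the pole is put at `μ i - δ` where `δ → 0` has the sign of `c`
  obtain ⟨ε, hε, hc⟩ : ∃ ε : ℝ, ε ≠ 0 ∧ 0 ≤ ε * c := by
    rcases le_total 0 c with h | h
    · exact ⟨1, one_ne_zero, by simpa⟩
    · exact ⟨-1, by norm_num, by simpa⟩
  have hδ : Tendsto (fun x : ℝ => ε * x) (𝓝[>] 0) (𝓝 0) := by
    have : Tendsto (fun x : ℝ => ε * x) (𝓝[>] 0) (𝓝 (ε * 0)) :=
      (continuous_const_mul ε).continuousAt.continuousWithinAt
    simpa using this
  have hlim : Tendsto (fun x : ℝ => μ i - ε * x) (𝓝[>] 0) (𝓝 (μ i)) := by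
    simpa using hδ.const_sub (μ i)
  have hev : ∀ k, ∀ᶠ x in 𝓝[>] (0 : ℝ), μ i - ε * x ≠ μ k := by
    intro k
    by_cases hk : k = i
    · subst hk
      filter_upwards [self_mem_nhdsWithin] with x hx h
      have : ε * x ≠ 0 := mul_ne_zero hε (ne_of_gt hx)
      exact this (by linarith)
    · exact hlim.eventually_ne (fun h => hk (hinj h).symm)
  refine Cl.isClosed.mem_of_tendsto
    (f := fun x : ℝ => (ε * x * c / μ i) • (μ / (μ - fun _ => μ i - ε * x))) (b := 𝓝[>] 0) ?_ ?_
  · rw [tendsto_pi_nhds]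
    intro k
    simp only [Pi.smul_apply, Pi.div_apply, Pi.sub_apply, smul_eq_mul]
    by_cases hk : k = i
    · subst hk
      rw [Pi.single_eq_same]
      refine tendsto_const_nhds.congr' ?_
      filter_upwards [self_mem_nhdsWithin] with x hx
      have h1 : ε * x ≠ 0 := mul_ne_zero hε (ne_of_gt hx)
      have h2 := (hpos k).ne'
      have h3 : x ≠ 0 := ne_of_gt hx
      rw [sub_sub_cancel]
      field_simp
    · rw [Pi.single_eq_of_ne hk]
      have h1 : μ k - μ i ≠ 0 := sub_ne_zero.2 fun h => hk (hinj h)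
      have := (((hδ.mul_const c).div_const (μ i)).mul
        ((tendsto_const_nhds (x := μ k)).div (hlim.const_sub (μ k)) h1))
      simpa using this
  · filter_upwards [eventually_all.2 hev, hlim.eventually (lt_mem_nhds (hpos i)),
      self_mem_nhdsWithin] with x h1 h2 h3
    refine Cl.smul_pole hpos hne h2 h1 ?_
    have h3 : (0 : ℝ) < x := h3
    have h4 := hpos i
    have : ε * x * c / μ i = (ε * c) * (x / μ i) := by ring
    rw [this]; positivity

theorem dense_gen (hinj : Function.Injective μ) (hpos : ∀ i, 0 < μ i)
    (hne : ∀ u, Gen μ u → ∀ i, u i ≠ μ i) : Dense {u | Gen μ u} := by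
  intro u
  change u ∈ Cl μ
  rw [← Finset.univ_sum_single u]
  refine Finset.sum_induction _ (· ∈ Cl μ) (fun _ _ => Cl.add) (Cl.of Gen.zero) fun i _ => ?_
  exact Cl.single hinj hpos hne i _
end Density

/-! ### Negation, division by `μ`, and integrality -/

section Group
variable {n : ℕ} {μ : Fin n → ℝ}

/-- Some positive multiple of `x` lies in `Gen μ`. -/
def QGen (μ : Fin n → ℝ) (x : Fin n → ℝ) : Prop := ∃ N : ℕ, 0 < N ∧ Gen μ (N • x)

theorem Gen.qGen {u : Fin n → ℝ} (h : Gen μ u) : QGen μ u := ⟨1, one_pos, by simpa using h⟩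

theorem QGen.add {x y : Fin n → ℝ} : QGen μ x → QGen μ y → QGen μ (x + y) := by
  rintro ⟨N, hN, hx⟩ ⟨M, hM, hy⟩
  refine ⟨M * N, by positivity, ?_⟩
  have := (hx.nsmul M).add (hy.nsmul N)
  rw [smul_smul, smul_smul, mul_comm N M, ← smul_add] at this
  exact this

theorem QGen.smul {x : Fin n → ℝ} (q : ℚ) (hq : 0 < q) : QGen μ x → QGen μ ((q : ℝ) • x) := by
  rintro ⟨N, hN, hx⟩
  refine ⟨q.den * N, Nat.mul_pos q.den_pos hN, ?_⟩
  have := hx.nsmul q.num.toNat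
  convert this using 1
  have h1 : ((q.num.toNat : ℕ) : ℝ) = q * q.den := by
    have h2 : ((q.num.toNat : ℤ) : ℝ) = (q.num : ℝ) := by
      rw [Int.toNat_of_nonneg (Rat.num_nonneg.2 hq.le)]
    rw [Int.cast_natCast] at h2
    rw [h2]
    exact_mod_cast (Rat.mul_den_eq_num q).symm
  simp only [← Nat.cast_smul_eq_nsmul ℝ, smul_smul, Nat.cast_mul, h1]
  congr 1
  ring

/-- By density, there are `w` and `us j` in `Gen μ` such that `-u - w` is a combination of the `us j`
with positive coefficients. In the basis of powers of `μ` all these vectors have rational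
coordinates, hence by Cramer's rule the coefficients are rational. -/
theorem QGen.neg (hinj : Function.Injective μ) (hpos : ∀ i, 0 < μ i)
    (hne : ∀ u, Gen μ u → ∀ i, u i ≠ μ i)
    (hrat : ∀ u, Gen μ u → ∃ a : Fin n → ℚ,
      u = (Matrix.vandermonde μ).mulVec fun k => (a k : ℝ))
    {u : Fin n → ℝ} (hu : Gen μ u) : QGen μ (-u) := by
  classical
  set V := Matrix.vandermonde μ with hV
  have hdet : IsUnit V.det := isUnit_iff_ne_zero.2 (Matrix.det_vandermonde_ne_zero_iff.2 hinj)
  have hVV : ∀ x, V⁻¹.mulVec (V.mulVec x) = x := fun x => by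
    rw [Matrix.mulVec_mulVec, Matrix.nonsing_inv_mul _ hdet, Matrix.one_mulVec]
  have hVV' : ∀ x, V.mulVec (V⁻¹.mulVec x) = x := fun x => by
    rw [Matrix.mulVec_mulVec, Matrix.mul_nonsing_inv _ hdet, Matrix.one_mulVec]
  -- `us` and `-u - w` in the coordinates given by the powers of `μ`; both Cramer determinants are
  -- required to be positive, an open condition
  let M : (Fin n → Fin n → ℝ) → Matrix (Fin n) (Fin n) ℝ :=
    fun us => Matrix.of fun k j => V⁻¹.mulVec (us j) k
  let b : (Fin n → ℝ) → Fin n → ℝ := fun w => V⁻¹.mulVec (-u - w)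
  have hM : Continuous M := by
    refine continuous_matrix fun k j => ?_
    exact (continuous_apply k).comp (Continuous.matrix_mulVec continuous_const (continuous_apply (A := fun _ => Fin n → ℝ) j))
  have hb : Continuous b := Continuous.matrix_mulVec continuous_const (by fun_prop)
  let O : Set ((Fin n → Fin n → ℝ) × (Fin n → ℝ)) :=
    {p | 0 < (M p.1).det} ∩ ⋂ j, {p | 0 < (M p.1).cramer (b p.2) j}
  have hO : IsOpen O := by
    refine (isOpen_lt continuous_const (hM.comp continuous_fst).matrix_det).inter
      (isOpen_iInter_of_finite fun j => isOpen_lt continuous_const ?_)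
    exact (continuous_apply j).comp
      (Continuous.matrix_cramer (hM.comp continuous_fst) (hb.comp continuous_snd))
  -- the target configuration: the standard basis, and `-u` minus the sum of its vectors
  have hne' : O.Nonempty := by
    refine ⟨(fun j => V.mulVec (Pi.single j 1), -u - V.mulVec 1), ?_⟩
    have h1 : M (fun j => V.mulVec (Pi.single j 1)) = 1 := by
      ext k j
      simp only [M, Matrix.of_apply, hVV, Matrix.one_apply, Pi.single_apply]
    have h2 : b (-u - V.mulVec 1) = 1 := by
      simp only [b, sub_sub_cancel, hVV]
    refine ⟨?_, Set.mem_iInter.2 fun j => ?_⟩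
    · change 0 < (M _).det
      rw [h1, Matrix.det_one]
      exact one_pos
    · change 0 < (M _).cramer (b _) j
      rw [h1, h2, Matrix.cramer_one]
      exact one_pos
  have hD := dense_gen hinj hpos hne
  obtain ⟨⟨us, w⟩, ⟨hO1, hO2⟩, hus, hw⟩ :=
    ((dense_pi Set.univ fun (_ : Fin n) _ => hD).prod hD).inter_open_nonempty O hO hne'
  have hus : ∀ j, Gen μ (us j) := fun j => hus j trivial
  have hw : Gen μ w := hw
  have hO1 : 0 < (M us).det := hO1
  have hO2 : ∀ j, 0 < (M us).cramer (b w) j := fun j => Set.mem_iInter.1 hO2 j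
  choose A hA using fun j => hrat _ (hus j)
  obtain ⟨au, hau⟩ := hrat u hu
  obtain ⟨aw, haw⟩ := hrat w hw
  let A' : Matrix (Fin n) (Fin n) ℚ := Matrix.of fun k j => A j k
  have hMA : M us = (Rat.castHom ℝ).mapMatrix A' := by
    ext k j
    simp only [M, Matrix.of_apply]
    rw [hA j, hVV]
    simp [A']
  have hbA : b w = fun k => Rat.castHom ℝ ((-au - aw) k) := by
    simp only [b]
    rw [hau, haw, ← Matrix.mulVec_neg, ← Matrix.mulVec_sub, hVV]
    ext k
    simp
  have hdQ : (M us).det = ((A'.det : ℚ) : ℝ) := by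
    rw [hMA, ← RingHom.map_det]; rfl
  have hcQ : ∀ j, (M us).cramer (b w) j = ((A'.cramer (-au - aw) j : ℚ) : ℝ) := by
    intro j
    rw [Matrix.cramer_apply, Matrix.cramer_apply, ← eq_ratCast (Rat.castHom ℝ), RingHom.map_det]
    congr 1
    ext k l
    rw [hMA, hbA]
    simp only [Matrix.updateCol_apply, RingHom.mapMatrix_apply, Matrix.map_apply]
    split_ifs <;> rfl
  -- Cramer's rule
  have key : ∑ j, (M us).cramer (b w) j • us j = (M us).det • (-u - w) := by
    have h1 := congrArg V.mulVec (Matrix.mulVec_cramer (M us) (b w))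
    rw [Matrix.mulVec_smul] at h1
    have hbw : V.mulVec (b w) = -u - w := hVV' _
    rw [hbw] at h1
    rw [← h1, Matrix.mulVec_eq_sum _ (M us), Matrix.mulVec_sum]
    refine Finset.sum_congr rfl fun j _ => ?_
    have h2 : (M us).transpose j = V⁻¹.mulVec (us j) := rfl
    simp only [op_smul_eq_smul]
    rw [Matrix.mulVec_smul, h2, hVV']
  have hd0 : 0 < A'.det := by rw [hdQ] at hO1; exact_mod_cast hO1
  have h1 : QGen μ (∑ j, (M us).cramer (b w) j • us j) := by
    refine Finset.sum_induction _ (QGen μ) (fun _ _ => QGen.add) Gen.zero.qGen fun j _ => ?_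
    have := hO2 j
    rw [hcQ] at this ⊢
    exact (hus j).qGen.smul _ (by exact_mod_cast this)
  have h2 := h1.add (hw.qGen.smul _ hd0)
  rw [key, hdQ, ← smul_add, sub_add_cancel] at h2
  have h3 := h2.smul (A'.det)⁻¹ (inv_pos.2 hd0)
  rwa [smul_smul, ← Rat.cast_mul, inv_mul_cancel₀ hd0.ne', Rat.cast_one, one_smul] at h3

/-- `-u = -N • u + (N - 1) • u`. -/
theorem Gen.neg (hinj : Function.Injective μ) (hpos : ∀ i, 0 < μ i)
    (hne : ∀ u, Gen μ u → ∀ i, u i ≠ μ i)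
    (hrat : ∀ u, Gen μ u → ∃ a : Fin n → ℚ,
      u = (Matrix.vandermonde μ).mulVec fun k => (a k : ℝ))
    {u : Fin n → ℝ} (hu : Gen μ u) : Gen μ (-u) := by
  obtain ⟨N, hN, h⟩ := QGen.neg hinj hpos hne hrat hu
  obtain ⟨k, rfl⟩ := Nat.exists_eq_succ_of_ne_zero hN.ne'
  have := h.add (hu.nsmul k)
  rwa [succ_nsmul, smul_neg, add_assoc, add_comm (-u), ← add_assoc, neg_add_cancel, zero_add]
    at this

/-- For `g u = μ / (μ - u)` one has `g u / μ = 1 - g (-g (u + 1))`. -/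
theorem Gen.div_mu (hpos : ∀ i, 0 < μ i)
    (hne : ∀ u, Gen μ u → ∀ i, u i ≠ μ i) (hneg : ∀ u, Gen μ u → Gen μ (-u))
    {u : Fin n → ℝ} (hu : Gen μ u) : Gen μ (u / μ) := by
  induction hu with
  | zero =>
    convert Gen.zero (μ := μ) using 1
    ext i; simp
  | add _ _ h1 h2 =>
    convert h1.add h2 using 1
    ext i; simp [add_div]
  | @inv u hu h _ =>
    have h1 := hu.add (Gen.one hpos)
    have h2 := hneg _ (h1.inv (hne _ h1))
    have h3 := (Gen.one hpos).add (hneg _ (h2.inv (hne _ h2)))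
    convert h3 using 1
    ext i
    have e0 := (hpos i).ne'
    have e1 := sub_ne_zero.2 (h i).symm
    have e2 := sub_ne_zero.2 (hne _ h1 i).symm
    simp only [Pi.div_apply, Pi.sub_apply, Pi.add_apply, Pi.neg_apply, Pi.one_apply] at e2 ⊢
    have e3 : μ i - -(μ i / (μ i - (u i + 1))) = μ i * (μ i - u i) / (μ i - (u i + 1)) := by
      field_simp
      ring
    rw [e3]
    field_simp
    ring

/-- `hrat` says that the elements of `Gen μ` are polynomials in `μ` with rational coefficients; `R`
witnesses the integrality of `μ`. -/
theorem Gen.core (hn : 0 < n) (hinj : Function.Injective μ) (hpos : ∀ i, 0 < μ i)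
    (hrat : ∀ u, Gen μ u → ∃ a : Fin n → ℚ,
      u = (Matrix.vandermonde μ).mulVec fun k => (a k : ℝ))
    (R : ℤ[X]) (hR : R.Monic) (hRμ : ∀ i, aeval (μ i) R = 0) :
    ∃ u, Gen μ u ∧ ∃ i, u i = μ i := by
  by_contra! hne
  have hneg : ∀ u, Gen μ u → Gen μ (-u) := fun u => Gen.neg hinj hpos hne hrat
  have hpow : ∀ k : ℕ, Gen μ (1 / μ ^ k) := by
    intro k
    induction k with
    | zero => simpa using Gen.one hpos
    | succ k ih =>
      have := Gen.div_mu hpos hne hneg ih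
      rwa [div_div, ← pow_succ] at this
  have hzs : ∀ (z : ℤ) u, Gen μ u → Gen μ (z • u) := by
    intro z u hu
    obtain ⟨k, rfl | rfl⟩ := z.eq_nat_or_neg
    · rw [natCast_zsmul]; exact hu.nsmul k
    · rw [neg_smul, natCast_zsmul]; exact hneg _ (hu.nsmul k)
  have hsum : Gen μ (∑ k ∈ Finset.range R.natDegree,
      (-(R.coeff k : ℝ)) • (1 / μ ^ (R.natDegree - 1 - k))) := by
    refine Finset.sum_induction _ (Gen μ) (fun _ _ => Gen.add) Gen.zero fun k _ => ?_
    rw [← Int.cast_neg, Int.cast_smul_eq_zsmul]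
    exact hzs _ _ (hpow _)
  -- dividing `R μ = 0` by `μ ^ (deg R - 1)` identifies this sum with `μ`
  refine hne _ hsum ⟨0, hn⟩ ?_
  generalize (⟨0, hn⟩ : Fin n) = i
  have h0 := (hpos i).ne'
  have h1 := hRμ i
  rw [aeval_eq_sum_range, Finset.sum_range_succ, hR.coeff_natDegree, one_smul] at h1
  have hd : R.natDegree ≠ 0 := by
    intro hd
    rw [hd] at h1
    simp at h1
  obtain ⟨d, hd⟩ := Nat.exists_eq_succ_of_ne_zero hd
  rw [hd] at h1 ⊢
  simp only [Finset.sum_apply, Pi.smul_apply, Pi.div_apply, Pi.pow_apply, Pi.one_apply,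
    smul_eq_mul, zsmul_eq_mul, Nat.succ_eq_add_one, Nat.add_sub_cancel] at h1 ⊢
  have h2 : ∀ k ∈ Finset.range (d + 1), -(R.coeff k : ℝ) * (1 / μ i ^ (d - k))
      = -((R.coeff k : ℝ) * μ i ^ k) / μ i ^ d := by
    intro k hk
    have : μ i ^ d = μ i ^ (d - k) * μ i ^ k := by
      rw [← pow_add, Nat.sub_add_cancel (Nat.lt_succ_iff.1 (Finset.mem_range.1 hk))]
    rw [this]
    field_simp
  rw [Finset.sum_congr rfl h2, ← Finset.sum_div, Finset.sum_neg_distrib,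
    eq_neg_of_add_eq_zero_left h1, neg_neg, pow_succ]
  field_simp
end Group

/-! ### Conjugates of the square of a totally real integer -/

section Conjugates

/-- A conjugate of `α ^ 2` is the image of `α ^ 2` under an embedding of `ℚ(α)`, hence the square of a
conjugate of `α`, which is real and nonzero. -/
theorem exists_sq_of_root {α : ℝ} (h : IsTotallyRealAlgebraicInteger α) (h0 : α ≠ 0) {z : ℂ}
    (hz : z ∈ (minpoly ℚ (α ^ 2)).rootSet ℂ) : ∃ x : ℝ, x ≠ 0 ∧ z = ((x ^ 2 : ℝ) : ℂ) := by
  obtain ⟨p, hp, hα, hreal⟩ := h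
  have hint : IsIntegral ℚ α := (show IsIntegral ℤ α from ⟨p, hp, hα⟩).tower_top
  let K := IntermediateField.adjoin ℚ {α}
  let g : K := IntermediateField.AdjoinSimple.gen ℚ α
  have hg : algebraMap K ℝ g = α := IntermediateField.AdjoinSimple.algebraMap_gen ℚ α
  have : FiniteDimensional ℚ K := IntermediateField.adjoin.finiteDimensional hint
  have hmin : minpoly ℚ (g ^ 2) = minpoly ℚ (α ^ 2) := by
    rw [← hg, ← map_pow]
    exact (minpoly.algebraMap_eq (algebraMap K ℝ).injective (g ^ 2)).symm
  rw [← hmin, ← Algebra.IsAlgebraic.range_eval_eq_rootSet_minpoly] at hz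
  obtain ⟨ψ, hψ⟩ := hz
  replace hψ : ψ (g ^ 2) = z := hψ
  have hgp : aeval g p = 0 := by
    have h1 : algebraMap K ℝ (aeval g p) = 0 := by
      rw [← aeval_algebraMap_apply, hg, hα]
    exact (map_eq_zero_iff _ (algebraMap K ℝ).injective).1 h1
  have him : (ψ g).im = 0 := by
    refine hreal _ ?_
    have := Polynomial.aeval_algHom_apply (ψ.restrictScalars ℤ) g p
    rw [hgp, map_zero] at this
    exact this
  have hre : ψ g = ((ψ g).re : ℂ) := Complex.ext rfl (by simpa using him)
  refine ⟨(ψ g).re, fun hx => ?_, ?_⟩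
  · rw [hx, Complex.ofReal_zero, map_eq_zero] at hre
    rw [hre, map_zero] at hg
    exact h0 hg.symm
  · rw [Complex.ofReal_pow, ← hre, ← hψ, map_pow]

/-- With `μ` the vector of conjugates of `α ^ 2`, it is possible to generate `μ` itself. Elements of
`Gen μ` have the form `q(μ)` with `q ∈ ℚ[X]`, so agreeing with `μ` in one coordinate forces
equality. -/
theorem exists_gen {α : ℝ} (h : IsTotallyRealAlgebraicInteger α) (h0 : α ≠ 0) :
    ∃ (n : ℕ) (μ : Fin n → ℝ) (i : Fin n), μ i = α ^ 2 ∧ Gen μ μ := by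
  have hintZ : IsIntegral ℤ (α ^ 2) := by
    obtain ⟨p, hp, hα, -⟩ := h
    exact IsIntegral.pow ⟨p, hp, hα⟩ 2
  have hint : IsIntegral ℚ (α ^ 2) := hintZ.tower_top
  set P := minpoly ℚ (α ^ 2) with hP
  have hirr : Irreducible P := minpoly.irreducible hint
  have hmon : P.Monic := minpoly.monic hint
  have hcard : Fintype.card (P.rootSet ℂ) = P.natDegree :=
    card_rootSet_eq_natDegree hirr.separable (IsAlgClosed.splits _)
  let e : Fin P.natDegree ≃ P.rootSet ℂ := (Fintype.equivFinOfCardEq hcard).symm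
  let μ : Fin P.natDegree → ℝ := fun i => (e i : ℂ).re
  have hμ : ∀ i, ((μ i : ℝ) : ℂ) = e i := by
    intro i
    obtain ⟨x, -, hx⟩ := exists_sq_of_root h h0 (e i).2
    simp only [μ]
    rw [hx, Complex.ofReal_re]
  have hpos : ∀ i, 0 < μ i := by
    intro i
    obtain ⟨x, hx0, hx⟩ := exists_sq_of_root h h0 (e i).2
    rw [← hμ, Complex.ofReal_inj] at hx
    rw [hx]; positivity
  have hinj : Function.Injective μ := by
    intro i j hij
    refine e.injective (Subtype.ext ?_)
    rw [← hμ, ← hμ, hij]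
  have hroot : ∀ i, aeval (μ i) P = 0 := by
    intro i
    have h1 := (mem_rootSet.1 (e i).2).2
    rw [← hμ, ← Complex.coe_algebraMap, aeval_algebraMap_apply] at h1
    exact (map_eq_zero_iff _ (algebraMap ℝ ℂ).injective).1 h1
  have hdvd : ∀ (q : ℚ[X]) i, aeval (μ i) q = 0 → P ∣ q := by
    intro q i hq
    rw [minpoly.eq_of_irreducible_of_monic hirr (hroot i) hmon]
    exact minpoly.dvd _ _ hq
  obtain ⟨i₀, hi₀⟩ : ∃ i, μ i = α ^ 2 := by
    have : ((α ^ 2 : ℝ) : ℂ) ∈ P.rootSet ℂ := by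
      refine mem_rootSet.2 ⟨hmon.ne_zero, ?_⟩
      rw [← Complex.coe_algebraMap, aeval_algebraMap_apply, minpoly.aeval, map_zero]
    refine ⟨e.symm ⟨_, this⟩, ?_⟩
    have h1 := hμ (e.symm ⟨_, this⟩)
    rw [e.apply_symm_apply] at h1
    exact Complex.ofReal_injective h1
  have hrat : ∀ u, Gen μ u → ∃ q : ℚ[X], ∀ i, u i = aeval (μ i) q := by
    intro u hu
    induction hu with
    | zero => exact ⟨0, by simp⟩
    | add _ _ h1 h2 =>
      obtain ⟨q, hq⟩ := h1
      obtain ⟨r, hr⟩ := h2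
      exact ⟨q + r, fun i => by simp [hq, hr]⟩
    | @inv u _ hu h1 =>
      obtain ⟨q, hq⟩ := h1
      have hnd : ¬ P ∣ (X - q) := by
        rintro ⟨c, hc⟩
        have h2 := congrArg (aeval (μ i₀)) hc
        rw [map_mul, hroot, zero_mul, map_sub, aeval_X, ← hq] at h2
        exact hu i₀ (sub_eq_zero.1 h2).symm
      obtain ⟨a, b, hab⟩ := (hirr.coprime_iff_not_dvd.2 hnd).symm
      refine ⟨X * a, fun i => ?_⟩
      have h2 := congrArg (aeval (μ i)) hab
      simp only [map_add, map_mul, map_sub, aeval_X, hroot, mul_zero, add_zero, map_one,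
        ← hq] at h2
      have h3 := sub_ne_zero.2 (hu i).symm
      simp only [Pi.div_apply, Pi.sub_apply, map_mul, aeval_X]
      rw [div_eq_iff h3, mul_assoc, h2, mul_one]
  obtain ⟨R, hR, hRα⟩ := hintZ
  have hRμ : ∀ i, aeval (μ i) R = 0 := by
    intro i
    have h1 : P ∣ R.map (algebraMap ℤ ℚ) := by
      refine minpoly.dvd _ _ ?_
      rw [aeval_map_algebraMap]; exact hRα
    obtain ⟨c, hc⟩ := h1
    rw [← aeval_map_algebraMap ℚ, hc, map_mul, hroot, zero_mul]
  obtain ⟨u, hu, i, hi⟩ := Gen.core (Fin.pos i₀) hinj hpos (fun u hu => by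
    obtain ⟨q, hq⟩ := hrat u hu
    refine ⟨fun k => (q %ₘ P).coeff k, ?_⟩
    ext i
    have hdeg : (q %ₘ P).natDegree < P.natDegree :=
      natDegree_modByMonic_lt _ hmon hirr.ne_one
    rw [hq, ← aeval_modByMonic_eq_self_of_root (hroot i), aeval_eq_sum_range' hdeg,
      Finset.sum_range]
    simp only [Matrix.mulVec, dotProduct, Matrix.vandermonde_apply]
    refine Finset.sum_congr rfl fun k _ => ?_
    rw [Algebra.smul_def, mul_comm]
    rfl) R hR hRμ
  refine ⟨_, μ, i₀, hi₀, ?_⟩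
  convert hu using 1
  obtain ⟨q, hq⟩ := hrat u hu
  obtain ⟨c, hc⟩ : P ∣ q - X := hdvd _ i (by rw [map_sub, aeval_X, ← hq, hi, sub_self])
  ext j
  have h1 := congrArg (aeval (μ j)) hc
  rw [map_mul, hroot, zero_mul, map_sub, aeval_X, ← hq] at h1
  exact (sub_eq_zero.1 h1).symm

end Conjugates

/-! ### Rooted trees -/

section Trees

/-- The rooted graph given by a parent function: the root is `none`, the other vertices are `some a`,
each joined to its parent `par a`. It is a tree as soon as some rank decreases from a non-root
vertex to a non-root parent. -/
def parentGraph {V : Type} (par : V → Option V) : SimpleGraph (Option V) :=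
  SimpleGraph.fromRel fun x y => ∃ a, x = some a ∧ y = par a

section
variable {V : Type} {par : V → Option V} {rk : V → ℕ}

theorem par_ne (h : ∀ a b, par a = some b → rk b < rk a) (a : V) : some a ≠ par a :=
  fun he => lt_irrefl _ (h a a he.symm)

theorem parentGraph_adj (h : ∀ a b, par a = some b → rk b < rk a) {x y : Option V} :
    (parentGraph par).Adj x y ↔ (∃ a, x = some a ∧ y = par a) ∨ ∃ a, y = some a ∧ x = par a := by
  rw [parentGraph, SimpleGraph.fromRel_adj, and_iff_right_iff_imp]
  rintro (⟨a, rfl, rfl⟩ | ⟨a, rfl, rfl⟩)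
  · exact par_ne h a
  · exact (par_ne h a).symm

theorem parentGraph_isTree [Fintype V] (h : ∀ a b, par a = some b → rk b < rk a) :
    (parentGraph par).IsTree := by
  rw [SimpleGraph.isTree_iff_connected_and_card]
  constructor
  · have key : ∀ (k : ℕ) (a : V), rk a = k → (parentGraph par).Reachable (some a) none := by
      intro k
      induction k using Nat.strong_induction_on with
      | _ k ih =>
        intro a ha
        have h1 : (parentGraph par).Adj (some a) (par a) :=
          (parentGraph_adj h).2 (Or.inl ⟨a, rfl, rfl⟩)
        refine h1.reachable.trans ?_
        cases hp : par a with
        | none => rfl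
        | some b => exact ih (rk b) (ha ▸ h a b hp) b rfl
    have key' : ∀ x : Option V, (parentGraph par).Reachable x none := by
      rintro (_ | a)
      · rfl
      · exact key _ a rfl
    exact SimpleGraph.Connected.mk fun x y => (key' x).trans (key' y).symm
  · rw [Finite.card_option, add_left_inj]
    symm
    refine Nat.card_congr (Equiv.ofBijective
      (fun a : V => (⟨s(some a, par a), ?_⟩ : (parentGraph par).edgeSet)) ⟨?_, ?_⟩)
    · exact (parentGraph_adj h).2 (Or.inl ⟨a, rfl, rfl⟩)
    · intro a b hab
      have h1 := congrArg Subtype.val hab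
      simp only [Sym2.eq_iff] at h1
      rcases h1 with ⟨h1, -⟩ | ⟨h1, h2⟩
      · exact Option.some_injective _ h1
      · exact absurd ((h _ _ h2).trans (h _ _ h1.symm)) (lt_irrefl _)
    · rintro ⟨e, he⟩
      induction e with
      | _ x y =>
        rcases (parentGraph_adj h).1 he with ⟨a, rfl, rfl⟩ | ⟨a, rfl, rfl⟩
        · exact ⟨a, rfl⟩
        · exact ⟨a, Subtype.ext Sym2.eq_swap⟩
end

open scoped Classical in
/-- The sum of `v` over the parent of `x` (if `x` is not the root) and the children of `x`. -/
noncomputable def nbrSum {V : Type} [Fintype V] (par : V → Option V) (v : Option V → ℝ)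
    (x : Option V) : ℝ :=
  x.elim 0 (fun a => v (par a)) + ∑ b, if par b = x then v (some b) else 0

open scoped Classical in
theorem adjMatrix_mulVec_parentGraph {V : Type} [Fintype V] {par : V → Option V} {rk : V → ℕ}
    (h : ∀ a b, par a = some b → rk b < rk a) (v : Option V → ℝ) (x : Option V) :
    ((parentGraph par).adjMatrix ℝ).mulVec v x = nbrSum par v x := by
  simp only [Matrix.mulVec, dotProduct, SimpleGraph.adjMatrix_apply, ite_mul, one_mul, zero_mul,
    parentGraph_adj h, Fintype.sum_option, nbrSum]
  cases x with
  | none => simp [eq_comm]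
  | some a =>
    have h1 : v (par a) = (if par a = none then v none else 0)
        + ∑ b, if par a = some b then v (some b) else 0 := by
      cases hp : par a with
      | none => simp
      | some c => simp
    simp only [Option.elim_some, h1, add_assoc, ← Finset.sum_add_distrib]
    congr 1
    · simp [eq_comm]
    · refine Finset.sum_congr rfl fun b _ => ?_
      have h2 : ¬ (par a = some b ∧ par b = some a) := fun h' =>
        lt_irrefl _ ((h _ _ h'.1).trans (h _ _ h'.2))
      by_cases h3 : par a = some b <;> by_cases h4 : par b = some a <;>
        simp_all [eq_comm]

/-- The value `x` is attained for `l`: there are a finite rooted tree, encoded by a parent function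
`par` with a rank `rk` certifying that it has no cycles, and a function `v` with value `1` at the
root satisfying the eigenvalue equation for `l` away from the root, such that `v` sums to `x` over
the neighbours of the root. -/
def Att (l x : ℝ) : Prop :=
  ∃ (V : Type) (_ : Fintype V) (par : V → Option V) (rk : V → ℕ) (v : Option V → ℝ),
    (∀ a b, par a = some b → rk b < rk a) ∧ v none = 1 ∧
    (∀ a, nbrSum par v (some a) = l * v (some a)) ∧ nbrSum par v none = x

theorem Att.zero (l : ℝ) : Att l 0 :=
  ⟨Empty, inferInstance, fun a => a.elim, fun a => a.elim, fun _ => 1, fun a => a.elim, rfl,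
    fun a => a.elim, by simp [nbrSum]⟩

/-- The two trees are glued at their roots. -/
theorem Att.add {l x y : ℝ} (hx : Att l x) (hy : Att l y) : Att l (x + y) := by
  obtain ⟨V, _, p, r, v, hr, hv, hl, rfl⟩ := hx
  obtain ⟨W, _, q, s, w, hs, hw, hm, rfl⟩ := hy
  let par : V ⊕ W → Option (V ⊕ W) :=
    Sum.elim (fun a => (p a).map Sum.inl) (fun a => (q a).map Sum.inr)
  let u : Option (V ⊕ W) → ℝ :=
    fun o => o.elim 1 (Sum.elim (fun a => v (some a)) (fun a => w (some a)))
  have hu1 : ∀ o : Option V, u (o.map Sum.inl) = v o := by rintro (_ | a) <;> simp [u, hv]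
  have hu2 : ∀ o : Option W, u (o.map Sum.inr) = w o := by rintro (_ | a) <;> simp [u, hw]
  refine ⟨V ⊕ W, inferInstance, par, Sum.elim r s, u, ?_, rfl, ?_, ?_⟩
  · rintro (a | a) (b | b) hab <;> simp [par] at hab ⊢
    · exact hr _ _ hab
    · exact hs _ _ hab
  · rintro (a | a)
    · rw [show u (some (Sum.inl a)) = v (some a) from rfl, ← hl a]
      simp [nbrSum, par, hu1, u]
      exact Finset.sum_congr rfl fun b _ => by congr 1; simp
    · rw [show u (some (Sum.inr a)) = w (some a) from rfl, ← hm a]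
      simp [nbrSum, par, hu2, u]
      exact Finset.sum_congr rfl fun b _ => by congr 1; simp
  · simp [nbrSum, par, u]

/-- A new root is attached above the old one. The function `v` is rescaled by `c` so that the
eigenvalue equation `1 + c * x = l * c` holds at the old root. -/
theorem Att.inv {l x : ℝ} (hx : Att l x) (hxl : x ≠ l) : Att l (1 / (l - x)) := by
  obtain ⟨V, _, p, r, v, hr, hv, hl, rfl⟩ := hx
  set c := 1 / (l - nbrSum p v none) with hc
  have hc' : 1 + c * nbrSum p v none = l * c := by
    have := sub_ne_zero.2 hxl.symm
    rw [hc]; field_simp; ring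
  let par : Option V → Option (Option V) := fun o => o.elim none (fun a => some (p a))
  let u : Option (Option V) → ℝ := fun o => o.elim 1 (fun a => c * v a)
  refine ⟨Option V, inferInstance, par, fun o => o.elim 0 (fun a => r a + 1), u, ?_, rfl, ?_, ?_⟩
  · rintro (_ | a) (_ | b) hab <;> simp [par] at hab ⊢
    exact hr _ _ hab
  · rintro (_ | a)
    · rw [show u (some none) = c by simp [u, hv], ← hc']
      simp [nbrSum, par, u, Fintype.sum_option, Finset.mul_sum]
    · rw [show u (some (some a)) = c * v (some a) from rfl, mul_left_comm, ← hl a]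
      simp [nbrSum, par, u, Fintype.sum_option, Finset.mul_sum, mul_add]
      exact Finset.sum_congr rfl fun b _ => by congr 1; simp
  · simp [nbrSum, par, u, Fintype.sum_option, hv]

/-- `Gen μ` describes the attained values: if `u` is generated then `u i / α` is attained for `α`, where
`μ i = α ^ 2`; take `u = μ`. -/
theorem Att.self {α : ℝ} (h : IsTotallyRealAlgebraicInteger α) : Att α α := by
  rcases eq_or_ne α 0 with rfl | h0
  · exact Att.zero 0
  obtain ⟨n, μ, i, hμ, hG⟩ := exists_gen h h0
  have key : ∀ u, Gen μ u → Att α (u i / α) := by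
    intro u hu
    induction hu with
    | zero => simpa using Att.zero α
    | add _ _ h1 h2 => rw [Pi.add_apply, add_div]; exact h1.add h2
    | @inv u _ hu ih =>
      have h1 := sub_ne_zero.2 (hu i).symm
      rw [hμ] at h1
      have h2 : α - u i / α = (α ^ 2 - u i) / α := by field_simp
      have h3 : u i / α ≠ α := by
        intro h3
        have h4 : α - u i / α ≠ 0 := by rw [h2]; exact div_ne_zero h1 h0
        exact h4 (sub_eq_zero.2 h3.symm)
      convert ih.inv h3 using 1
      rw [h2, Pi.div_apply, Pi.sub_apply, hμ]
      field_simp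
  have := key μ hG
  rwa [hμ, pow_two, mul_div_cancel_right₀ _ h0] at this

theorem isRoot_charpoly_of_mulVec {V : Type} [Fintype V] [DecidableEq V] (A : Matrix V V ℝ) {v : V → ℝ} {l : ℝ}
    (hv : v ≠ 0) (h : ∀ x, A.mulVec v x = l * v x) : A.charpoly.IsRoot l := by
  rw [Polynomial.IsRoot, Matrix.eval_charpoly]
  refine Matrix.exists_mulVec_eq_zero_iff.1 ⟨v, hv, ?_⟩
  ext x
  rw [Matrix.sub_mulVec, Pi.sub_apply, h]
  simp [Matrix.scalar_apply, Matrix.mulVec_diagonal]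

open scoped Classical in
/-- A single tree for all `α i`: a new root `none` is joined to the roots `⟨i, b, none⟩` of two copies
(`b : Bool`) of the tree of each `α i`. -/
theorem exists_forest_parent {ι : Type} [Fintype ι] {α : ι → ℝ} (h : ∀ i, Att (α i) (α i)) :
    ∃ (V : Type) (_ : Fintype V) (par : V → Option V) (rk : V → ℕ),
      (∀ a b, par a = some b → rk b < rk a) ∧
      ∀ i, ∃ u : Option V → ℝ, u ≠ 0 ∧ ∀ x, nbrSum par u x = α i * u x := by
  choose V _ p r v hr hv hl hx using h
  let par : (Σ i, Bool × Option (V i)) → Option (Σ i, Bool × Option (V i)) :=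
    fun a => a.2.2.elim none fun c => some ⟨a.1, a.2.1, p a.1 c⟩
  refine ⟨(Σ i, Bool × Option (V i)), inferInstance, par,
    fun a => a.2.2.elim 0 fun c => r a.1 c + 1, ?_, fun i => ?_⟩
  · rintro ⟨i, b, _ | a⟩ ⟨j, b', _ | a'⟩ hab <;> simp [par] at hab ⊢
    obtain ⟨rfl, hab⟩ := hab
    simp at hab
    exact hr _ _ _ hab.2
  -- on both copies of the `i`-th tree the eigenvector is used, with opposite signs
  let w : ∀ j, Option (V j) → ℝ := Pi.single i (v i)
  have hw : ∀ j x, nbrSum (p j) (w j) x = α i * w j x := by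
    intro j x
    by_cases hj : j = i
    · subst hj
      simp only [w, Pi.single_eq_same]
      cases x with
      | none => rw [hx, hv, mul_one]
      | some a => exact hl j a
    · simp only [w, Pi.single_eq_of_ne hj]
      cases x <;> simp [nbrSum]
  let ε : Bool → ℝ := fun b => if b then 1 else -1
  let u : Option (Σ i, Bool × Option (V i)) → ℝ := fun o => o.elim 0 fun a => ε a.2.1 * w a.1 a.2.2
  refine ⟨u, fun hu => ?_, ?_⟩
  · have := congrFun hu (some ⟨i, true, none⟩)
    simp [u, ε, w, hv] at this
  · rintro (_ | ⟨j, b, x⟩)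
    · simp [nbrSum, par, u, ε, Fintype.sum_sigma, Fintype.sum_prod_type, Fintype.sum_option]
    · have e1 : u (some ⟨j, b, x⟩) = ε b * w j x := rfl
      rw [e1, mul_left_comm, ← hw j x]
      simp only [nbrSum, Option.elim_some]
      rw [mul_add]
      congr 1
      · cases x <;> simp [par, u]
      · rw [Fintype.sum_sigma, Fintype.sum_eq_single j, Fintype.sum_prod_type,
          Fintype.sum_eq_single b, Fintype.sum_option, Finset.mul_sum]
        · simp [par, u]
        · intro b' hb
          refine Finset.sum_eq_zero fun y _ => ?_
          cases y <;> simp [par, hb]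
        · intro k hk
          refine Finset.sum_eq_zero fun y _ => ?_
          obtain ⟨b', _ | y⟩ := y <;> simp [par, hk]

end Trees

/-- Given totally real algebraic integers `α₁, …, α_p`, there is a finite tree `T`
whose spectrum contains all of them. -/
theorem exists_tree_containing_totallyReal_spectrum
    (p : ℕ) (α : Fin p → ℝ) (hα : ∀ i, IsTotallyRealAlgebraicInteger (α i)) :
    ∃ (m : ℕ) (T : SimpleGraph (Fin m)) (_ : DecidableRel T.Adj),
      T.IsTree ∧ ∀ i, ((T.adjMatrix ℝ).charpoly).IsRoot (α i) := by
  classical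
  obtain ⟨V, _, par, rk, hrk, hu⟩ := exists_forest_parent fun i => Att.self (hα i)
  let e := Fintype.equivFin (Option V)
  refine ⟨Fintype.card (Option V), (parentGraph par).comap e.symm, inferInstance, ?_, fun i => ?_⟩
  · exact (SimpleGraph.Iso.comap e.symm _).isTree_iff.2 (parentGraph_isTree hrk)
  · obtain ⟨u, hu0, hu⟩ := hu i
    have h1 := isRoot_charpoly_of_mulVec ((parentGraph par).adjMatrix ℝ) hu0 fun x =>
      (adjMatrix_mulVec_parentGraph hrk u x).trans (hu x)
    rw [← Matrix.charpoly_reindex e] at h1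
    convert h1 using 2
    ext x y
    simp [SimpleGraph.adjMatrix_apply]
end
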